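/- Let Γ̄ be a countable subgroup of Isom X × Isom X* with finite exponential growth relative to (X × X*, d̄), and π a probability measure on Γ̄ with finite first moment and non-elementary marginals μ and μ*. Then for ν_{μ*}-almost every η ∈ ∂X* and ν_π^η-almost every ξ̄ ∈ ∂X × ∂X*, liminf_{r→0} log ν_π^η(B̄(ξ̄,r))/log r ≥ (h(π) − h(∂X*,μ*))/l(X,μ). -/

import Mathlib

open MeasureTheory Filter Topology Metric Set
open scoped ENNReal Classical

noncomputable section

namespace HMDim

/-! ### Gromov products and hyperbolicity -/

/-- The Gromov product `(x|y)_o = (d(x,o)+d(o,y)-d(x,y))/2`. -/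
def gp {X : Type*} [MetricSpace X] (o x y : X) : ℝ :=
  (dist x o + dist o y - dist x y) / 2

/-- `X` is `δ`-hyperbolic. -/
def IsHyperbolicWith (X : Type*) [MetricSpace X] (δ : ℝ) : Prop :=
  ∀ x y z w : X, min (gp w x z) (gp w z y) - δ ≤ gp w x y

/-- `X` is hyperbolic: `δ`-hyperbolic for some `δ ≥ 0`. -/
def IsHyperbolic (X : Type*) [MetricSpace X] : Prop :=
  ∃ δ : ℝ, 0 ≤ δ ∧ IsHyperbolicWith X δ

/-- `X` is `C`-roughly geodesic for some `C ≥ 0`: any two points are joined by a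
`C`-rough geodesic. -/
def IsRoughGeodesicSpace (X : Type*) [MetricSpace X] : Prop :=
  ∃ C : ℝ, 0 ≤ C ∧ ∀ x y : X, ∃ (b : ℝ) (γ : ℝ → X), 0 ≤ b ∧ γ 0 = x ∧ γ b = y ∧
    ∀ s ∈ Set.Icc (0:ℝ) b, ∀ t ∈ Set.Icc (0:ℝ) b, abs (dist (γ s) (γ t) - |s - t|) ≤ C

/-- Bounded growth at some scale: there are `0 < r < R` and `N` such that every ball of
radius `R` is covered by at most `N` balls of radius `r`. -/
def HasBoundedGrowthAtSomeScale (X : Type*) [MetricSpace X] : Prop :=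
  ∃ (r R : ℝ) (N : ℕ), 0 < r ∧ r < R ∧
    ∀ x : X, ∃ s : Finset X, s.card ≤ N ∧ Metric.ball x R ⊆ ⋃ y ∈ s, Metric.ball y r

/-! ### The Gromov boundary -/

/-- A sequence is divergent if it is Cauchy for the Gromov-product quasi-metric, i.e.
`(u n | u m)_o → ∞`. -/
def IsDivergent {X : Type*} [MetricSpace X] (o : X) (u : ℕ → X) : Prop :=
  Tendsto (fun pr : ℕ × ℕ => gp o (u pr.1) (u pr.2)) atTop atTop

/-- The type of divergent sequences. -/
def DivSeq (X : Type*) [MetricSpace X] (o : X) : Type _ := {u : ℕ → X // IsDivergent o u}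

/-- Two divergent sequences are equivalent when `(u n | v m)_o → ∞`. -/
def bndRel {X : Type*} [MetricSpace X] (o : X) (u v : DivSeq X o) : Prop :=
  Tendsto (fun pr : ℕ × ℕ => gp o (u.1 pr.1) (v.1 pr.2)) atTop atTop

/-- The Gromov boundary: equivalence classes of divergent sequences. -/
def Boundary (X : Type*) [MetricSpace X] (o : X) : Type _ := Quot (bndRel o)

/-- The boundary point of a divergent sequence. -/
def mkB {X : Type*} [MetricSpace X] (o : X) (u : DivSeq X o) : Boundary X o :=
  Quot.mk _ u

/-- The extended Gromov product of two boundary points: the infimum over pairs of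
representatives of the liminf of Gromov products. -/
def gpB {X : Type*} [MetricSpace X] (o : X) (ξ η : Boundary X o) : ℝ :=
  sInf {t : ℝ | ∃ u v : DivSeq X o, mkB o u = ξ ∧ mkB o v = η ∧
    t = Filter.liminf (fun pr : ℕ × ℕ => gp o (u.1 pr.1) (v.1 pr.2)) atTop}

/-- The quasi-metric `q(ξ,η) = exp(-(ξ|η)_o)` on the boundary (`0` on the diagonal). -/
def qB {X : Type*} [MetricSpace X] (o : X) (ξ η : Boundary X o) : ℝ :=
  if ξ = η then 0 else Real.exp (-(gpB o ξ η))

/-- The extended Gromov product of an interior point with a boundary point. -/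
def gpXB {X : Type*} [MetricSpace X] (o : X) (x : X) (ξ : Boundary X o) : ℝ :=
  sInf {t : ℝ | ∃ u : DivSeq X o, mkB o u = ξ ∧
    t = Filter.liminf (fun m : ℕ => gp o x (u.1 m)) atTop}

/-- Quasi-metric between an interior point and a boundary point. -/
def qXB {X : Type*} [MetricSpace X] (o : X) (x : X) (ξ : Boundary X o) : ℝ :=
  Real.exp (-(gpXB o x ξ))

/-- The open ball of a quasi-metric. -/
def qball {A : Type*} (q : A → A → ℝ) (ξ : A) (r : ℝ) : Set A := {η | q ξ η < r}

/-- The max quasi-metric `q̄` on the product of two boundaries. -/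
def qbb {X Xs : Type*} [MetricSpace X] [MetricSpace Xs] (o : X) (os : Xs)
    (ξ η : Boundary X o × Boundary Xs os) : ℝ :=
  max (qB o ξ.1 η.1) (qB os ξ.2 η.2)

/-- Boundaries are measurable spaces, with the σ-algebra generated by quasi-metric balls. -/
instance (X : Type*) [MetricSpace X] (o : X) : MeasurableSpace (Boundary X o) :=
  MeasurableSpace.generateFrom {s | ∃ ξ r, s = qball (qB o) ξ r}

/-! ### The boundary action of isometries -/

lemma gp_isometry_le {X : Type*} [MetricSpace X] (o : X) (g : X ≃ᵢ X) (x y : X) :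
    gp o x y - dist o (g o) ≤ gp o (g x) (g y) := by
  have e1 : dist (g x) (g o) = dist x o := g.dist_eq x o
  have e2 : dist (g o) (g y) = dist o y := g.dist_eq o y
  have e3 : dist (g x) (g y) = dist x y := g.dist_eq x y
  have e4 : dist (g o) o = dist o (g o) := dist_comm _ _
  have t1 : dist (g x) (g o) ≤ dist (g x) o + dist o (g o) := dist_triangle _ _ _
  have t2 : dist (g o) (g y) ≤ dist (g o) o + dist o (g y) := dist_triangle _ _ _
  simp only [gp]
  linarith [t1, t2, e1, e2, e3, e4]

lemma isDivergent_comp {X : Type*} [MetricSpace X] (o : X) (g : X ≃ᵢ X) {u : ℕ → X}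
    (h : IsDivergent o u) : IsDivergent o fun n => g (u n) := by
  have h' := tendsto_atTop_add_const_right atTop (-(dist o (g o)))
    (h : Tendsto (fun pr : ℕ × ℕ => gp o (u pr.1) (u pr.2)) atTop atTop)
  refine tendsto_atTop_mono (fun pr => ?_) h'
  have := gp_isometry_le o g (u pr.1) (u pr.2)
  simpa [sub_eq_add_neg] using this

lemma bndRel_comp {X : Type*} [MetricSpace X] (o : X) (g : X ≃ᵢ X) {u v : DivSeq X o}
    (h : bndRel o u v) :
    bndRel o ⟨fun n => g (u.1 n), isDivergent_comp o g u.2⟩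
      ⟨fun n => g (v.1 n), isDivergent_comp o g v.2⟩ := by
  have h' := tendsto_atTop_add_const_right atTop (-(dist o (g o)))
    (h : Tendsto (fun pr : ℕ × ℕ => gp o (u.1 pr.1) (v.1 pr.2)) atTop atTop)
  refine tendsto_atTop_mono (fun pr => ?_) h'
  have := gp_isometry_le o g (u.1 pr.1) (v.1 pr.2)
  simpa [sub_eq_add_neg] using this

/-- The induced action of an isometry on the Gromov boundary. -/
def bAct {X : Type*} [MetricSpace X] (o : X) (g : X ≃ᵢ X) :
    Boundary X o → Boundary X o :=
  Quot.map (fun u : DivSeq X o =>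
      (⟨fun n => g (u.1 n), isDivergent_comp o g u.2⟩ : DivSeq X o))
    (fun _ _ h => bndRel_comp o g h)

/-! ### Random walks on countable groups -/

/-- Convolution of two measures (as `ℝ≥0∞`-valued functions) on a group. -/
def conv {G : Type*} [Group G] (p q : G → ℝ≥0∞) : G → ℝ≥0∞ :=
  fun x => ∑' y : G, p y * q (y⁻¹ * x)

/-- The `n`-fold convolution power `π_n` of `p`. -/
def piN {G : Type*} [Group G] (p : G → ℝ≥0∞) : ℕ → G → ℝ≥0∞
  | 0 => fun x => if x = 1 then 1 else 0
  | n + 1 => conv (piN p n) p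

/-- The Shannon entropy `H(π_n)` of the `n`-th convolution power. -/
def entropySeq {G : Type*} [Group G] (p : G → ℝ≥0∞) (n : ℕ) : ℝ :=
  ∑' x : G, Real.negMulLog ((piN p n x).toReal)

/-- The first moment of `π_n` with respect to a displacement function `f`. -/
def momentSeq {G : Type*} [Group G] (p : G → ℝ≥0∞) (f : G → ℝ) (n : ℕ) : ℝ :=
  ∑' x : G, (piN p n x).toReal * f x

/-- `h` is the asymptotic entropy of the `p`-random walk:
`h = lim (1/n) H(π_n)`. -/
def HasEntropy {G : Type*} [Group G] (p : G → ℝ≥0∞) (h : ℝ) : Prop :=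
  Tendsto (fun n : ℕ => entropySeq p n / n) atTop (nhds h)

/-- `l` is the drift (rate of escape) of the `p`-random walk with respect to the
displacement `f`: `l = lim (1/n) Σ_x f(x) π_n(x)`. -/
def HasDrift {G : Type*} [Group G] (p : G → ℝ≥0∞) (f : G → ℝ) (l : ℝ) : Prop :=
  Tendsto (fun n : ℕ => momentSeq p f n / n) atTop (nhds l)

/-- `p` is a probability distribution. -/
def IsProb {G : Type*} (p : G → ℝ≥0∞) : Prop := ∑' x : G, p x = 1

/-- Finite first moment with respect to a displacement function `f`. -/
def FiniteFirstMoment {G : Type*} (p : G → ℝ≥0∞) (f : G → ℝ) : Prop :=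
  ∑' x : G, p x * ENNReal.ofReal (f x) ≠ ∞

/-- The pushforward of a distribution `p` by a map `f` (e.g. a marginal). -/
def marginalStar {G A : Type*} (p : G → ℝ≥0∞) (f : G → A) : A → ℝ≥0∞ :=
  fun a => ∑' x : G, if f x = a then p x else 0

/-- A subgroup is non-elementary (in the relevant sense) if it contains a free
subgroup of rank 2. -/
def IsNonElementarySubgroup {G : Type*} [Group G] (H : Subgroup G) : Prop :=
  ∃ φ : FreeGroup (Fin 2) →* G, Function.Injective φ ∧ φ.range ≤ H

/-- A measure `p` on a group is non-elementary if the subgroup generated by its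
support contains a free subgroup of rank 2. -/
def IsNonElemMeasure {G : Type*} [Group G] (p : G → ℝ≥0∞) : Prop :=
  IsNonElementarySubgroup (Subgroup.closure {x : G | p x ≠ 0})

/-- A group containing a free subgroup of rank 2 (a non-elementary group). -/
def HasFreeSubgroup (G : Type*) [Group G] : Prop :=
  ∃ φ : FreeGroup (Fin 2) →* G, Function.Injective φ

/-! ### Path space -/

/-- The position `w_n = x_1 ⋯ x_n` of the random walk with increments `ω`. -/
def walk {G : Type*} [Group G] (ω : ℕ → G) (n : ℕ) : G := ((List.range n).map ω).prod

/-- The cylinder set `[w̄_0, …, w̄_n]` of trajectories whose positions agree with those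
of `ω` up to time `n`. -/
def cyl {G : Type*} [Group G] (ω : ℕ → G) (n : ℕ) : Set (ℕ → G) :=
  {ω' | ∀ i ≤ n, walk ω' i = walk ω i}

/-- `P` is the distribution of the increments of the `p`-random walk: the product
measure `p^{⊗ℕ}` on the path space. -/
def IsRWMeasure {G : Type*} [Group G] [MeasurableSpace G] (p : G → ℝ≥0∞)
    (P : Measure (ℕ → G)) : Prop :=
  IsProbabilityMeasure P ∧
    ∀ (n : ℕ) (g : ℕ → G), P {ω | ∀ i < n, ω i = g i} = ∏ i ∈ Finset.range n, p (g i)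

/-- `ν` is the harmonic measure on the boundary of `X` for the random walk with path
measure `P` and orbit map `z`: the image of `P` under the a.s.-defined boundary map. -/
def IsHarmonic {Ω X : Type*} [MeasurableSpace Ω] [MetricSpace X] (o : X)
    (P : Measure Ω) (z : Ω → ℕ → X) (ν : Measure (Boundary X o)) : Prop :=
  ∃ bnd : Ω → Boundary X o, Measurable bnd ∧ ν = P.map bnd ∧
    ∀ᵐ ω ∂P, ∃ h : IsDivergent o (z ω), bnd ω = mkB o ⟨z ω, h⟩

/-- `ν` is the harmonic measure on the product of the boundaries of `X` and `Xs` for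
the random walk with path measure `P` and orbit maps `z`, `zs`. -/
def IsJointHarmonic {Ω X Xs : Type*} [MeasurableSpace Ω] [MetricSpace X] [MetricSpace Xs]
    (o : X) (os : Xs) (P : Measure Ω) (z : Ω → ℕ → X) (zs : Ω → ℕ → Xs)
    (ν : Measure (Boundary X o × Boundary Xs os)) : Prop :=
  ∃ bnd : Ω → Boundary X o × Boundary Xs os, Measurable bnd ∧ ν = P.map bnd ∧
    ∀ᵐ ω ∂P, ∃ (h1 : IsDivergent o (z ω)) (h2 : IsDivergent os (zs ω)),
      bnd ω = (mkB o ⟨z ω, h1⟩, mkB os ⟨zs ω, h2⟩)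

/-- `cond` is a disintegration (system of conditional measures) of `P` with respect to
the map `f`, over the pushforward `νB = f_* P`. -/
def IsDisintegration {A B : Type*} [MeasurableSpace A] [MeasurableSpace B]
    (P : Measure A) (f : A → B) (νB : Measure B) (cond : B → Measure A) : Prop :=
  νB = P.map f ∧ (∀ᵐ b ∂νB, IsProbabilityMeasure (cond b)) ∧
    (∀ᵐ b ∂νB, cond b (f ⁻¹' {b}) = 1) ∧
    ∀ s : Set A, MeasurableSet s → P s = ∫⁻ b, cond b s ∂νB

/-! ### Hausdorff dimension for quasi-metrics -/

/-- Diameter of a set for a quasi-metric. -/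
def qdiam {A : Type*} (q : A → A → ℝ) (E : Set A) : ℝ≥0∞ :=
  ⨆ x ∈ E, ⨆ y ∈ E, ENNReal.ofReal (q x y)

/-- Hausdorff pre-measure (content) at scale `Δ`. -/
def qHContent {A : Type*} (q : A → A → ℝ) (α Δ : ℝ) (E : Set A) : ℝ≥0∞ :=
  ⨅ (c : ℕ → Set A) (_ : E ⊆ ⋃ i, c i) (_ : ∀ i, qdiam q (c i) ≤ ENNReal.ofReal Δ),
    ∑' i, qdiam q (c i) ^ α

/-- The `α`-dimensional Hausdorff measure of a set for a quasi-metric. -/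
def qHMeasure {A : Type*} (q : A → A → ℝ) (α : ℝ) (E : Set A) : ℝ≥0∞ :=
  ⨆ (Δ : ℝ) (_ : 0 < Δ), qHContent q α Δ E

/-- The Hausdorff dimension of a set for a quasi-metric. -/
def qdimSet {A : Type*} (q : A → A → ℝ) (E : Set A) : ℝ :=
  sSup {α : ℝ | 0 ≤ α ∧ 0 < qHMeasure q α E}

/-- The upper Hausdorff dimension of a measure. -/
def qdimUpper {A : Type*} [MeasurableSpace A] (q : A → A → ℝ) (ν : Measure A) : ℝ :=
  sInf {d : ℝ | ∃ E : Set A, MeasurableSet E ∧ ν Eᶜ = 0 ∧ d = qdimSet q E}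

/-- The lower Hausdorff dimension of a measure. -/
def qdimLower {A : Type*} [MeasurableSpace A] (q : A → A → ℝ) (ν : Measure A) : ℝ :=
  sInf {d : ℝ | ∃ E : Set A, MeasurableSet E ∧ 0 < ν E ∧ d = qdimSet q E}

/-- The Hausdorff dimension of `ν` exists and equals `D`. -/
def HasDim {A : Type*} [MeasurableSpace A] (q : A → A → ℝ) (ν : Measure A) (D : ℝ) : Prop :=
  qdimUpper q ν = D ∧ qdimLower q ν = D

/-- `ν` is exact dimensional with dimension `D` for the quasi-metric `q`:
`lim_{r→0} log ν(B(ξ,r))/log r = D` for `ν`-a.e. `ξ`. -/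
def ExactDim {A : Type*} [MeasurableSpace A] (q : A → A → ℝ) (ν : Measure A) (D : ℝ) : Prop :=
  ∀ᵐ ξ ∂ν, Tendsto (fun r : ℝ => Real.log (ν (qball q ξ r)).toReal / Real.log r)
    (nhdsWithin 0 (Set.Ioi 0)) (nhds D)

/-! ### Differential entropy -/

/-- The differential entropy
`h(∂X*, μ*) = Σ_g μ*(g) ∫ log (d gν/dν) d(gν)` of a measure on the isometry group with
respect to a boundary measure. -/
def diffEntropy {Xs : Type*} [MetricSpace Xs] (os : Xs) (pstar : (Xs ≃ᵢ Xs) → ℝ≥0∞)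
    (νs : Measure (Boundary Xs os)) : ℝ :=
  ∑' g : (Xs ≃ᵢ Xs), (pstar g).toReal *
    ∫ η, Real.log ((Measure.rnDeriv (νs.map (bAct os g)) νs η).toReal)
      ∂(νs.map (bAct os g))

/-! ### Word metrics and hyperbolic groups -/

/-- The word length of `g` with respect to a (symmetrized) generating set `S`. -/
def wordLength {G : Type*} [Group G] (S : Set G) (g : G) : ℕ :=
  sInf {n : ℕ | ∃ f : Fin n → G, (∀ i, f i ∈ S ∨ (f i)⁻¹ ∈ S) ∧ g = (List.ofFn f).prod}

/-- The metric of `G` is quasi-isometric to a word metric of a finite generating set. -/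
def IsQIToWordMetric (G : Type*) [Group G] [MetricSpace G] : Prop :=
  ∃ S : Finset G, Subgroup.closure (S : Set G) = ⊤ ∧
    ∃ Λ c : ℝ, 1 ≤ Λ ∧ 0 ≤ c ∧ ∀ g : G,
      (wordLength (S : Set G) g : ℝ) / Λ - c ≤ dist (1 : G) g ∧
      dist (1 : G) g ≤ Λ * (wordLength (S : Set G) g) + c

/-- The metric of `G` is left invariant. -/
def LeftInvariantMetric (G : Type*) [Group G] [MetricSpace G] : Prop :=
  ∀ g x y : G, dist (g * x) (g * y) = dist x y

/-- `G`, with its metric, is a hyperbolic group: the metric is left invariant,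
hyperbolic and quasi-isometric to a word metric. -/
def IsHypGroupMetric (G : Type*) [Group G] [MetricSpace G] : Prop :=
  LeftInvariantMetric G ∧ IsHyperbolic G ∧ IsQIToWordMetric G

/-! ### Groups of isometries of a product -/

/-- First component of an element of a subgroup of `Isom X × Isom X*`. -/
def proj1 {X Xs : Type*} [MetricSpace X] [MetricSpace Xs]
    {Γb : Subgroup ((X ≃ᵢ X) × (Xs ≃ᵢ Xs))} (γ : Γb) : X ≃ᵢ X :=
  (γ : (X ≃ᵢ X) × (Xs ≃ᵢ Xs)).1

/-- Second component of an element of a subgroup of `Isom X × Isom X*`. -/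
def proj2 {X Xs : Type*} [MetricSpace X] [MetricSpace Xs]
    {Γb : Subgroup ((X ≃ᵢ X) × (Xs ≃ᵢ Xs))} (γ : Γb) : Xs ≃ᵢ Xs :=
  (γ : (X ≃ᵢ X) × (Xs ≃ᵢ Xs)).2

/-- Displacement `d̄(ō, γ·ō)` of the base point `ō = (o,o*)` (the metric of the product
is the max metric). -/
def disp {X Xs : Type*} [MetricSpace X] [MetricSpace Xs]
    {Γb : Subgroup ((X ≃ᵢ X) × (Xs ≃ᵢ Xs))} (o : X) (os : Xs) (γ : Γb) : ℝ :=
  dist (o, os) (proj1 γ o, proj2 γ os)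

/-- Finite exponential growth relative to a displacement function `f`:
`#{x : f(x) < r} ≤ c e^{c r}`. -/
def FinExpGrowth {G : Type*} (f : G → ℝ) : Prop :=
  ∃ c : ℝ, 0 < c ∧ ∀ r : ℝ, 0 < r →
    {x : G | f x < r}.Finite ∧ ({x : G | f x < r}.ncard : ℝ) ≤ c * Real.exp (c * r)

/-! ### The events of Lemmas `A` and `E_n(η)` -/

/-- The event `A_{ε,n} = ∩_{t ≥ n} {z̄_∞ exists and q̄(z̄_t, z̄_∞) ≤ e^{-(l*-ε)n}}`. -/
def Aev {X Xs : Type*} [MetricSpace X] [MetricSpace Xs]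
    (Γb : Subgroup ((X ≃ᵢ X) × (Xs ≃ᵢ Xs))) (o : X) (os : Xs) (ε lst : ℝ) (n : ℕ) :
    Set (ℕ → Γb) :=
  {ω | ∃ (h1 : IsDivergent o (fun t => proj1 (walk ω t) o))
        (h2 : IsDivergent os (fun t => proj2 (walk ω t) os)),
      ∀ t, n ≤ t →
        max (qXB o (proj1 (walk ω t) o) (mkB o ⟨_, h1⟩))
            (qXB os (proj2 (walk ω t) os) (mkB os ⟨_, h2⟩))
          ≤ Real.exp (-((lst - ε) * n))}

/-- The event
`E_{ε,n}(η) = {P^η([w̄_0,…,w̄_n] ∩ A_{ε,n}) ≤ e^{n(h*+ε)} P([w̄_0,…,w̄_n] ∩ A_{ε,n})}`. -/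
def Eev {X Xs : Type*} [MetricSpace X] [MetricSpace Xs]
    (Γb : Subgroup ((X ≃ᵢ X) × (Xs ≃ᵢ Xs))) [MeasurableSpace Γb] (o : X) (os : Xs)
    (P : Measure (ℕ → Γb)) (condP : Boundary Xs os → Measure (ℕ → Γb))
    (hst ε lst : ℝ) (η : Boundary Xs os) (n : ℕ) : Set (ℕ → Γb) :=
  {ω | condP η (cyl ω n ∩ Aev Γb o os ε lst n) ≤
        ENNReal.ofReal (Real.exp (n * (hst + ε))) * P (cyl ω n ∩ Aev Γb o os ε lst n)}

/-! ### Special measures -/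

/-- The measure `π^ρ = ρ μ×μ + (1-ρ) μ_diag` on `Γ × Γ`. -/
def pRho {Γ : Type*} (p : Γ → ℝ≥0∞) (ρ : ℝ) : Γ × Γ → ℝ≥0∞ :=
  fun g => ENNReal.ofReal ρ * (p g.1 * p g.2) +
    ENNReal.ofReal (1 - ρ) * (if g.1 = g.2 then p g.1 else 0)

/-- The uniform distribution on the symmetrized free basis of `F_{m+1}`. -/
def symFreeBasisUniform (m : ℕ) : FreeGroup (Fin (m + 1)) → ℝ≥0∞ :=
  fun g => if ∃ i : Fin (m + 1), g = FreeGroup.of i ∨ g = (FreeGroup.of i)⁻¹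
    then ENNReal.ofReal (1 / (2 * (m + 1))) else 0

/-- The homomorphism `F_{m+1} → F_m` sending `x_i ↦ y_i` for `i ≤ m` and `x_{m+1} ↦ 1`. -/
def projHom (m : ℕ) : FreeGroup (Fin (m + 1)) →* FreeGroup (Fin m) :=
  FreeGroup.lift (fun i => if h : (i : ℕ) < m then FreeGroup.of (⟨i, h⟩ : Fin m) else 1)

/-!
The position `x` of the walk at time `n` determines the limit point up to an error `exp (-l n)`: the
limit lies in a shadow of `x` of that size. Among the paths whose second limit point is `η`, those
visiting `x` at time `n` have probability about `π_n(x) (d(x ν*)/dν*)(η)`. By Kingman's theorem, the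
first factor is about `exp (-h(π) n)` along almost every path; by Birkhoff's theorem, the second
factor, a product of `n` stationary densities, is about `exp (h(∂X*, μ*) n)`. Hence `ν^η` gives
the shadow of a typical `x` mass at most `exp (-(h(π) - h(∂X*, μ*)) n)`.

A ball of radius `exp (-l n)` may meet many such shadows. Their points `x` are, however, all within
`ε n` of each other, so that exponential growth bounds their number by `exp (c ε n)`.
-/

/-! ### Gromov products along sequences -/

section GromovProduct

variable {X : Type*} [MetricSpace X] {δ κ : ℝ}

lemma gp_nonneg (o x y : X) : 0 ≤ gp o x y := by
  have := dist_triangle x o y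
  simp only [gp]
  linarith

lemma gp_comm (o x y : X) : gp o x y = gp o y x := by
  simp only [gp, dist_comm x y, dist_comm x o, dist_comm o y]
  ring

lemma gp_self (o x : X) : gp o x x = dist o x := by
  simp only [gp, dist_self, dist_comm x o]
  ring

lemma dist_sub_dist_le_gp (o x y : X) : dist o x - dist x y ≤ gp o x y := by
  have := dist_triangle_right o x y
  have := dist_comm o y
  simp only [gp, dist_comm x o]
  linarith

lemma dist_eq_add_sub_two_mul_gp (o x y : X) :
    dist x y = dist o x + dist o y - 2 * gp o x y := by
  simp only [gp, dist_comm x o]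
  ring

lemma IsHyperbolicWith.nonneg (hδ : IsHyperbolicWith X δ) (o : X) : 0 ≤ δ := by
  have := hδ o o o o
  rw [min_self] at this
  linarith

lemma IsHyperbolicWith.mono {δ' : ℝ} (hδ : IsHyperbolicWith X δ) (h : δ ≤ δ') :
    IsHyperbolicWith X δ' := fun x y z w => (sub_le_sub_left h _).trans (hδ x y z w)

/-- The quasi-metric `exp (-κ (x|y)_o)` on `X`, set to `0` on the diagonal. For small `κ` it
satisfies the hypothesis of Frink's metrization lemma. -/
def gpGauge (κ : ℝ) (o x y : X) : NNReal :=
  if x = y then 0 else Real.toNNReal (Real.exp (-κ * gp o x y))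

lemma gpGauge_self (κ : ℝ) (o x : X) : gpGauge κ o x x = 0 := if_pos rfl

lemma gpGauge_comm (κ : ℝ) (o x y : X) : gpGauge κ o x y = gpGauge κ o y x := by
  simp only [gpGauge, gp_comm o x y, eq_comm (a := x)]

lemma coe_gpGauge_of_ne (κ : ℝ) (o : X) {x y : X} (h : x ≠ y) :
    (gpGauge κ o x y : ℝ) = Real.exp (-κ * gp o x y) := by
  rw [gpGauge, if_neg h, Real.coe_toNNReal _ (Real.exp_pos _).le]

lemma coe_gpGauge_le (κ : ℝ) (o x y : X) :
    (gpGauge κ o x y : ℝ) ≤ Real.exp (-κ * gp o x y) := by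
  rcases eq_or_ne x y with rfl | h
  · rw [gpGauge_self, NNReal.coe_zero]
    positivity
  · rw [coe_gpGauge_of_ne κ o h]

lemma gpGauge_le_exp_mul_max (hδ : IsHyperbolicWith X δ) (hκ : 0 ≤ κ) (o x y z : X) :
    (gpGauge κ o x z : ℝ) ≤
      Real.exp (κ * δ) * max (gpGauge κ o x y : ℝ) (gpGauge κ o y z) := by
  have le_exp_mul {a b : ℝ} (ha : 0 ≤ a) (hab : a ≤ b) : a ≤ Real.exp (κ * δ) * b :=
    hab.trans <| le_mul_of_one_le_left (ha.trans hab) <|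
      Real.one_le_exp (mul_nonneg hκ (hδ.nonneg o))
  rcases eq_or_ne x y with rfl | hxy
  · exact le_exp_mul (NNReal.coe_nonneg _) (le_max_right _ _)
  rcases eq_or_ne y z with rfl | hyz
  · exact le_exp_mul (NNReal.coe_nonneg _) (le_max_left _ _)
  have exp_le {a : ℝ} (ha : a - δ ≤ gp o x z) :
      (gpGauge κ o x z : ℝ) ≤ Real.exp (κ * δ) * Real.exp (-κ * a) := by
    refine (coe_gpGauge_le κ o x z).trans ?_
    rw [← Real.exp_add, Real.exp_le_exp]
    nlinarith
  rw [coe_gpGauge_of_ne κ o hxy, coe_gpGauge_of_ne κ o hyz]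
  rcases min_choice (gp o x y) (gp o y z) with hmin | hmin <;> have h := hδ x z y o <;>
    rw [hmin] at h
  · exact (exp_le h).trans (by gcongr; exact le_max_left _ _)
  · exact (exp_le h).trans (by gcongr; exact le_max_right _ _)

lemma gpGauge_le_two_mul_max (hδ : IsHyperbolicWith X δ) (hκ : 0 ≤ κ)
    (hκδ : 2 * (κ * δ) ≤ Real.log 2) (o x y z w : X) :
    gpGauge κ o x w ≤
      2 * max (gpGauge κ o x y) (max (gpGauge κ o y z) (gpGauge κ o z w)) := by
  rw [← NNReal.coe_le_coe]
  push_cast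
  set M : ℝ := max (gpGauge κ o x y : ℝ) (max (gpGauge κ o y z : ℝ) (gpGauge κ o z w))
  have hM : 0 ≤ M := le_max_of_le_left (NNReal.coe_nonneg _)
  have hexp : 1 ≤ Real.exp (κ * δ) := Real.one_le_exp (mul_nonneg hκ (hδ.nonneg o))
  have hyw : (gpGauge κ o y w : ℝ) ≤ Real.exp (κ * δ) * M :=
    (gpGauge_le_exp_mul_max hδ hκ o y z w).trans (by gcongr; exact le_max_right _ _)
  calc (gpGauge κ o x w : ℝ)
      ≤ Real.exp (κ * δ) * max (gpGauge κ o x y : ℝ) (gpGauge κ o y w) :=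
        gpGauge_le_exp_mul_max hδ hκ o x y w
    _ ≤ Real.exp (κ * δ) * (Real.exp (κ * δ) * M) := by
        gcongr
        exact max_le ((le_max_left _ _).trans (le_mul_of_one_le_left hM hexp)) hyw
    _ = Real.exp (2 * (κ * δ)) * M := by rw [two_mul, Real.exp_add, mul_assoc]
    _ ≤ 2 * M := by
        gcongr
        exact (Real.exp_le_exp.2 hκδ).trans_eq (Real.exp_log two_pos)

lemma exp_neg_gp_le_two_mul_sum (hδ : IsHyperbolicWith X δ) (hκ : 0 ≤ κ)
    (hκδ : 2 * (κ * δ) ≤ Real.log 2) (o : X) (z : ℕ → X) {n m : ℕ} (hnm : n ≤ m)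
    (hz : z n ≠ z m) :
    Real.exp (-κ * gp o (z n) (z m)) ≤
      2 * ∑ t ∈ Finset.Ico n m, Real.exp (-κ * gp o (z t) (z (t + 1))) := by
  have hself := gpGauge_self κ o
  have hcomm := gpGauge_comm κ o
  have hfrink := PseudoMetricSpace.le_two_mul_dist_ofPreNNDist _ hself hcomm
    (gpGauge_le_two_mul_max hδ hκ hκδ o) (z n) (z m)
  rw [coe_gpGauge_of_ne κ o hz] at hfrink
  refine hfrink.trans (mul_le_mul_of_nonneg_left ?_ zero_le_two)
  let := PseudoMetricSpace.ofPreNNDist _ hself hcomm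
  refine (dist_le_Ico_sum_dist z hnm).trans (Finset.sum_le_sum fun t _ => ?_)
  exact (PseudoMetricSpace.dist_ofPreNNDist_le _ hself hcomm _ _).trans (coe_gpGauge_le κ o _ _)

lemma mul_sub_log_div_le_gp (hδ : IsHyperbolicWith X δ) (hκ : 0 < κ)
    (hκδ : 2 * (κ * δ) ≤ Real.log 2) (o : X) (z : ℕ → X) {a : ℝ} (ha : 0 < a) {n m : ℕ}
    (hnm : n ≤ m) (hz : z n ≠ z m) (hstep : ∀ t, n ≤ t → a * t ≤ gp o (z t) (z (t + 1))) :
    a * n - Real.log (2 / (1 - Real.exp (-κ * a))) / κ ≤ gp o (z n) (z m) := by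
  set ρ := Real.exp (-κ * a) with hρ
  have hρ1 : ρ < 1 := Real.exp_lt_one_iff.2 (by nlinarith)
  have hC : 0 < 2 / (1 - ρ) := div_pos two_pos (sub_pos.2 hρ1)
  have hexp : Real.exp (-κ * gp o (z n) (z m)) ≤
      Real.exp (Real.log (2 / (1 - ρ)) + n * (-κ * a)) :=
    calc Real.exp (-κ * gp o (z n) (z m))
        ≤ 2 * ∑ t ∈ Finset.Ico n m, Real.exp (-κ * gp o (z t) (z (t + 1))) :=
          exp_neg_gp_le_two_mul_sum hδ hκ.le hκδ o z hnm hz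
      _ ≤ 2 * ∑ t ∈ Finset.Ico n m, ρ ^ t := by
          gcongr with t ht
          rw [hρ, ← Real.exp_nat_mul, Real.exp_le_exp]
          have := hstep t (Finset.mem_Ico.1 ht).1
          nlinarith
      _ ≤ 2 * (ρ ^ n / (1 - ρ)) := by
          gcongr
          exact geom_sum_Ico_le_of_lt_one (Real.exp_pos _).le hρ1
      _ = Real.exp (Real.log (2 / (1 - ρ)) + n * (-κ * a)) := by
          rw [Real.exp_add, Real.exp_log hC, Real.exp_nat_mul, ← hρ]
          ring
  have hle := Real.exp_le_exp.1 hexp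
  rw [sub_le_iff_le_add', ← sub_le_iff_le_add, le_div_iff₀ hκ]
  linarith

lemma eventually_le_gp_of_linear_escape (hδ : IsHyperbolicWith X δ) (o : X) (z : ℕ → X)
    {l ε : ℝ} (hε : 0 < ε) (hdist : ∀ᶠ n : ℕ in atTop, (l - ε) * n ≤ dist o (z n))
    (hstep : ∀ᶠ n : ℕ in atTop, dist (z n) (z (n + 1)) ≤ ε * n) :
    ∀ᶠ n : ℕ in atTop, ∀ m, n ≤ m → (l - 3 * ε) * n ≤ gp o (z n) (z m) := by
  rcases le_or_gt (l - 2 * ε) 0 with hl | ha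
  · refine Eventually.of_forall fun n m _ => le_trans ?_ (gp_nonneg _ _ _)
    exact mul_nonpos_of_nonpos_of_nonneg (by linarith) n.cast_nonneg
  have hδ0 := hδ.nonneg o
  set κ : ℝ := Real.log 2 / (2 * δ + 1)
  have hκ : 0 < κ := div_pos (Real.log_pos one_lt_two) (by linarith)
  have hκδ : 2 * (κ * δ) ≤ Real.log 2 := by
    have : κ * (2 * δ + 1) = Real.log 2 := div_mul_cancel₀ _ (by linarith)
    linarith
  set a := l - 2 * ε with ha_def
  have hsteps : ∀ᶠ n : ℕ in atTop, ∀ t, n ≤ t → a * t ≤ gp o (z t) (z (t + 1)) := by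
    refine (eventually_forall_ge_atTop.2 (hdist.and hstep)).mono fun n hn t ht => ?_
    have := dist_sub_dist_le_gp o (z t) (z (t + 1))
    have := hn t ht
    rw [ha_def]
    linarith
  have hlarge := (tendsto_natCast_atTop_atTop.const_mul_atTop hε).eventually_ge_atTop
    (Real.log (2 / (1 - Real.exp (-κ * a))) / κ)
  filter_upwards [hsteps, hdist, hlarge] with n hn hdist_n hlarge_n m hnm
  have hεn : 0 ≤ ε * n := by positivity
  rcases eq_or_ne (z n) (z m) with hz | hz
  · rw [← hz, gp_self]
    linarith
  · have := mul_sub_log_div_le_gp hδ hκ hκδ o z ha hnm hz hn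
    linarith

lemma eventually_le_gp_symm {o : X} {u v : ℕ → X} {t : ℝ}
    (h : ∀ᶠ p : ℕ × ℕ in atTop, t ≤ gp o (u p.1) (v p.2)) :
    ∀ᶠ p : ℕ × ℕ in atTop, t ≤ gp o (v p.1) (u p.2) := by
  obtain ⟨N, hN⟩ := eventually_atTop_prod_self.1 h
  exact eventually_atTop_prod_self.2 ⟨N, fun i j hi hj => gp_comm o (u j) (v i) ▸ hN j i hj hi⟩

lemma IsHyperbolicWith.eventually_le_gp_trans (hδ : IsHyperbolicWith X δ) {o : X}
    {u v w : ℕ → X} {t : ℝ} (huv : ∀ᶠ p : ℕ × ℕ in atTop, t ≤ gp o (u p.1) (v p.2))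
    (hvw : ∀ᶠ p : ℕ × ℕ in atTop, t ≤ gp o (v p.1) (w p.2)) :
    ∀ᶠ p : ℕ × ℕ in atTop, t - δ ≤ gp o (u p.1) (w p.2) := by
  obtain ⟨N, hN⟩ := eventually_atTop_prod_self.1 huv
  obtain ⟨M, hM⟩ := eventually_atTop_prod_self.1 hvw
  refine eventually_atTop_prod_self.2 ⟨max N M, fun i j hi hj => ?_⟩
  have hmin := le_min (hN i (max N M) (le_of_max_le_left hi) (le_max_left _ _))
    (hM (max N M) j (le_max_right _ _) (le_of_max_le_right hj))
  have := hδ (u i) (w j) (v (max N M)) o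
  linarith

end GromovProduct

/-! ### The boundary quasi-metric -/

section Boundary

variable {X : Type*} [MetricSpace X] {δ : ℝ} {o : X}

lemma bndRel_iff_eventually {u v : DivSeq X o} :
    bndRel o u v ↔ ∀ t, ∀ᶠ p : ℕ × ℕ in atTop, t ≤ gp o (u.1 p.1) (v.1 p.2) :=
  Filter.tendsto_atTop

lemma IsHyperbolicWith.mkB_eq_iff (hδ : IsHyperbolicWith X δ) {u v : DivSeq X o} :
    mkB o u = mkB o v ↔ bndRel o u v := by
  refine ⟨fun h => ?_, fun h => Quot.sound h⟩
  have h' := Quot.eqvGen_exact h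
  clear h
  induction h' with
  | rel _ _ h => exact h
  | refl x => exact x.2
  | symm _ _ _ ih =>
    rw [bndRel_iff_eventually] at ih ⊢
    exact fun t => eventually_le_gp_symm (ih t)
  | trans _ _ _ _ _ ih₁ ih₂ =>
    rw [bndRel_iff_eventually] at ih₁ ih₂ ⊢
    intro t
    simpa using hδ.eventually_le_gp_trans (ih₁ (t + δ)) (ih₂ (t + δ))

lemma IsHyperbolicWith.eventually_le_gp_of_qB_lt (hδ : IsHyperbolicWith X δ)
    {u v : DivSeq X o} {t : ℝ} (h : qB o (mkB o u) (mkB o v) < Real.exp (-t)) :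
    ∀ᶠ p : ℕ × ℕ in atTop, t ≤ gp o (u.1 p.1) (v.1 p.2) := by
  rw [qB] at h
  split_ifs at h with heq
  · exact bndRel_iff_eventually.1 (hδ.mkB_eq_iff.1 heq) t
  have hgp_nonneg (u v : DivSeq X o) :
      ∀ᶠ p : ℕ × ℕ in atTop, 0 ≤ gp o (u.1 p.1) (v.1 p.2) :=
    Eventually.of_forall fun _ => gp_nonneg _ _ _
  have hle : gpB o (mkB o u) (mkB o v) ≤
      liminf (fun p : ℕ × ℕ => gp o (u.1 p.1) (v.1 p.2)) atTop := by
    refine csInf_le ⟨0, ?_⟩ ⟨u, v, rfl, rfl, rfl⟩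
    rintro _ ⟨u', v', -, -, rfl⟩
    rw [liminf_eq]
    exact Real.sSup_nonneg' ⟨0, hgp_nonneg u' v', le_rfl⟩
  have hlt : t < gpB o (mkB o u) (mkB o v) := neg_lt_neg_iff.1 (Real.exp_lt_exp.1 h)
  exact (eventually_lt_of_lt_liminf (hlt.trans_le hle) ⟨0, hgp_nonneg u v⟩).mono
    fun _ => le_of_lt

lemma IsHyperbolicWith.qB_lt_of_eventually_le_gp (hδ : IsHyperbolicWith X δ)
    {u v : DivSeq X o} {s t : ℝ} (hst : t < s - 2 * δ)
    (h : ∀ᶠ p : ℕ × ℕ in atTop, s ≤ gp o (u.1 p.1) (v.1 p.2)) :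
    qB o (mkB o u) (mkB o v) < Real.exp (-t) := by
  rw [qB]
  split_ifs with heq
  · exact Real.exp_pos _
  refine Real.exp_lt_exp.2 (neg_lt_neg (hst.trans_le ?_))
  refine le_csInf ⟨_, u, v, rfl, rfl, rfl⟩ ?_
  rintro _ ⟨u', v', hu, hv, rfl⟩
  refine le_liminf_of_le ?_ ?_
  · have hne : ¬ bndRel o u' v' := by rwa [← hδ.mkB_eq_iff, hu, hv]
    simp only [bndRel_iff_eventually, not_forall, not_eventually, not_le] at hne
    obtain ⟨b, hb⟩ := hne
    exact IsCoboundedUnder.of_frequently_le (hb.mono fun _ => le_of_lt)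
  · have huu := bndRel_iff_eventually.1 (hδ.mkB_eq_iff.1 hu) s
    have hvv := bndRel_iff_eventually.1 (hδ.mkB_eq_iff.1 hv.symm) (s - δ)
    have := hδ.eventually_le_gp_trans (hδ.eventually_le_gp_trans huu h) hvv
    exact this.mono fun _ hp => by linarith

lemma exists_mkB (o : X) (ξ : Boundary X o) : ∃ u, mkB o u = ξ := Quot.exists_rep ξ

lemma qB_self (ξ : Boundary X o) : qB o ξ ξ = 0 := if_pos rfl

lemma qB_pos {ξ η : Boundary X o} (h : ξ ≠ η) : 0 < qB o ξ η := by
  rw [qB, if_neg h]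
  exact Real.exp_pos _

lemma IsHyperbolicWith.qB_lt_trans (hδ : IsHyperbolicWith X δ) {ξ η ζ : Boundary X o} {t : ℝ}
    (hξη : qB o ξ η < Real.exp (-t)) (hηζ : qB o η ζ < Real.exp (-t)) :
    qB o ξ ζ < Real.exp (-(t - (3 * δ + 1))) := by
  obtain ⟨u, rfl⟩ := exists_mkB o ξ
  obtain ⟨v, rfl⟩ := exists_mkB o η
  obtain ⟨w, rfl⟩ := exists_mkB o ζ
  exact hδ.qB_lt_of_eventually_le_gp (by linarith) <| hδ.eventually_le_gp_trans
    (hδ.eventually_le_gp_of_qB_lt hξη) (hδ.eventually_le_gp_of_qB_lt hηζ)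

lemma IsHyperbolicWith.qB_lt_symm (hδ : IsHyperbolicWith X δ) {ξ η : Boundary X o} {t : ℝ}
    (h : qB o ξ η < Real.exp (-t)) : qB o η ξ < Real.exp (-(t - (2 * δ + 1))) := by
  obtain ⟨u, rfl⟩ := exists_mkB o ξ
  obtain ⟨v, rfl⟩ := exists_mkB o η
  exact hδ.qB_lt_of_eventually_le_gp (by linarith) <|
    eventually_le_gp_symm (hδ.eventually_le_gp_of_qB_lt h)

lemma IsHyperbolicWith.qB_lt_of_left (hδ : IsHyperbolicWith X δ) {ξ η ζ : Boundary X o} {t : ℝ}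
    (hξ : qB o ζ ξ < Real.exp (-t)) (hη : qB o ζ η < Real.exp (-t)) :
    qB o ξ η < Real.exp (-(t - (5 * δ + 2))) := by
  have := hδ.nonneg o
  have hη' : qB o ζ η < Real.exp (-(t - (2 * δ + 1))) :=
    hη.trans_le (Real.exp_le_exp.2 (by linarith))
  convert hδ.qB_lt_trans (hδ.qB_lt_symm hξ) hη' using 3
  ring

lemma IsHyperbolicWith.qB_lt_of_right (hδ : IsHyperbolicWith X δ) {ξ η ζ : Boundary X o} {t : ℝ}
    (hξ : qB o ξ ζ < Real.exp (-t)) (hη : qB o η ζ < Real.exp (-t)) :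
    qB o ξ η < Real.exp (-(t - (5 * δ + 2))) := by
  have := hδ.nonneg o
  have hξ' : qB o ξ ζ < Real.exp (-(t - (2 * δ + 1))) :=
    hξ.trans_le (Real.exp_le_exp.2 (by linarith))
  convert hδ.qB_lt_trans hξ' (hδ.qB_lt_symm hη) using 3
  ring

lemma eventually_atTop_prod_snd {p : ℕ → Prop} (h : ∀ᶠ m in atTop, p m) :
    ∀ᶠ q : ℕ × ℕ in atTop, p q.2 := by
  rw [← prod_atTop_atTop_eq]
  exact tendsto_snd.eventually h

lemma IsHyperbolicWith.qB_lt_of_mem_shadow (hδ : IsHyperbolicWith X δ) {u v : DivSeq X o}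
    {x : X} {a : ℝ} (hu : ∀ᶠ m in atTop, a ≤ gp o x (u.1 m))
    (hv : ∀ᶠ m in atTop, a ≤ gp o x (v.1 m)) :
    qB o (mkB o u) (mkB o v) < Real.exp (-(a - (3 * δ + 1))) :=
  hδ.qB_lt_of_eventually_le_gp (by linarith) <| hδ.eventually_le_gp_trans (v := fun _ => x)
    (eventually_le_gp_symm (u := fun _ => x) (eventually_atTop_prod_snd hu))
    (eventually_atTop_prod_snd hv)

lemma IsHyperbolicWith.le_gp_of_mem_shadow (hδ : IsHyperbolicWith X δ) {u v : DivSeq X o}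
    {x y : X} {a : ℝ} (hu : ∀ᶠ m in atTop, a ≤ gp o x (u.1 m))
    (hv : ∀ᶠ m in atTop, a ≤ gp o y (v.1 m))
    (h : qB o (mkB o u) (mkB o v) < Real.exp (-a)) : a - 2 * δ ≤ gp o x y := by
  have hux := eventually_atTop_prod_snd hu
  have hvy := eventually_le_gp_symm (u := fun _ => y) (eventually_atTop_prod_snd hv)
  have hxv := hδ.eventually_le_gp_trans (u := fun _ => x) hux (hδ.eventually_le_gp_of_qB_lt h)
  have hvy' := hvy.mono fun p hp => (sub_le_self a (hδ.nonneg o)).trans hp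
  obtain ⟨_, hp⟩ := (hδ.eventually_le_gp_trans (u := fun _ => x) (w := fun _ => y) hxv hvy').exists
  linarith

lemma measurableSet_qball (ξ : Boundary X o) (r : ℝ) : MeasurableSet (qball (qB o) ξ r) :=
  MeasurableSpace.measurableSet_generateFrom ⟨ξ, r, rfl⟩

instance : MeasurableSingletonClass (Boundary X o) where
  measurableSet_singleton ξ := by
    have hinter : ({ξ} : Set (Boundary X o)) = ⋂ n : ℕ, qball (qB o) ξ (1 / ((n : ℝ) + 1)) := by
      ext η
      simp only [mem_singleton_iff, mem_iInter, qball, mem_ofPred_eq]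
      refine ⟨?_, fun h => ?_⟩
      · rintro rfl n
        rw [qB_self]
        positivity
      · by_contra hne
        obtain ⟨n, hn⟩ := exists_nat_one_div_lt (qB_pos (Ne.symm hne))
        exact lt_asymm (h n) hn
    rw [hinter]
    exact MeasurableSet.iInter fun n => measurableSet_qball _ _

lemma qball_qbb {Xs : Type*} [MetricSpace Xs] {os : Xs}
    (ξ : Boundary X o × Boundary Xs os) (r : ℝ) :
    qball (qbb o os) ξ r = qball (qB o) ξ.1 r ×ˢ qball (qB os) ξ.2 r := by
  ext η
  simp [qball, qbb]

end Boundary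

/-! ### Path space of a random walk -/

section Shift

variable {α : Type*}

/-- The one-sided shift on sequences; it acts on the path space by forgetting the first increment
of the walk. -/
def pathShift (ω : ℕ → α) : ℕ → α := fun n => ω (n + 1)

lemma pathShift_iterate (n : ℕ) (ω : ℕ → α) : pathShift^[n] ω = fun k => ω (k + n) := by
  induction n generalizing ω with
  | zero => rfl
  | succ n ih =>
    rw [Function.iterate_succ_apply, ih]
    rfl

lemma measurable_pathShift [MeasurableSpace α] : Measurable (pathShift (α := α)) :=
  measurable_pi_lambda _ fun n => measurable_pi_apply (n + 1)

lemma forall_lt_succ_iff_pathShift (n : ℕ) (ω : ℕ → α) (g : ℕ → α) :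
    (∀ i < n + 1, ω i = g i) ↔ ω 0 = g 0 ∧ ∀ i < n, pathShift ω i = pathShift g i := by
  refine ⟨fun h => ⟨h 0 n.succ_pos, fun i hi => h (i + 1) (Nat.succ_lt_succ hi)⟩, ?_⟩
  rintro ⟨h0, h⟩ (_ | i) hi
  · exact h0
  · exact h i (Nat.lt_of_succ_lt_succ hi)

lemma measurableSet_agree [MeasurableSpace α] [MeasurableSingletonClass α] (n : ℕ) (g : ℕ → α) :
    MeasurableSet {ω : ℕ → α | ∀ i < n, ω i = g i} := by
  have hinter : {ω : ℕ → α | ∀ i < n, ω i = g i} =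
      ⋂ i, ⋂ (_ : i < n), (fun ω : ℕ → α => ω i) ⁻¹' {g i} := by
    ext
    simp
  rw [hinter]
  exact .iInter fun i => .iInter fun _ => measurable_pi_apply i (measurableSet_singleton _)

end Shift

section Walk

variable {G : Type*} [Group G]

lemma walk_zero (ω : ℕ → G) : walk ω 0 = 1 := rfl

lemma walk_succ (ω : ℕ → G) (n : ℕ) : walk ω (n + 1) = walk ω n * ω n := by
  simp [walk, List.range_succ]

lemma walk_one (ω : ℕ → G) : walk ω 1 = ω 0 := by
  rw [walk_succ, walk_zero, one_mul]

lemma walk_add (ω : ℕ → G) (n m : ℕ) :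
    walk ω (n + m) = walk ω n * walk (pathShift^[n] ω) m := by
  induction m with
  | zero => simp [walk_zero]
  | succ m ih =>
    simp only [← add_assoc, walk_succ, ih, mul_assoc, pathShift_iterate, add_comm m n]

lemma walk_succ' (ω : ℕ → G) (n : ℕ) : walk ω (n + 1) = ω 0 * walk (pathShift ω) n := by
  rw [add_comm, walk_add, walk_one, Function.iterate_one]

lemma measurable_walk [Countable G] [MeasurableSpace G] [DiscreteMeasurableSpace G] (n : ℕ) :
    Measurable fun ω : ℕ → G => walk ω n := by
  induction n with
  | zero => exact measurable_const
  | succ n ih =>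
    simp only [walk_succ]
    exact (measurable_of_countable fun q : G × G => q.1 * q.2).comp
      (ih.prodMk (measurable_pi_apply n))

end Walk

section StepMeasure

variable {G : Type*} [MeasurableSpace G]

/-- The measure on `G` with point masses `p`. -/
def stepMeasure (p : G → ℝ≥0∞) : Measure G := Measure.sum fun x => p x • Measure.dirac x

lemma IsProb.isProbabilityMeasure_stepMeasure {p : G → ℝ≥0∞} (hp : IsProb p) :
    IsProbabilityMeasure (stepMeasure p) where
  measure_univ := by
    rw [stepMeasure, Measure.sum_apply _ MeasurableSet.univ]
    simpa using show ∑' x, p x = 1 from hp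

lemma stepMeasure_singleton [MeasurableSingletonClass G] (p : G → ℝ≥0∞) (x : G) :
    stepMeasure p {x} = p x := by
  rw [stepMeasure, Measure.sum_apply _ (measurableSet_singleton x), tsum_eq_single x]
  · simp
  · intro y hy
    simp [hy]

end StepMeasure

namespace IsRWMeasure

variable {G : Type*} [Group G] [MeasurableSpace G] {p : G → ℝ≥0∞} {P Q : Measure (ℕ → G)}

lemma measure_head_eq (hP : IsRWMeasure p P) (x : G) :
    P ((fun ω => ω 0) ⁻¹' {x}) = p x := by
  have := hP.2 1 fun _ => x
  simpa [Set.preimage] using this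

variable [Countable G] [DiscreteMeasurableSpace G]

lemma isProb (hP : IsRWMeasure p P) : IsProb p := by
  have := hP.1
  have hhead : Measurable fun ω : ℕ → G => ω 0 := measurable_pi_apply 0
  rw [IsProb, tsum_congr fun x => (hP.measure_head_eq x).symm, ← measure_iUnion]
  · rw [← preimage_iUnion, iUnion_of_singleton, preimage_univ, measure_univ]
  · exact fun x y hxy => (Set.disjoint_singleton.2 hxy).preimage _
  · exact fun x => hhead (measurableSet_singleton x)

lemma map_fin_eq_pi (hP : IsRWMeasure p P) (n : ℕ) :
    P.map (fun (ω : ℕ → G) (i : Fin n) => ω i) = Measure.pi fun _ : Fin n => stepMeasure p := by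
  have := hP.1
  have := hP.isProb.isProbabilityMeasure_stepMeasure
  refine Measure.ext_of_singleton fun g => ?_
  rw [Measure.map_apply (by fun_prop) (measurableSet_singleton g), Measure.pi_singleton]
  set g' : ℕ → G := fun i => if hi : i < n then g ⟨i, hi⟩ else 1
  have hg' (i : Fin n) : g' i = g i := dif_pos i.2
  have hpre : (fun (ω : ℕ → G) (i : Fin n) => ω i) ⁻¹' {g} = {ω | ∀ i < n, ω i = g' i} := by
    ext ω
    simp [funext_iff, Fin.forall_iff, ← hg']
  rw [hpre, hP.2, Finset.prod_range]
  simp only [stepMeasure_singleton, hg']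

lemma eq_infinitePi (hP : IsRWMeasure p P) :
    P = Measure.infinitePi fun _ : ℕ => stepMeasure p := by
  have := hP.isProb.isProbabilityMeasure_stepMeasure
  refine Measure.eq_infinitePi _ fun s t _ => ?_
  obtain ⟨n, hn⟩ : ∃ n, s ⊆ Finset.range n := s.exists_nat_subset_range
  have hpre : Set.pi (s : Set ℕ) t = (fun (ω : ℕ → G) (i : Fin n) => ω i) ⁻¹'
      (Set.pi univ fun i : Fin n => if (i : ℕ) ∈ s then t i else univ) := by
    ext ω
    simp only [Set.mem_pi, mem_preimage, mem_univ, forall_true_left, Finset.mem_coe]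
    refine ⟨fun h i => ?_, fun h i hi => ?_⟩
    · split_ifs with hi
      · exact h i hi
      · trivial
    · simpa [hi] using h ⟨i, Finset.mem_range.1 (hn hi)⟩
  rw [hpre, ← Measure.map_apply (by fun_prop) .of_discrete, hP.map_fin_eq_pi, Measure.pi_pi,
    ← Finset.prod_range fun i => stepMeasure p (if i ∈ s then t i else univ),
    ← Finset.prod_subset hn fun i _ hi => by simp [hi]]
  exact Finset.prod_congr rfl fun i hi => by simp [hi]

lemma unique (hP : IsRWMeasure p P) (hQ : IsRWMeasure p Q) : P = Q := by
  rw [hP.eq_infinitePi, hQ.eq_infinitePi]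

/- Conditioned on its first increment, a random walk restarts: the law of the shifted path has
the same cylinder probabilities, hence is `P` by uniqueness. -/
lemma measure_head_inter_pathShift (hP : IsRWMeasure p P) (x : G) {B : Set (ℕ → G)}
    (hB : MeasurableSet B) :
    P ((fun ω => ω 0) ⁻¹' {x} ∩ pathShift ⁻¹' B) = p x * P B := by
  have := hP.1
  set H : Set (ℕ → G) := (fun ω => ω 0) ⁻¹' {x}
  have hH : MeasurableSet H := measurable_pi_apply 0 (measurableSet_singleton x)
  have hPH : P H = p x := hP.measure_head_eq x
  rcases eq_or_ne (p x) 0 with hpx | hpx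
  · rw [hpx, zero_mul]
    exact measure_mono_null inter_subset_left (hPH.trans hpx)
  have hpt : p x ≠ ∞ := hPH ▸ measure_ne_top P H
  set Q := (ProbabilityTheory.cond P H).map pathShift
  have hQ {C : Set (ℕ → G)} (hC : MeasurableSet C) :
      Q C = (p x)⁻¹ * P (H ∩ pathShift ⁻¹' C) := by
    rw [Measure.map_apply measurable_pathShift hC, ProbabilityTheory.cond_apply hH, hPH]
  have hQrw : IsRWMeasure p Q := by
    refine ⟨⟨?_⟩, fun n g => ?_⟩
    · rw [hQ .univ, preimage_univ, inter_univ, hPH, ENNReal.inv_mul_cancel hpx hpt]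
    · have hcons : H ∩ pathShift ⁻¹' {ω | ∀ i < n, ω i = g i} =
          {ω | ∀ i < n + 1, ω i = (fun i => Nat.casesOn i x g : ℕ → G) i} := by
        ext ω
        exact (forall_lt_succ_iff_pathShift n ω fun i => Nat.casesOn i x g).symm
      rw [hQ (measurableSet_agree n g), hcons, hP.2, Finset.prod_range_succ', mul_comm, mul_assoc]
      change (∏ i ∈ Finset.range n, p (g i)) * (p x * (p x)⁻¹) = _
      rw [ENNReal.mul_inv_cancel hpx hpt, mul_one]
  have hPB := hQ hB
  rw [hQrw.unique hP] at hPB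
  rw [hPB, ← mul_assoc, ENNReal.mul_inv_cancel hpx hpt, one_mul]

lemma measurePreserving_pathShift (hP : IsRWMeasure p P) : MeasurePreserving pathShift P P := by
  have hhead : Measurable fun ω : ℕ → G => ω 0 := measurable_pi_apply 0
  refine ⟨measurable_pathShift, Measure.ext fun B hB => ?_⟩
  have hunion : pathShift ⁻¹' B =
      ⋃ x : G, (fun ω : ℕ → G => ω 0) ⁻¹' {x} ∩ pathShift ⁻¹' B := by
    ext
    simp
  rw [Measure.map_apply measurable_pathShift hB, hunion, measure_iUnion]
  · simp_rw [hP.measure_head_inter_pathShift _ hB]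
    rw [ENNReal.tsum_mul_right, show ∑' x, p x = 1 from hP.isProb, one_mul]
  · exact fun x y hxy => ((Set.disjoint_singleton.2 hxy).preimage _).mono
      inter_subset_left inter_subset_left
  · exact fun x => (hhead (measurableSet_singleton x)).inter (measurable_pathShift hB)

lemma measure_agree_inter_pathShift_iterate (hP : IsRWMeasure p P) (n : ℕ) (g : ℕ → G)
    {B : Set (ℕ → G)} (hB : MeasurableSet B) :
    P ({ω | ∀ i < n, ω i = g i} ∩ pathShift^[n] ⁻¹' B) =
      (∏ i ∈ Finset.range n, p (g i)) * P B := by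
  induction n generalizing g with
  | zero => simp
  | succ n ih =>
    have hsplit : {ω : ℕ → G | ∀ i < n + 1, ω i = g i} ∩ pathShift^[n + 1] ⁻¹' B =
        (fun ω => ω 0) ⁻¹' {g 0} ∩
          pathShift ⁻¹' ({ω | ∀ i < n, ω i = pathShift g i} ∩ pathShift^[n] ⁻¹' B) := by
      ext ω
      simp only [mem_inter_iff, mem_ofPred_eq, forall_lt_succ_iff_pathShift, mem_preimage,
        mem_singleton_iff, Function.iterate_succ_apply, and_assoc]
    have hmeas := (measurableSet_agree n (pathShift g)).inter (measurable_pathShift.iterate n hB)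
    rw [hsplit, hP.measure_head_inter_pathShift _ hmeas, ih, Finset.prod_range_succ']
    simp only [pathShift]
    ring

lemma measure_walk_inter_pathShift_iterate (hP : IsRWMeasure p P) (n : ℕ) (x : G)
    {B : Set (ℕ → G)} (hB : MeasurableSet B) :
    P ((fun ω => walk ω n) ⁻¹' {x} ∩ pathShift^[n] ⁻¹' B) = piN p n x * P B := by
  induction n generalizing x B with
  | zero =>
    rcases eq_or_ne x 1 with rfl | hx
    · simp [walk_zero, piN]
    · simp [walk_zero, piN, hx, Ne.symm hx]
  | succ n ih =>
    set C : G → Set (ℕ → G) := fun y => (fun ω => ω 0) ⁻¹' {y⁻¹ * x} ∩ pathShift ⁻¹' B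
    have hC (y : G) : MeasurableSet (C y) :=
      (measurable_pi_apply 0 (measurableSet_singleton _)).inter (measurable_pathShift hB)
    have hunion : (fun ω : ℕ → G => walk ω (n + 1)) ⁻¹' {x} ∩ pathShift^[n + 1] ⁻¹' B =
        ⋃ y : G, (fun ω => walk ω n) ⁻¹' {y} ∩ pathShift^[n] ⁻¹' C y := by
      ext ω
      have hhead : pathShift^[n] ω 0 = ω n := by simp [pathShift_iterate]
      simp [C, walk_succ, hhead, ← Function.iterate_succ_apply' pathShift, eq_inv_mul_iff_mul_eq]
    rw [hunion, measure_iUnion]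
    · simp_rw [ih _ (hC _), C, hP.measure_head_inter_pathShift _ hB]
      rw [piN, conv, ← ENNReal.tsum_mul_right]
      exact tsum_congr fun y => by ring
    · exact fun y z hyz => ((Set.disjoint_singleton.2 hyz).preimage _).mono
        inter_subset_left inter_subset_left
    · exact fun y => (measurable_walk n (measurableSet_singleton y)).inter
        (measurable_pathShift.iterate n (hC y))

lemma measure_walk_eq (hP : IsRWMeasure p P) (n : ℕ) (x : G) :
    P ((fun ω => walk ω n) ⁻¹' {x}) = piN p n x := by
  have := hP.1
  simpa using hP.measure_walk_inter_pathShift_iterate n x .univ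

/- The normalized restriction of `P` to an invariant set has the same cylinder probabilities as
`P`, so it is `P`. -/
lemma ergodic_pathShift (hP : IsRWMeasure p P) : Ergodic pathShift P := by
  have := hP.1
  refine ⟨hP.measurePreserving_pathShift, ⟨fun A hA hinv => ?_⟩⟩
  rw [eventuallyConst_set']
  rcases eq_or_ne (P A) 0 with h0 | h0
  · exact Or.inl (ae_eq_empty.2 h0)
  right
  have hinvn (n : ℕ) : pathShift^[n] ⁻¹' A = A := by
    rw [preimage_iterate_eq]
    exact Function.iterate_fixed hinv n
  have hcond : IsRWMeasure p (ProbabilityTheory.cond P A) := by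
    refine ⟨ProbabilityTheory.cond_isProbabilityMeasure h0, fun n g => ?_⟩
    rw [ProbabilityTheory.cond_apply hA, inter_comm, ← hinvn n,
      hP.measure_agree_inter_pathShift_iterate n g hA, hinvn n, mul_comm, mul_assoc,
      ENNReal.mul_inv_cancel h0 (measure_ne_top _ _), mul_one]
  rw [ae_eq_univ, ← hcond.unique hP, ProbabilityTheory.cond_apply hA, inter_compl_self,
    measure_empty, mul_zero]

lemma ae_tendsto_average (hP : IsRWMeasure p P) (f : G → ℝ)
    (hf : Integrable (fun ω => f (ω 0)) P) :
    ∀ᵐ ω ∂P, Tendsto (fun n : ℕ => (∑ i ∈ Finset.range n, f (ω i)) / n) atTop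
      (𝓝 (∫ ω, f (ω 0) ∂P)) := by
  have := hP.isProb.isProbabilityMeasure_stepMeasure
  have hf_meas : Measurable f := measurable_of_countable f
  have hindep : ProbabilityTheory.iIndepFun (fun (i : ℕ) (ω : ℕ → G) => f (ω i)) P := by
    rw [hP.eq_infinitePi]
    exact ProbabilityTheory.iIndepFun_infinitePi (P := fun _ : ℕ => stepMeasure p)
      (X := fun _ => f) fun _ => hf_meas
  have hcoord (i : ℕ) : P.map (fun ω => ω i) = stepMeasure p := by
    rw [hP.eq_infinitePi]
    exact (measurePreserving_eval_infinitePi (fun _ : ℕ => stepMeasure p) i).map_eq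
  have hident (i : ℕ) : ProbabilityTheory.IdentDistrib (fun ω : ℕ → G => f (ω i))
      (fun ω : ℕ → G => f (ω 0)) P P :=
    ProbabilityTheory.IdentDistrib.comp
      ⟨(measurable_pi_apply i).aemeasurable, (measurable_pi_apply 0).aemeasurable,
        by rw [hcoord, hcoord]⟩ hf_meas
  exact ProbabilityTheory.strong_law_ae_real _ hf (fun i j hij => hindep.indepFun hij) hident

lemma map_block (hP : IsRWMeasure p P) (N : ℕ) :
    IsRWMeasure (piN p N) (P.map fun ω j => walk (pathShift^[j * N] ω) N) := by
  have := hP.1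
  set blocks : (ℕ → G) → ℕ → G := fun ω j => walk (pathShift^[j * N] ω) N
  have hblocks : Measurable blocks :=
    measurable_pi_lambda _ fun j => (measurable_walk N).comp (measurable_pathShift.iterate _)
  refine ⟨Measure.isProbabilityMeasure_map hblocks.aemeasurable, fun n g => ?_⟩
  rw [Measure.map_apply hblocks (measurableSet_agree n g)]
  induction n generalizing g with
  | zero => simp
  | succ n ih =>
    have hshift (ω : ℕ → G) : pathShift (blocks ω) = blocks (pathShift^[N] ω) := by
      funext j
      simp only [pathShift, blocks, ← Function.iterate_add_apply, add_mul, one_mul]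
    have hsplit : blocks ⁻¹' {ω | ∀ i < n + 1, ω i = g i} = (fun ω => walk ω N) ⁻¹' {g 0} ∩
        pathShift^[N] ⁻¹' (blocks ⁻¹' {ω | ∀ i < n, ω i = pathShift g i}) := by
      ext ω
      simp only [mem_preimage, mem_ofPred_eq, forall_lt_succ_iff_pathShift, hshift, mem_inter_iff,
        mem_singleton_iff]
      simp [blocks]
    rw [hsplit, hP.measure_walk_inter_pathShift_iterate N (g 0)
      (hblocks (measurableSet_agree n _)), ih, Finset.prod_range_succ', mul_comm]
    rfl

lemma isProb_piN (hP : IsRWMeasure p P) (n : ℕ) : IsProb (piN p n) := (hP.map_block n).isProb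

end IsRWMeasure

/-! ### The lower half of Kingman's subadditive ergodic theorem -/

lemma ennreal_le_of_forall_natCast_mul_le_add {L a B : ℝ≥0∞} (hB : B ≠ ∞)
    (h : ∀ M : ℕ, M * L ≤ M * a + B) : L ≤ a := by
  have hlim : Tendsto (fun M : ℕ => a + B * (M : ℝ≥0∞)⁻¹) atTop (𝓝 a) := by
    simpa using tendsto_const_nhds.add
      (ENNReal.Tendsto.const_mul ENNReal.tendsto_inv_nat_nhds_zero (Or.inr hB))
  refine ge_of_tendsto hlim ?_
  filter_upwards [eventually_ge_atTop 1] with M hM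
  have hM0 : (M : ℝ≥0∞) ≠ 0 := by simp; omega
  have hMt : (M : ℝ≥0∞) ≠ ∞ := ENNReal.natCast_ne_top M
  calc L = M * L * (M : ℝ≥0∞)⁻¹ := by
        rw [mul_comm (M : ℝ≥0∞), mul_assoc, ENNReal.mul_inv_cancel hM0 hMt, mul_one]
    _ ≤ (M * a + B) * (M : ℝ≥0∞)⁻¹ := mul_le_mul_left (h M) _
    _ = a + B * (M : ℝ≥0∞)⁻¹ := by
        rw [add_mul, mul_comm (M : ℝ≥0∞), mul_assoc, ENNReal.mul_inv_cancel hM0 hMt, mul_one]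

section SubadditiveCocycle

variable {α : Type*} {T : α → α} {f : ℕ → α → ℝ≥0∞}

/-- A nonnegative subadditive cocycle over the transformation `T`. -/
structure IsSubadditiveCocycle (T : α → α) (f : ℕ → α → ℝ≥0∞) : Prop where
  zero : ∀ ω, f 0 ω = 0
  add_le : ∀ n m ω, f (n + m) ω ≤ f n ω + f m (T^[n] ω)

/-- The upper bound of Katznelson and Weiss for a subadditive cocycle over `M` steps, in the case
where an orbit can be cut into blocks of length at most `N` along which the average is at most `c`:
exceptional sites are charged `v`, and the last `N` sites are charged `u`. -/
def greedyBound (T : α → α) (c : ℝ≥0∞) (u v : α → ℝ≥0∞) (N M : ℕ) (ω : α) : ℝ≥0∞ :=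
  ∑ i ∈ Finset.range M, (c + v (T^[i] ω) + if M ≤ i + N then u (T^[i] ω) else 0)

lemma sum_add_greedyBound_le (T : α → α) (c : ℝ≥0∞) (u v : α → ℝ≥0∞) (N n m : ℕ) (ω : α) :
    ∑ i ∈ Finset.range n, (c + v (T^[i] ω)) + greedyBound T c u v N m (T^[n] ω) ≤
      greedyBound T c u v N (n + m) ω := by
  rw [greedyBound, greedyBound, Finset.sum_range_add]
  refine add_le_add (Finset.sum_le_sum fun i _ => le_self_add)
    (Finset.sum_congr rfl fun i _ => ?_).le
  rw [← Function.iterate_add_apply, add_comm i n]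
  simp only [add_assoc, add_le_add_iff_left]

namespace IsSubadditiveCocycle

lemma le_sum (hf : IsSubadditiveCocycle T f) (M : ℕ) (ω : α) :
    f M ω ≤ ∑ i ∈ Finset.range M, f 1 (T^[i] ω) := by
  induction M with
  | zero => simp [hf.zero]
  | succ M ih =>
    rw [Finset.sum_range_succ]
    exact (hf.add_le M 1 ω).trans (add_le_add_left ih _)

lemma le_greedyBound (hf : IsSubadditiveCocycle T f) {c : ℝ≥0∞} {v : α → ℝ≥0∞} {N : ℕ}
    (hv : ∀ ω, f 1 ω ≤ v ω ∨ ∃ n, 1 ≤ n ∧ n ≤ N ∧ f n ω ≤ n * c) (M : ℕ) (ω : α) :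
    f M ω ≤ greedyBound T c (f 1) v N M ω := by
  induction M using Nat.strong_induction_on generalizing ω with
  | _ M ih =>
    rcases Nat.eq_zero_or_pos M with rfl | hM
    · simp [hf.zero]
    rcases hv ω with hbad | ⟨n, hn1, hnN, hgood⟩
    · obtain ⟨m, rfl⟩ := Nat.exists_eq_add_of_le hM
      refine (hf.add_le 1 m ω).trans (le_trans ?_ (sum_add_greedyBound_le T c (f 1) v N 1 m ω))
      refine add_le_add ?_ (ih m (by omega) _)
      simpa using hbad.trans le_add_self
    · rcases le_or_gt n M with hnM | hnM
      · obtain ⟨m, rfl⟩ := Nat.exists_eq_add_of_le hnM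
        refine (hf.add_le n m ω).trans (le_trans ?_ (sum_add_greedyBound_le T c (f 1) v N n m ω))
        refine add_le_add (hgood.trans ?_) (ih m (by omega) _)
        calc (n : ℝ≥0∞) * c = ∑ _i ∈ Finset.range n, c := by simp
          _ ≤ _ := Finset.sum_le_sum fun i _ => le_self_add
      · refine (hf.le_sum M ω).trans (Finset.sum_le_sum fun i _ => ?_)
        rw [if_pos (by omega)]
        exact le_add_self

lemma liminf_div_le_comp (hf : IsSubadditiveCocycle T f) {ω : α} (hω : f 1 ω ≠ ∞) :
    liminf (fun n : ℕ => f n ω / n) atTop ≤ liminf (fun n : ℕ => f n (T ω) / n) atTop := by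
  have hlim : Tendsto (fun n : ℕ => f 1 ω / n) atTop (𝓝 0) := by
    simpa [div_eq_mul_inv] using
      ENNReal.Tendsto.const_mul ENNReal.tendsto_inv_nat_nhds_zero (Or.inr hω)
  rw [← liminf_nat_add (fun n : ℕ => f n ω / n) 1,
    ← ENNReal.liminf_add_of_left_tendsto_zero hlim fun n : ℕ => f n (T ω) / n]
  refine liminf_le_liminf (Eventually.of_forall fun n => ?_)
  calc f (n + 1) ω / (n + 1 : ℕ) ≤ (f 1 ω + f n (T ω)) / n := by
        rw [add_comm n 1]
        exact ENNReal.div_le_div (hf.add_le 1 n ω) (by simp)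
    _ = _ := ENNReal.add_div

end IsSubadditiveCocycle

variable [MeasurableSpace α] {P : Measure α}

lemma lintegral_greedyBound_le [IsProbabilityMeasure P] (hT : MeasurePreserving T P P)
    (c : ℝ≥0∞) {u v : α → ℝ≥0∞} (hu : Measurable u) (hv : Measurable v) (N M : ℕ) :
    ∫⁻ ω, greedyBound T c u v N M ω ∂P ≤ M * (c + ∫⁻ ω, v ω ∂P) + N * ∫⁻ ω, u ω ∂P := by
  have hT_iter (i : ℕ) : MeasurePreserving T^[i] P P := hT.iterate i
  have htail (i : ℕ) : Measurable fun ω => if M ≤ i + N then u (T^[i] ω) else 0 :=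
    Measurable.ite (.const _) (hu.comp (hT_iter i).measurable) measurable_const
  have hterm_meas (i : ℕ) :
      Measurable fun ω => c + v (T^[i] ω) + if M ≤ i + N then u (T^[i] ω) else 0 :=
    (measurable_const.add (hv.comp (hT_iter i).measurable)).add (htail i)
  have hterm (i : ℕ) :
      ∫⁻ ω, (c + v (T^[i] ω) + if M ≤ i + N then u (T^[i] ω) else 0) ∂P =
        c + ∫⁻ ω, v ω ∂P + if M ≤ i + N then ∫⁻ ω, u ω ∂P else 0 := by
    rw [lintegral_add_right _ (htail i), lintegral_add_left measurable_const, lintegral_const,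
      measure_univ, mul_one, (hT_iter i).lintegral_comp hv]
    split_ifs
    · rw [(hT_iter i).lintegral_comp hu]
    · rw [lintegral_zero]
  have htail_card : (Finset.filter (fun i => M ≤ i + N) (Finset.range M)).card ≤ N := by
    have hsub : Finset.filter (fun i => M ≤ i + N) (Finset.range M) ⊆ Finset.Ico (M - N) M := by
      intro i
      simp only [Finset.mem_filter, Finset.mem_range, Finset.mem_Ico]
      omega
    have := Finset.card_le_card hsub
    rw [Nat.card_Ico] at this
    omega
  simp only [greedyBound]
  rw [lintegral_finsetSum _ fun i _ => hterm_meas i, Finset.sum_congr rfl fun i _ => hterm i,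
    Finset.sum_add_distrib, ← Finset.sum_filter]
  simp only [Finset.sum_const, Finset.card_range, nsmul_eq_mul]
  gcongr

namespace IsSubadditiveCocycle

lemma lintegral_add_le (hf : IsSubadditiveCocycle T f) (hT : MeasurePreserving T P P)
    (hf_meas : ∀ n, Measurable (f n)) (n m : ℕ) :
    ∫⁻ ω, f (n + m) ω ∂P ≤ ∫⁻ ω, f n ω ∂P + ∫⁻ ω, f m ω ∂P := by
  refine (lintegral_mono fun ω => hf.add_le n m ω).trans ?_
  rw [lintegral_add_left (hf_meas n), (hT.iterate n).lintegral_comp (hf_meas m)]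

lemma lintegral_ne_top (hf : IsSubadditiveCocycle T f) (hT : MeasurePreserving T P P)
    (hf_meas : ∀ n, Measurable (f n)) (hf1 : ∫⁻ ω, f 1 ω ∂P ≠ ∞) (n : ℕ) :
    ∫⁻ ω, f n ω ∂P ≠ ∞ := by
  induction n with
  | zero => simp [hf.zero]
  | succ n ih =>
    exact ne_top_of_le_ne_top (ENNReal.add_ne_top.2 ⟨ih, hf1⟩) (hf.lintegral_add_le hT hf_meas n 1)

lemma exists_tendsto_lintegral (hf : IsSubadditiveCocycle T f) (hT : MeasurePreserving T P P)
    (hf_meas : ∀ n, Measurable (f n)) (hf1 : ∫⁻ ω, f 1 ω ∂P ≠ ∞) :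
    ∃ L : ℝ, 0 ≤ L ∧ Tendsto (fun n : ℕ => (∫⁻ ω, f n ω ∂P).toReal / n) atTop (𝓝 L) ∧
      ∀ n : ℕ, n * ENNReal.ofReal L ≤ ∫⁻ ω, f n ω ∂P := by
  have hfin := hf.lintegral_ne_top hT hf_meas hf1
  have hsub : Subadditive fun n : ℕ => (∫⁻ ω, f n ω ∂P).toReal := fun n m => by
    rw [← ENNReal.toReal_add (hfin n) (hfin m)]
    exact ENNReal.toReal_mono (ENNReal.add_ne_top.2 ⟨hfin n, hfin m⟩)
      (hf.lintegral_add_le hT hf_meas n m)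
  have hbdd : BddBelow (range fun n : ℕ => (∫⁻ ω, f n ω ∂P).toReal / n) := by
    refine ⟨0, ?_⟩
    rintro _ ⟨n, rfl⟩
    positivity
  have hlim := hsub.tendsto_lim hbdd
  refine ⟨hsub.lim, ge_of_tendsto' hlim fun n => by positivity, hlim, fun n => ?_⟩
  rcases Nat.eq_zero_or_pos n with rfl | hn
  · simp
  · have := hsub.lim_le_div hbdd hn.ne'
    rw [le_div_iff₀' (by positivity)] at this
    rw [← ENNReal.ofReal_toReal (hfin n), ← ENNReal.ofReal_natCast,
      ← ENNReal.ofReal_mul n.cast_nonneg]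
    exact ENNReal.ofReal_le_ofReal this

variable [IsProbabilityMeasure P]

lemma exists_lintegral_indicator_lt (hf_meas : ∀ n, Measurable (f n))
    (hf1 : ∫⁻ ω, f 1 ω ∂P ≠ ∞) {c : ℝ≥0∞} (hc : ∀ᵐ ω ∂P, ∃ n : ℕ, 1 ≤ n ∧ f n ω ≤ n * c)
    {e : ℝ≥0∞} (he : 0 < e) :
    ∃ (N : ℕ) (B : Set α), MeasurableSet B ∧ ∫⁻ ω, B.indicator (f 1) ω ∂P < e ∧
      ∀ ω ∉ B, ∃ n : ℕ, 1 ≤ n ∧ n ≤ N ∧ f n ω ≤ n * c := by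
  set B : ℕ → Set α := fun N => ⋂ n : ℕ, ⋂ (_ : 1 ≤ n ∧ n ≤ N), {ω | n * c < f n ω}
  have hB_meas (N : ℕ) : MeasurableSet (B N) :=
    .iInter fun n => .iInter fun _ => measurableSet_lt measurable_const (hf_meas n)
  have hB_anti : Antitone B := fun N M hNM =>
    iInter_mono fun n => iInter_mono' fun hn => ⟨⟨hn.1, hn.2.trans hNM⟩, subset_rfl⟩
  have hB_not {N : ℕ} {ω : α} (hω : ω ∉ B N) : ∃ n : ℕ, 1 ≤ n ∧ n ≤ N ∧ f n ω ≤ n * c := by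
    simpa [B, and_assoc] using hω
  have hB_inter : P (⋂ N, B N) = 0 := by
    refine measure_mono_null (fun ω hω => ?_) hc
    rintro ⟨n, hn, hle⟩
    have hlt : n * c < f n ω := mem_iInter₂.1 (mem_iInter.1 hω n) n ⟨hn, le_rfl⟩
    exact hle.not_gt hlt
  have hB_lim : Tendsto (fun N => P (B N)) atTop (𝓝 0) := hB_inter ▸
    tendsto_measure_iInter_atTop (fun N => (hB_meas N).nullMeasurableSet) hB_anti
      ⟨0, measure_ne_top _ _⟩
  obtain ⟨N, hN⟩ := ((tendsto_setLIntegral_zero hf1 hB_lim).eventually (gt_mem_nhds he)).exists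
  exact ⟨N, B N, hB_meas N, by rwa [lintegral_indicator (hB_meas N)], fun ω hω => hB_not hω⟩

lemma le_of_ae_exists_le (hf : IsSubadditiveCocycle T f) (hT : MeasurePreserving T P P)
    (hf_meas : ∀ n, Measurable (f n)) (hf1 : ∫⁻ ω, f 1 ω ∂P ≠ ∞) {L c : ℝ≥0∞}
    (hL : ∀ n : ℕ, n * L ≤ ∫⁻ ω, f n ω ∂P)
    (hc : ∀ᵐ ω ∂P, ∃ n : ℕ, 1 ≤ n ∧ f n ω ≤ n * c) : L ≤ c := by
  refine ENNReal.le_of_forall_pos_le_add fun e he _ => ?_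
  obtain ⟨N, B, hB, hB_lt, hgood⟩ :=
    exists_lintegral_indicator_lt hf_meas hf1 hc (ENNReal.coe_pos.2 he)
  have hv (ω : α) : f 1 ω ≤ B.indicator (f 1) ω ∨ ∃ n : ℕ, 1 ≤ n ∧ n ≤ N ∧ f n ω ≤ n * c := by
    by_cases hω : ω ∈ B
    · exact Or.inl (indicator_of_mem hω _).ge
    · exact Or.inr (hgood ω hω)
  refine ennreal_le_of_forall_natCast_mul_le_add
    (ENNReal.mul_ne_top (ENNReal.natCast_ne_top N) hf1) fun M => ?_
  calc M * L ≤ ∫⁻ ω, f M ω ∂P := hL M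
    _ ≤ ∫⁻ ω, greedyBound T c (f 1) (B.indicator (f 1)) N M ω ∂P :=
        lintegral_mono (hf.le_greedyBound hv M)
    _ ≤ M * (c + ∫⁻ ω, B.indicator (f 1) ω ∂P) + N * ∫⁻ ω, f 1 ω ∂P :=
        lintegral_greedyBound_le hT c (hf_meas 1) ((hf_meas 1).indicator hB) N M
    _ ≤ M * (c + e) + N * ∫⁻ ω, f 1 ω ∂P := by gcongr

lemma ae_eventually_mul_le (hf : IsSubadditiveCocycle T f) (hT : Ergodic T P)
    (hf_meas : ∀ n, Measurable (f n)) (hf1 : ∫⁻ ω, f 1 ω ∂P ≠ ∞) {L c : ℝ≥0∞}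
    (hL : ∀ n : ℕ, n * L ≤ ∫⁻ ω, f n ω ∂P) (hc : c < L) :
    ∀ᵐ ω ∂P, ∀ᶠ n : ℕ in atTop, n * c ≤ f n ω := by
  obtain ⟨c', hcc', hc'L⟩ := exists_between hc
  set F : α → ℝ≥0∞ := fun ω => liminf (fun n : ℕ => f n ω / n) atTop
  have hF : Measurable F := .liminf fun n => (hf_meas n).div_const _
  have hsub : T ⁻¹' {ω | F ω < c'} ≤ᵐ[P] ({ω | F ω < c'} : Set α) := by
    filter_upwards [ae_lt_top (hf_meas 1) hf1] with ω hω hTω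
    exact (hf.liminf_div_le_comp hω.ne).trans_lt hTω
  rcases hT.ae_empty_or_univ_of_preimage_ae_le
    (measurableSet_lt hF measurable_const).nullMeasurableSet hsub with hempty | huniv
  · filter_upwards [measure_eq_zero_iff_ae_notMem.1 (ae_eq_empty.1 hempty)] with ω hω
    have hlt : c < F ω := hcc'.trans_le (not_lt.1 hω)
    filter_upwards [eventually_lt_of_lt_liminf hlt, eventually_ge_atTop 1] with n hn hn1
    rw [mul_comm]
    exact (ENNReal.le_div_iff_mul_le (by simp; omega) (by simp)).1 hn.le
  · refine absurd (hf.le_of_ae_exists_le hT.toMeasurePreserving hf_meas hf1 hL ?_) hc'L.not_ge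
    filter_upwards [eventuallyEq_univ.1 huniv] with ω hω
    obtain ⟨n, hn, hn1⟩ := ((frequently_lt_of_liminf_lt (h := hω)).and_eventually
      (eventually_ge_atTop 1)).exists
    refine ⟨n, hn1, ?_⟩
    rw [mul_comm]
    exact (ENNReal.div_le_iff_le_mul (by simp; omega) (by simp)).1 hn.le

lemma ae_eventually_ofReal_mul_le (hf : IsSubadditiveCocycle T f) (hT : Ergodic T P)
    (hf_meas : ∀ n, Measurable (f n)) (hf1 : ∫⁻ ω, f 1 ω ∂P ≠ ∞) {L c : ℝ}
    (hL : Tendsto (fun n : ℕ => (∫⁻ ω, f n ω ∂P).toReal / n) atTop (𝓝 L)) (hc : c < L) :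
    ∀ᵐ ω ∂P, ∀ᶠ n : ℕ in atTop, ENNReal.ofReal (c * n) ≤ f n ω := by
  rcases le_or_gt c 0 with hc0 | hc0
  · refine Eventually.of_forall fun ω => Eventually.of_forall fun n => ?_
    rw [ENNReal.ofReal_of_nonpos (mul_nonpos_of_nonpos_of_nonneg hc0 n.cast_nonneg)]
    exact zero_le
  obtain ⟨L', -, hL', hlow⟩ := hf.exists_tendsto_lintegral hT.toMeasurePreserving hf_meas hf1
  obtain rfl : L' = L := tendsto_nhds_unique hL' hL
  filter_upwards [hf.ae_eventually_mul_le hT hf_meas hf1 hlow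
    ((ENNReal.ofReal_lt_ofReal_iff (hc0.trans hc)).2 hc)] with ω hω
  filter_upwards [hω] with n hn
  rwa [mul_comm, ENNReal.ofReal_mul n.cast_nonneg, ENNReal.ofReal_natCast]

end IsSubadditiveCocycle

end SubadditiveCocycle

/-! ### Drift -/

lemma tendsto_div_zero_of_tendsto_average {a : ℕ → ℝ} {m : ℝ}
    (h : Tendsto (fun n : ℕ => (∑ i ∈ Finset.range n, a i) / n) atTop (𝓝 m)) :
    Tendsto (fun n : ℕ => a n / n) atTop (𝓝 0) := by
  have hratio : Tendsto (fun n : ℕ => ((n : ℝ) + 1) / n) atTop (𝓝 1) := by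
    simpa [add_comm] using tendsto_add_mul_div_add_mul_atTop_nhds (1 : ℝ) 0 1 one_ne_zero
  have hdiff := ((h.comp (tendsto_add_atTop_nat 1)).mul hratio).sub h
  rw [mul_one, sub_self] at hdiff
  refine hdiff.congr' ?_
  filter_upwards [eventually_gt_atTop 0] with n hn
  simp only [Function.comp, Finset.sum_range_succ]
  push_cast
  field_simp
  ring

lemma tendsto_div_mul_self_div {N : ℕ} (hN : 0 < N) :
    Tendsto (fun n : ℕ => ((n / N * N : ℕ) : ℝ) / n) atTop (𝓝 1) := by
  have hlow : Tendsto (fun n : ℕ => 1 - (N : ℝ) / n) atTop (𝓝 1) := by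
    simpa using tendsto_const_nhds.sub (tendsto_const_div_atTop_nhds_zero_nat (N : ℝ))
  refine tendsto_of_tendsto_of_tendsto_of_le_of_le' hlow tendsto_const_nhds ?_ ?_
  · filter_upwards [eventually_gt_atTop 0] with n hn
    have hlt : (n : ℝ) ≤ (n / N * N : ℕ) + N := by exact_mod_cast (Nat.lt_div_mul_add hN).le
    rw [le_div_iff₀ (by positivity), sub_mul, one_mul, div_mul_cancel₀ _ (by positivity)]
    linarith
  · filter_upwards with n
    exact div_le_one_of_le₀ (by exact_mod_cast Nat.div_mul_le_self n N) n.cast_nonneg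

section Moments

variable {G : Type*} [Group G]

lemma piN_one (p : G → ℝ≥0∞) : piN p 1 = p := by
  funext x
  rw [piN, conv, tsum_eq_single 1]
  · simp [piN]
  · intro y hy
    simp [piN, hy]

lemma IsProb.le_one {G : Type*} {p : G → ℝ≥0∞} (hp : IsProb p) (x : G) : p x ≤ 1 :=
  (ENNReal.le_tsum x).trans_eq hp

lemma IsProb.ne_top {G : Type*} {p : G → ℝ≥0∞} (hp : IsProb p) (x : G) : p x ≠ ∞ :=
  ne_top_of_le_ne_top ENNReal.one_ne_top (hp.le_one x)

variable [MeasurableSpace G] [Countable G] [DiscreteMeasurableSpace G]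
  {p : G → ℝ≥0∞} {P : Measure (ℕ → G)}

lemma lintegral_stepMeasure {G : Type*} [MeasurableSpace G] [DiscreteMeasurableSpace G]
    (p F : G → ℝ≥0∞) : ∫⁻ x, F x ∂stepMeasure p = ∑' x, p x * F x := by
  rw [stepMeasure, lintegral_sum_measure]
  exact tsum_congr fun x => by rw [lintegral_smul_measure, lintegral_dirac, smul_eq_mul]

namespace IsRWMeasure

lemma map_walk_eq (hP : IsRWMeasure p P) (n : ℕ) :
    P.map (fun ω => walk ω n) = stepMeasure (piN p n) := by
  refine Measure.ext_of_singleton fun x => ?_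
  rw [Measure.map_apply (measurable_walk n) (measurableSet_singleton x), stepMeasure_singleton,
    hP.measure_walk_eq]

lemma lintegral_walk (hP : IsRWMeasure p P) (n : ℕ) (F : G → ℝ≥0∞) :
    ∫⁻ ω, F (walk ω n) ∂P = ∑' x, piN p n x * F x := by
  rw [← lintegral_stepMeasure, ← hP.map_walk_eq n,
    lintegral_map (measurable_of_countable F) (measurable_walk n)]

lemma lintegral_head (hP : IsRWMeasure p P) (F : G → ℝ≥0∞) :
    ∫⁻ ω, F (ω 0) ∂P = ∑' x, p x * F x := by
  simpa only [walk_one, piN_one] using hP.lintegral_walk 1 F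

lemma momentSeq_eq (hP : IsRWMeasure p P) {f : G → ℝ} (hf : ∀ x, 0 ≤ f x) (n : ℕ) :
    momentSeq p f n = (∫⁻ ω, ENNReal.ofReal (f (walk ω n)) ∂P).toReal := by
  rw [hP.lintegral_walk n fun x => ENNReal.ofReal (f x), momentSeq, ENNReal.tsum_toReal_eq]
  · exact tsum_congr fun x => by rw [ENNReal.toReal_mul, ENNReal.toReal_ofReal (hf x)]
  · exact fun x => ENNReal.mul_ne_top ((hP.isProb_piN n).ne_top x) ENNReal.ofReal_ne_top

lemma integrable_head (hP : IsRWMeasure p P) {f : G → ℝ} (hf : ∀ x, 0 ≤ f x)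
    (hmom : FiniteFirstMoment p f) : Integrable (fun ω => f (ω 0)) P := by
  have hmeas : Measurable fun ω : ℕ → G => f (ω 0) :=
    (measurable_of_countable f).comp (measurable_pi_apply 0)
  refine (lintegral_ofReal_ne_top_iff_integrable hmeas.aestronglyMeasurable
    (Eventually.of_forall fun ω => hf (ω 0))).1 ?_
  rw [hP.lintegral_head fun x => ENNReal.ofReal (f x)]
  exact hmom

lemma integral_head (hP : IsRWMeasure p P) {f : G → ℝ} (hf : ∀ x, 0 ≤ f x) :
    ∫ ω, f (ω 0) ∂P = momentSeq p f 1 := by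
  have hmeas : Measurable fun ω : ℕ → G => f (ω 0) :=
    (measurable_of_countable f).comp (measurable_pi_apply 0)
  have hnonneg : 0 ≤ᵐ[P] fun ω => f (ω 0) := Eventually.of_forall fun ω => hf (ω 0)
  rw [hP.momentSeq_eq hf, integral_eq_lintegral_of_nonneg_ae hnonneg hmeas.aestronglyMeasurable]
  simp only [walk_one]

lemma ae_eventually_increment_le (hP : IsRWMeasure p P) {f : G → ℝ} (hf : ∀ x, 0 ≤ f x)
    (hmom : FiniteFirstMoment p f) {ε : ℝ} (hε : 0 < ε) :
    ∀ᵐ ω ∂P, ∀ᶠ n : ℕ in atTop, f (ω n) ≤ ε * n := by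
  filter_upwards [hP.ae_tendsto_average f (hP.integrable_head hf hmom)] with ω hω
  filter_upwards [(tendsto_div_zero_of_tendsto_average hω).eventually (gt_mem_nhds hε),
    eventually_gt_atTop 0] with n hn hn0
  exact ((div_lt_iff₀ (by positivity)).1 hn).le

end IsRWMeasure

end Moments

/-- A length function on a group, such as the displacement of a base point under isometries. -/
structure IsLengthFunction {G : Type*} [Group G] (f : G → ℝ) : Prop where
  nonneg : ∀ x, 0 ≤ f x
  one : f 1 = 0
  mul_le : ∀ x y, f (x * y) ≤ f x + f y

namespace IsLengthFunction

variable {G : Type*} [Group G] {f : G → ℝ}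

lemma walk_le_sum (hf : IsLengthFunction f) (ω : ℕ → G) (n : ℕ) :
    f (walk ω n) ≤ ∑ i ∈ Finset.range n, f (ω i) := by
  induction n with
  | zero => simp [walk_zero, hf.one]
  | succ n ih =>
    rw [walk_succ, Finset.sum_range_succ]
    exact (hf.mul_le _ _).trans (add_le_add_left ih _)

lemma walk_add_le (hf : IsLengthFunction f) (ω : ℕ → G) (n m : ℕ) :
    f (walk ω (n + m)) ≤ f (walk ω n) + f (walk (pathShift^[n] ω) m) := by
  rw [walk_add]
  exact hf.mul_le _ _

lemma walk_block_le_sum (hf : IsLengthFunction f) (ω : ℕ → G) (N k : ℕ) :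
    f (walk ω (k * N)) ≤ ∑ j ∈ Finset.range k, f (walk (pathShift^[j * N] ω) N) := by
  induction k with
  | zero => simp [walk_zero, hf.one]
  | succ k ih =>
    rw [add_mul, one_mul, Finset.sum_range_succ]
    exact (hf.walk_add_le _ _ _).trans (add_le_add_left ih _)

lemma walk_le_add_sum_sub (hf : IsLengthFunction f) (ω : ℕ → G) {k n : ℕ} (hkn : k ≤ n) :
    f (walk ω n) ≤
      f (walk ω k) + (∑ i ∈ Finset.range n, f (ω i) - ∑ i ∈ Finset.range k, f (ω i)) := by
  obtain ⟨m, rfl⟩ := Nat.exists_eq_add_of_le hkn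
  have hrest : ∑ i ∈ Finset.range m, f ((pathShift^[k] ω) i) =
      ∑ i ∈ Finset.range (k + m), f (ω i) - ∑ i ∈ Finset.range k, f (ω i) := by
    rw [Finset.sum_range_add, add_sub_cancel_left]
    simp only [pathShift_iterate, add_comm]
  rw [← hrest]
  exact (hf.walk_add_le ω k m).trans (add_le_add_right (hf.walk_le_sum _ m) _)

lemma isSubadditiveCocycle (hf : IsLengthFunction f) :
    IsSubadditiveCocycle pathShift fun n (ω : ℕ → G) => ENNReal.ofReal (f (walk ω n)) where
  zero ω := by rw [walk_zero, hf.one, ENNReal.ofReal_zero]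
  add_le n m ω := by
    rw [← ENNReal.ofReal_add (hf.nonneg _) (hf.nonneg _)]
    exact ENNReal.ofReal_le_ofReal (hf.walk_add_le ω n m)

variable [MeasurableSpace G] [Countable G] [DiscreteMeasurableSpace G]
  {p : G → ℝ≥0∞} {P : Measure (ℕ → G)}

lemma measurable_ofReal_comp_walk (f : G → ℝ) (n : ℕ) :
    Measurable fun ω : ℕ → G => ENNReal.ofReal (f (walk ω n)) :=
  (measurable_of_countable fun x => ENNReal.ofReal (f x)).comp (measurable_walk n)

lemma lintegral_walk_one_ne_top (hP : IsRWMeasure p P) (hmom : FiniteFirstMoment p f) :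
    ∫⁻ ω, ENNReal.ofReal (f (walk ω 1)) ∂P ≠ ∞ := by
  rw [hP.lintegral_walk 1 fun x => ENNReal.ofReal (f x), piN_one]
  exact hmom

lemma exists_hasDrift (hf : IsLengthFunction f) (hP : IsRWMeasure p P)
    (hmom : FiniteFirstMoment p f) : ∃ L : ℝ, 0 ≤ L ∧ HasDrift p f L := by
  obtain ⟨L, hL0, hL, -⟩ := hf.isSubadditiveCocycle.exists_tendsto_lintegral
    hP.measurePreserving_pathShift (measurable_ofReal_comp_walk f)
    (lintegral_walk_one_ne_top hP hmom)
  exact ⟨L, hL0, hL.congr fun n => by rw [hP.momentSeq_eq hf.nonneg]⟩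

lemma ae_eventually_mul_le_walk (hf : IsLengthFunction f) (hP : IsRWMeasure p P)
    (hmom : FiniteFirstMoment p f) {L c : ℝ} (hL : HasDrift p f L) (hc : c < L) :
    ∀ᵐ ω ∂P, ∀ᶠ n : ℕ in atTop, c * n ≤ f (walk ω n) := by
  have := hP.1
  have hlim := hL.congr fun n => by rw [hP.momentSeq_eq hf.nonneg]
  filter_upwards [hf.isSubadditiveCocycle.ae_eventually_ofReal_mul_le hP.ergodic_pathShift
    (measurable_ofReal_comp_walk f) (lintegral_walk_one_ne_top hP hmom) hlim hc] with ω hω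
  filter_upwards [hω] with n hn
  exact (ENNReal.ofReal_le_ofReal_iff (hf.nonneg _)).1 hn

lemma ae_tendsto_block_average (hf : IsLengthFunction f) (hP : IsRWMeasure p P)
    (hmom : FiniteFirstMoment p f) (N : ℕ) :
    ∀ᵐ ω ∂P, Tendsto
      (fun k : ℕ => (∑ j ∈ Finset.range k, f (walk (pathShift^[j * N] ω) N)) / k) atTop
      (𝓝 (momentSeq p f N)) := by
  have hblocks : Measurable fun (ω : ℕ → G) (j : ℕ) => walk (pathShift^[j * N] ω) N :=
    measurable_pi_lambda _ fun j => (measurable_walk N).comp (measurable_pathShift.iterate _)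
  have hmomN : FiniteFirstMoment (piN p N) f := by
    rw [FiniteFirstMoment, ← hP.lintegral_walk N fun x => ENNReal.ofReal (f x)]
    exact hf.isSubadditiveCocycle.lintegral_ne_top hP.measurePreserving_pathShift
      (measurable_ofReal_comp_walk f) (lintegral_walk_one_ne_top hP hmom) N
  have hPN := hP.map_block N
  have hmean : momentSeq (piN p N) f 1 = momentSeq p f N := by
    rw [momentSeq, piN_one, momentSeq]
  have hslln := hPN.ae_tendsto_average f (hPN.integrable_head hf.nonneg hmomN)
  rw [hPN.integral_head hf.nonneg, hmean] at hslln
  exact ae_of_ae_map hblocks.aemeasurable hslln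

/- Cut the walk into blocks of a length `N` whose mean displacement per unit of time is already
below `c`; the incomplete last block contributes `o(n)`. -/
lemma ae_eventually_walk_le_mul (hf : IsLengthFunction f) (hP : IsRWMeasure p P)
    (hmom : FiniteFirstMoment p f) {L c : ℝ} (hL : HasDrift p f L) (hc : L < c) :
    ∀ᵐ ω ∂P, ∀ᶠ n : ℕ in atTop, f (walk ω n) ≤ c * n := by
  obtain ⟨N, hN, hN0⟩ := ((hL.eventually (gt_mem_nhds hc)).and (eventually_gt_atTop 0)).exists
  filter_upwards [hf.ae_tendsto_block_average hP hmom N,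
    hP.ae_tendsto_average f (hP.integrable_head hf.nonneg hmom)] with ω hblock hstep
  set B : ℕ → ℝ := fun k => ∑ j ∈ Finset.range k, f (walk (pathShift^[j * N] ω) N)
  set S : ℕ → ℝ := fun n => ∑ i ∈ Finset.range n, f (ω i)
  have hdiv : Tendsto (fun n : ℕ => n / N) atTop atTop := Nat.tendsto_div_const_atTop hN0.ne'
  have hmul : Tendsto (fun n : ℕ => n / N * N) atTop atTop := hdiv.atTop_mul_const' hN0
  have hratio := tendsto_div_mul_self_div hN0
  have hbound : Tendsto (fun n : ℕ => (B (n / N) / (n / N : ℕ) / N + 0) *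
      (((n / N * N : ℕ) : ℝ) / n) + (S n / n - S (n / N * N) / (n / N * N : ℕ) *
      (((n / N * N : ℕ) : ℝ) / n))) atTop (𝓝 (momentSeq p f N / N)) := by
    have := ((((hblock.comp hdiv).div_const (N : ℝ)).add_const 0).mul hratio).add
      (hstep.sub ((hstep.comp hmul).mul hratio))
    simpa using this
  filter_upwards [hbound.eventually (gt_mem_nhds hN), eventually_ge_atTop N] with n hn hnN
  have hn0 : 0 < n := hN0.trans_le hnN
  have hk0 : 0 < n / N := Nat.div_pos hnN hN0
  rw [← div_le_iff₀ (by positivity)]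
  refine le_trans ?_ hn.le
  calc f (walk ω n) / n ≤ (B (n / N) + (S n - S (n / N * N))) / n := by
        gcongr
        exact (hf.walk_le_add_sum_sub ω (Nat.div_mul_le_self n N)).trans
          (add_le_add_left (hf.walk_block_le_sum ω N _) _)
    _ = _ := by
        push_cast
        field_simp
        ring

end IsLengthFunction

/-! ### Entropy -/

/-- The negative logarithm with values in `[0, ∞]`, so that the weight `0` gets the value `∞`; it
is the information content of an event of probability `t ≤ 1`. -/
def negLog (t : ℝ≥0∞) : ℝ≥0∞ := if t = 0 then ∞ else ENNReal.ofReal (-Real.log t.toReal)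

lemma negLog_one : negLog 1 = 0 := by simp [negLog]

lemma negLog_le_negLog {s t : ℝ≥0∞} (hst : s ≤ t) (ht : t ≠ ∞) : negLog t ≤ negLog s := by
  by_cases hs0 : s = 0
  · simp [negLog, hs0]
  have ht0 : t ≠ 0 := fun h => hs0 (le_zero_iff.1 (h ▸ hst))
  rw [negLog, negLog, if_neg hs0, if_neg ht0]
  exact ENNReal.ofReal_le_ofReal <| neg_le_neg <| Real.log_le_log
    (ENNReal.toReal_pos hs0 (ne_top_of_le_ne_top ht hst)) (ENNReal.toReal_mono ht hst)

lemma negLog_mul_le {s t : ℝ≥0∞} (hs : s ≠ ∞) (ht : t ≠ ∞) :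
    negLog (s * t) ≤ negLog s + negLog t := by
  by_cases hs0 : s = 0
  · simp [negLog, hs0]
  by_cases ht0 : t = 0
  · simp [negLog, ht0]
  rw [negLog, negLog, negLog, if_neg (mul_ne_zero hs0 ht0), if_neg hs0, if_neg ht0,
    ENNReal.toReal_mul, Real.log_mul (ENNReal.toReal_ne_zero.2 ⟨hs0, hs⟩)
      (ENNReal.toReal_ne_zero.2 ⟨ht0, ht⟩), neg_add]
  exact ENNReal.ofReal_add_le

lemma mul_ofReal_neg_log {t : ℝ≥0∞} (ht : t ≠ ∞) :
    t * ENNReal.ofReal (-Real.log t.toReal) = ENNReal.ofReal (Real.negMulLog t.toReal) := by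
  rw [Real.negMulLog, neg_mul_comm, ENNReal.ofReal_mul ENNReal.toReal_nonneg,
    ENNReal.ofReal_toReal ht]

lemma mul_negLog {t : ℝ≥0∞} (ht : t ≠ ∞) :
    t * negLog t = ENNReal.ofReal (Real.negMulLog t.toReal) := by
  rcases eq_or_ne t 0 with rfl | h0
  · simp
  · rw [negLog, if_neg h0, mul_ofReal_neg_log ht]

lemma toReal_le_one {t : ℝ≥0∞} (ht : t ≤ 1) : t.toReal ≤ 1 :=
  ENNReal.toReal_le_of_le_ofReal zero_le_one (ht.trans_eq ENNReal.ofReal_one.symm)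

lemma le_ofReal_exp_neg_of_ofReal_le_negLog {t : ℝ≥0∞} (ht : t ≤ 1) {a : ℝ}
    (h : ENNReal.ofReal a ≤ negLog t) : t ≤ ENNReal.ofReal (Real.exp (-a)) := by
  rcases eq_or_ne t 0 with rfl | h0
  · exact zero_le
  have ht' : t ≠ ∞ := ne_top_of_le_ne_top ENNReal.one_ne_top ht
  have hpos := ENNReal.toReal_pos h0 ht'
  have hlog := Real.log_nonpos hpos.le (toReal_le_one ht)
  rw [negLog, if_neg h0, ENNReal.ofReal_le_ofReal_iff (by linarith)] at h
  rw [ENNReal.le_ofReal_iff_toReal_le ht' (Real.exp_nonneg _), ← Real.log_le_iff_le_exp hpos]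
  linarith

/- Gibbs' inequality for a single weight: `-t log t` is the concave conjugate of the exponential. -/
lemma negMulLog_le_mul_add_exp_neg {t : ℝ} (ht : 0 ≤ t) (a : ℝ) :
    Real.negMulLog t ≤ a * t + Real.exp (-a) := by
  rcases ht.eq_or_lt with rfl | ht
  · simp [Real.exp_nonneg]
  have hlog : Real.log (Real.exp (-a) / t) ≤ Real.exp (-a) / t - 1 :=
    Real.log_le_sub_one_of_pos (by positivity)
  rw [Real.log_div (Real.exp_pos _).ne' ht.ne', Real.log_exp] at hlog
  have hmul : t * (-a - Real.log t) ≤ Real.exp (-a) - t :=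
    (mul_le_mul_of_nonneg_left hlog ht.le).trans_eq (by field_simp)
  rw [Real.negMulLog]
  linarith

section Growth

variable {G : Type*} {f : G → ℝ}

lemma tsum_indicator_const_le_of_ncard_le {s : Set G} (hs : s.Finite) {a b : ℝ}
    (hb : 0 ≤ b) (hcard : (s.ncard : ℝ) ≤ a) :
    ∑' x, s.indicator (fun _ => ENNReal.ofReal b) x ≤ ENNReal.ofReal (a * b) := by
  have hencard : (s.encard : ℝ≥0∞) = ENNReal.ofReal s.ncard := by
    rw [← hs.cast_ncard_eq, ENNReal.ofReal_natCast]
    rfl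
  rw [← tsum_subtype, ENNReal.tsum_set_const, hencard,
    ← ENNReal.ofReal_mul (Nat.cast_nonneg _)]
  exact ENNReal.ofReal_le_ofReal (mul_le_mul_of_nonneg_right hcard hb)

lemma FinExpGrowth.exists_tsum_exp_neg_ne_top (hf : ∀ x, 0 ≤ f x) (hg : FinExpGrowth f) :
    ∃ K : ℝ, 0 ≤ K ∧ ∑' x, ENNReal.ofReal (Real.exp (-(K * f x))) ≠ ∞ := by
  obtain ⟨c, hc, hg⟩ := hg
  refine ⟨c + 1, by linarith, ?_⟩
  have hlayer : ∀ x, ENNReal.ofReal (Real.exp (-((c + 1) * f x))) ≤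
      ∑' k : ℕ, {x : G | f x < k + 1}.indicator
        (fun _ => ENNReal.ofReal (Real.exp (-((c + 1) * k)))) x := by
    intro x
    refine le_trans ?_ (ENNReal.le_tsum ⌊f x⌋₊)
    rw [indicator_of_mem (s := {y : G | f y < (⌊f x⌋₊ : ℝ) + 1}) (Nat.lt_floor_add_one (f x))]
    gcongr
    exact Nat.floor_le (hf x)
  have hgeom : ∀ k : ℕ, ∑' x, {x : G | f x < k + 1}.indicator
      (fun _ => ENNReal.ofReal (Real.exp (-((c + 1) * k)))) x ≤
        ENNReal.ofReal (c * Real.exp c * Real.exp (-1) ^ k) := by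
    intro k
    obtain ⟨hfin, hcard⟩ := hg (k + 1) (by positivity)
    refine (tsum_indicator_const_le_of_ncard_le hfin (Real.exp_nonneg _) hcard).trans_eq ?_
    rw [mul_assoc, mul_assoc, ← Real.exp_nat_mul, ← Real.exp_add, ← Real.exp_add]
    ring_nf
  have hsum : Summable fun k : ℕ => c * Real.exp c * Real.exp (-1) ^ k :=
    (summable_geometric_of_lt_one (Real.exp_nonneg _)
      (Real.exp_lt_one_iff.2 neg_one_lt_zero)).mul_left _
  refine ne_top_of_le_ne_top ?_ (ENNReal.tsum_le_tsum hlayer)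
  rw [ENNReal.tsum_comm]
  refine ne_top_of_le_ne_top ?_ (ENNReal.tsum_le_tsum hgeom)
  rw [← ENNReal.ofReal_tsum_of_nonneg (fun k => by positivity) hsum]
  exact ENNReal.ofReal_ne_top

lemma IsProb.tsum_negMulLog_ne_top {p : G → ℝ≥0∞} (hp : IsProb p) (hf : ∀ x, 0 ≤ f x)
    (hg : FinExpGrowth f) (hmom : FiniteFirstMoment p f) :
    ∑' x, ENNReal.ofReal (Real.negMulLog (p x).toReal) ≠ ∞ := by
  obtain ⟨K, hK, hs⟩ := hg.exists_tsum_exp_neg_ne_top hf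
  have hle : ∀ x, ENNReal.ofReal (Real.negMulLog (p x).toReal) ≤
      ENNReal.ofReal K * (p x * ENNReal.ofReal (f x)) +
        ENNReal.ofReal (Real.exp (-(K * f x))) := by
    intro x
    refine (ENNReal.ofReal_le_ofReal (negMulLog_le_mul_add_exp_neg ENNReal.toReal_nonneg
      (K * f x))).trans (ENNReal.ofReal_add_le.trans ?_)
    rw [ENNReal.ofReal_mul (mul_nonneg hK (hf x)), ENNReal.ofReal_mul hK,
      ENNReal.ofReal_toReal (hp.ne_top x), mul_assoc, mul_comm (p x)]
  refine ne_top_of_le_ne_top ?_ (ENNReal.tsum_le_tsum hle)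
  rw [ENNReal.tsum_add, ENNReal.tsum_mul_left]
  exact ENNReal.add_ne_top.2 ⟨ENNReal.mul_ne_top ENNReal.ofReal_ne_top hmom, hs⟩

end Growth

namespace IsRWMeasure

variable {G : Type*} [Group G] [MeasurableSpace G] [Countable G] [DiscreteMeasurableSpace G]
  {p : G → ℝ≥0∞} {P : Measure (ℕ → G)}

lemma piN_mul_piN_le (hP : IsRWMeasure p P) (n m : ℕ) (x y : G) :
    piN p n x * piN p m y ≤ piN p (n + m) (x * y) := by
  rw [← hP.measure_walk_eq m y, ← hP.measure_walk_inter_pathShift_iterate n x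
    (measurable_walk m (measurableSet_singleton y)), ← hP.measure_walk_eq (n + m)]
  refine measure_mono fun ω h => ?_
  obtain ⟨hx, hy⟩ : walk ω n = x ∧ walk (pathShift^[n] ω) m = y := h
  change walk ω (n + m) = x * y
  rw [walk_add, hx, hy]

lemma isSubadditiveCocycle_negLog (hP : IsRWMeasure p P) :
    IsSubadditiveCocycle pathShift fun n ω => negLog (piN p n (walk ω n)) where
  zero ω := by simp [walk_zero, piN, negLog_one]
  add_le n m ω := by
    rw [walk_add]
    exact (negLog_le_negLog (hP.piN_mul_piN_le n m _ _) ((hP.isProb_piN _).ne_top _)).trans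
      (negLog_mul_le ((hP.isProb_piN _).ne_top _) ((hP.isProb_piN _).ne_top _))

lemma measurable_negLog_piN_walk (p : G → ℝ≥0∞) (n : ℕ) :
    Measurable fun ω : ℕ → G => negLog (piN p n (walk ω n)) :=
  (measurable_of_countable fun x => negLog (piN p n x)).comp (measurable_walk n)

lemma lintegral_negLog_piN_walk (hP : IsRWMeasure p P) (n : ℕ) :
    ∫⁻ ω, negLog (piN p n (walk ω n)) ∂P =
      ∑' x, ENNReal.ofReal (Real.negMulLog (piN p n x).toReal) := by
  rw [hP.lintegral_walk n fun x => negLog (piN p n x)]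
  exact tsum_congr fun x => mul_negLog ((hP.isProb_piN n).ne_top x)

lemma entropySeq_eq (hP : IsRWMeasure p P) (n : ℕ) :
    entropySeq p n = (∫⁻ ω, negLog (piN p n (walk ω n)) ∂P).toReal := by
  rw [hP.lintegral_negLog_piN_walk, entropySeq,
    ENNReal.tsum_toReal_eq fun _ => ENNReal.ofReal_ne_top]
  exact tsum_congr fun x => (ENNReal.toReal_ofReal (Real.negMulLog_nonneg ENNReal.toReal_nonneg
    (toReal_le_one ((hP.isProb_piN n).le_one x)))).symm

/- The lower half of the Shannon–McMillan–Breiman theorem for random walks, obtained from Kingman's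
theorem for the cocycle `-log π_n(w_n)`. -/
lemma ae_eventually_piN_walk_le_exp (hP : IsRWMeasure p P)
    (hfin : ∑' x, ENNReal.ofReal (Real.negMulLog (p x).toReal) ≠ ∞) {h c : ℝ}
    (hh : HasEntropy p h) (hc : c < h) :
    ∀ᵐ ω ∂P, ∀ᶠ n : ℕ in atTop,
      piN p n (walk ω n) ≤ ENNReal.ofReal (Real.exp (-(c * n))) := by
  have := hP.1
  have hone : ∫⁻ ω, negLog (piN p 1 (walk ω 1)) ∂P ≠ ∞ := by
    rwa [hP.lintegral_negLog_piN_walk, piN_one]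
  have hlim : Tendsto (fun n : ℕ => (∫⁻ ω, negLog (piN p n (walk ω n)) ∂P).toReal / n)
      atTop (𝓝 h) := hh.congr fun n => by rw [hP.entropySeq_eq]
  filter_upwards [hP.isSubadditiveCocycle_negLog.ae_eventually_ofReal_mul_le hP.ergodic_pathShift
    (measurable_negLog_piN_walk p) hone hlim hc] with ω hω
  filter_upwards [hω] with n hn
  exact le_ofReal_exp_neg_of_ofReal_le_negLog ((hP.isProb_piN n).le_one _) hn

end IsRWMeasure

/-! ### Densities of translated harmonic measures -/

section RelativeDensity

variable {Y : Type*} [MeasurableSpace Y] {μ ν : Measure Y} {a : ℝ≥0∞}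

lemma absolutelyContinuous_of_smul_le (hle : a • μ ≤ ν) (ha : a ≠ 0) : μ ≪ ν :=
  (Measure.AbsolutelyContinuous.rfl.smul_right ha).trans (Measure.absolutelyContinuous_of_le hle)

lemma ae_mul_rnDeriv_le_one [IsFiniteMeasure μ] [SigmaFinite ν] (hle : a • μ ≤ ν) (ha : a ≠ ∞) :
    ∀ᵐ y ∂ν, a * μ.rnDeriv ν y ≤ 1 := by
  filter_upwards [Measure.rnDeriv_le_one_of_le hle, Measure.rnDeriv_smul_left_of_ne_top μ ν ha]
    with y hy hsmul
  simpa only [hsmul, Pi.smul_apply, smul_eq_mul, Pi.one_apply] using hy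

lemma ae_log_rnDeriv_le [IsFiniteMeasure μ] [SigmaFinite ν] (hle : a • μ ≤ ν) (ha0 : a ≠ 0)
    (ha : a ≠ ∞) : ∀ᵐ y ∂μ, 0 < (μ.rnDeriv ν y).toReal ∧
      Real.log (μ.rnDeriv ν y).toReal ≤ -Real.log a.toReal := by
  have hac := absolutelyContinuous_of_smul_le hle ha0
  filter_upwards [hac.ae_le (ae_mul_rnDeriv_le_one hle ha), hac.ae_le (Measure.rnDeriv_lt_top μ ν),
    Measure.rnDeriv_pos hac] with y hy htop hpos
  have ha' := ENNReal.toReal_pos ha0 ha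
  have hD := ENNReal.toReal_pos hpos.ne' htop.ne
  have hlog := Real.log_nonpos ENNReal.toReal_nonneg (toReal_le_one hy)
  rw [ENNReal.toReal_mul, Real.log_mul ha'.ne' hD.ne'] at hlog
  exact ⟨hD, by linarith⟩

lemma lintegral_inv_rnDeriv_le [SigmaFinite μ] [SigmaFinite ν] (hac : μ ≪ ν) :
    ∫⁻ y, (μ.rnDeriv ν y)⁻¹ ∂μ ≤ ν univ := by
  have hmeas : AEMeasurable (fun y => (μ.rnDeriv ν y)⁻¹) ν :=
    (Measure.measurable_rnDeriv μ ν).inv.aemeasurable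
  rw [← lintegral_rnDeriv_mul hac hmeas]
  exact (lintegral_mono fun y => ENNReal.mul_inv_le_one _).trans_eq (by simp)

lemma lintegral_enorm_log_rnDeriv_le [IsProbabilityMeasure μ] [IsProbabilityMeasure ν]
    (hle : a • μ ≤ ν) (ha0 : a ≠ 0) :
    ∫⁻ y, ‖Real.log (μ.rnDeriv ν y).toReal‖ₑ ∂μ ≤ ENNReal.ofReal (-Real.log a.toReal) + 1 := by
  have ha1 : a ≤ 1 := by simpa using hle univ
  have hlog : 0 ≤ -Real.log a.toReal :=
    neg_nonneg.2 (Real.log_nonpos ENNReal.toReal_nonneg (toReal_le_one ha1))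
  have hbound : ∀ᵐ y ∂μ, ‖Real.log (μ.rnDeriv ν y).toReal‖ₑ ≤
      ENNReal.ofReal (-Real.log a.toReal) + (μ.rnDeriv ν y)⁻¹ := by
    filter_upwards [ae_log_rnDeriv_le hle ha0 (ne_top_of_le_ne_top ENNReal.one_ne_top ha1)]
      with y ⟨hpos, hy⟩
    have hinv : (μ.rnDeriv ν y)⁻¹ = ENNReal.ofReal (μ.rnDeriv ν y).toReal⁻¹ := by
      rw [ENNReal.ofReal_inv_of_pos hpos,
        ENNReal.ofReal_toReal (ENNReal.toReal_pos_iff.1 hpos).2.ne]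
    have hneg := Real.log_le_sub_one_of_pos (inv_pos.2 hpos)
    rw [Real.log_inv] at hneg
    rw [hinv, ← ENNReal.ofReal_add hlog (by positivity), ← ofReal_norm, Real.norm_eq_abs]
    refine ENNReal.ofReal_le_ofReal (abs_le.2 ⟨?_, ?_⟩) <;> linarith [inv_pos.2 hpos]
  refine (lintegral_mono_ae hbound).trans ?_
  rw [lintegral_add_left measurable_const]
  exact add_le_add (by simp) ((lintegral_inv_rnDeriv_le
    (absolutelyContinuous_of_smul_le hle ha0)).trans_eq measure_univ)

end RelativeDensity

section Translate

variable {G Y : Type*} [Group G] [MeasurableSpace Y] [MulAction G Y]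

/-- The translate `xν` of a measure by a group element. -/
def translate (ν : Measure Y) (x : G) : Measure Y := ν.map (x • ·)

/-- The density `d(xν)/dν` of a translate. -/
def translateDensity (ν : Measure Y) (x : G) : Y → ℝ≥0∞ := (translate ν x).rnDeriv ν

/-- The relative entropy `∫ log (d(xν)/dν) d(xν)`, whose average over the steps of the walk is the
differential entropy. -/
def translateEntropy (ν : Measure Y) (x : G) : ℝ :=
  ∫ y, Real.log (translateDensity ν x y).toReal ∂translate ν x

variable {ν : Measure Y}

instance [IsFiniteMeasure ν] (x : G) : IsFiniteMeasure (translate ν x) :=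
  inferInstanceAs (IsFiniteMeasure (ν.map _))

lemma measurable_translateDensity (ν : Measure Y) (x : G) : Measurable (translateDensity ν x) :=
  Measure.measurable_rnDeriv _ _

lemma translateDensity_one [SigmaFinite ν] : translateDensity ν (1 : G) =ᵐ[ν] 1 := by
  have hone : translate ν (1 : G) = ν := by simp [translate]
  rw [translateDensity, hone]
  exact Measure.rnDeriv_self ν

variable [MeasurableConstSMul G Y]

instance [IsProbabilityMeasure ν] (x : G) : IsProbabilityMeasure (translate ν x) :=
  Measure.isProbabilityMeasure_map (measurable_const_smul x).aemeasurable

lemma translate_mul (ν : Measure Y) (g x : G) :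
    translate ν (g * x) = (translate ν x).map (g • ·) := by
  rw [translate, translate, Measure.map_map (measurable_const_smul g) (measurable_const_smul x)]
  congr 1
  funext y
  exact mul_smul g x y

lemma map_smul_withDensity (g : G) {D : Y → ℝ≥0∞} (hD : Measurable D) :
    (ν.withDensity D).map (g • ·) = (translate ν g).withDensity fun y => D (g⁻¹ • y) := by
  have hD' : Measurable fun y => D (g⁻¹ • y) := hD.comp (measurable_const_smul g⁻¹)
  ext E hE
  rw [Measure.map_apply (measurable_const_smul g) hE,
    withDensity_apply _ (measurable_const_smul g hE), withDensity_apply _ hE, translate,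
    setLIntegral_map hE hD' (measurable_const_smul g)]
  simp only [inv_smul_smul]

lemma translateDensity_mul [IsFiniteMeasure ν] {g x : G} (hg : translate ν g ≪ ν)
    (hx : translate ν x ≪ ν) :
    translateDensity ν (g * x) =ᵐ[ν]
      fun y => translateDensity ν g y * translateDensity ν x (g⁻¹ • y) := by
  have hx_meas : Measurable fun y => translateDensity ν x (g⁻¹ • y) :=
    (measurable_translateDensity ν x).comp (measurable_const_smul g⁻¹)
  have hdens : translate ν (g * x) =
      ν.withDensity (translateDensity ν g * fun y => translateDensity ν x (g⁻¹ • y)) := by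
    rw [withDensity_mul ν (measurable_translateDensity ν g) hx_meas, translate_mul,
      ← Measure.withDensity_rnDeriv_eq _ _ hx, map_smul_withDensity g
        (Measure.measurable_rnDeriv _ _), translateDensity, Measure.withDensity_rnDeriv_eq _ _ hg]
    rfl
  rw [translateDensity, hdens]
  exact Measure.rnDeriv_withDensity ν ((measurable_translateDensity ν g).mul hx_meas)

end Translate

/-! ### Boundary maps -/

lemma ae_eq_prod_of_ae_succ_eq_mul {Ω M : Type*} [MeasurableSpace Ω] {P : Measure Ω} {T : Ω → Ω}
    [CommMonoid M] (hT : Measure.QuasiMeasurePreserving T P P) {F : ℕ → Ω → M} {a : Ω → M}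
    (hzero : ∀ᵐ ω ∂P, F 0 ω = 1) (hsucc : ∀ᵐ ω ∂P, ∀ n, F (n + 1) ω = a ω * F n (T ω)) :
    ∀ᵐ ω ∂P, ∀ n, F n ω = ∏ i ∈ Finset.range n, a (T^[i] ω) := by
  rw [ae_all_iff]
  intro n
  induction n with
  | zero => simpa using hzero
  | succ n ih =>
    filter_upwards [hsucc, hT.ae ih] with ω hω hTω
    rw [hω n, hTω, Finset.prod_range_succ', mul_comm]
    rfl

lemma isSubadditiveCocycle_sum {Ω : Type*} (T : Ω → Ω) (ψ : Ω → ℝ≥0∞) :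
    IsSubadditiveCocycle T fun n ω => ∑ i ∈ Finset.range n, ψ (T^[i] ω) where
  zero _ := by simp
  add_le n m _ := by
    rw [Finset.sum_range_add]
    simp only [← Function.iterate_add_apply, add_comm, le_refl]

section BirkhoffSum

variable {Ω : Type*} [MeasurableSpace Ω] {P : Measure Ω} {T : Ω → Ω} {ψ : Ω → ℝ≥0∞}

lemma lintegral_sum_iterate (hT : MeasurePreserving T P P) (hψ : Measurable ψ) (n : ℕ) :
    ∫⁻ ω, ∑ i ∈ Finset.range n, ψ (T^[i] ω) ∂P = n * ∫⁻ ω, ψ ω ∂P := by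
  rw [lintegral_finsetSum _ fun i _ => by exact hψ.comp (hT.measurable.iterate i),
    Finset.sum_congr rfl fun i _ => (hT.iterate i).lintegral_comp hψ, Finset.sum_const,
    Finset.card_range, nsmul_eq_mul]

lemma ae_eventually_ofReal_mul_le_sum_iterate [IsProbabilityMeasure P] (hT : Ergodic T P)
    (hψ : Measurable ψ) (hfin : ∫⁻ ω, ψ ω ∂P ≠ ∞) {c : ℝ} (hc : c < (∫⁻ ω, ψ ω ∂P).toReal) :
    ∀ᵐ ω ∂P, ∀ᶠ n : ℕ in atTop,
      ENNReal.ofReal (c * n) ≤ ∑ i ∈ Finset.range n, ψ (T^[i] ω) := by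
  have hT' := hT.toMeasurePreserving
  refine (isSubadditiveCocycle_sum T ψ).ae_eventually_ofReal_mul_le hT
    (fun n => Finset.measurable_fun_sum _ fun i _ => hψ.comp (hT'.measurable.iterate i))
    (by simpa using hfin) ?_ hc
  refine tendsto_const_nhds.congr' ?_
  filter_upwards [eventually_ne_atTop 0] with n hn
  rw [lintegral_sum_iterate hT' hψ, ENNReal.toReal_mul, ENNReal.toReal_natCast,
    mul_div_cancel_left₀ _ (Nat.cast_ne_zero.2 hn)]

end BirkhoffSum

lemma sum_restrict_head {G : Type*} [MeasurableSpace G] [Countable G]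
    [DiscreteMeasurableSpace G] (P : Measure (ℕ → G)) :
    Measure.sum (fun x => P.restrict ((fun ω => ω 0) ⁻¹' {x})) = P := by
  have hdisj : Pairwise (Function.onFun Disjoint fun x => (fun ω : ℕ → G => ω 0) ⁻¹' {x}) :=
    fun x y hxy => Disjoint.preimage _ (disjoint_singleton.2 hxy)
  rw [← Measure.restrict_iUnion hdisj fun x => measurable_pi_apply 0 (measurableSet_singleton x),
    ← preimage_iUnion, iUnion_of_singleton, preimage_univ, Measure.restrict_univ]

section BoundaryMap

variable {G Y : Type*} [Group G] [MeasurableSpace G] [MeasurableSpace Y] [MulAction G Y]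
  {p : G → ℝ≥0∞} {P : Measure (ℕ → G)} {b : (ℕ → G) → Y}

/-- An equivariant boundary map of a random walk: `b(x₁, x₂, …) = x₁ • b(x₂, x₃, …)` for almost
every sequence of increments. Its law under `P` is then a stationary measure. -/
structure IsBoundaryMap (P : Measure (ℕ → G)) (b : (ℕ → G) → Y) : Prop where
  measurable : Measurable b
  ae_eq_smul : ∀ᵐ ω ∂P, b ω = ω 0 • b (pathShift ω)

/-- The logarithm `log (d(x₁ν)/dν)(b(ω))` of the density of the first step at the boundary point,
where `ν` is the law of `b`. Its Birkhoff sums are the logarithmic densities of the walk. -/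
def logStepDensity (P : Measure (ℕ → G)) (b : (ℕ → G) → Y) (ω : ℕ → G) : ℝ :=
  Real.log (translateDensity (P.map b) (ω 0) (b ω)).toReal

variable [Countable G] [DiscreteMeasurableSpace G]

namespace IsRWMeasure

/- One half of Birkhoff's theorem for a function dominated by an integrable function `φ` of the
first step: apply Kingman's lower bound to the nonnegative cocycle of sums of `φ(ω 0) - g` and the
strong law of large numbers to the sums of `φ`. -/
lemma ae_eventually_sum_le_of_le_head (hP : IsRWMeasure p P) {g : (ℕ → G) → ℝ} {φ : G → ℝ}
    (hgm : Measurable g) (hg : Integrable g P) (hφ : Integrable (fun ω => φ (ω 0)) P)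
    (hle : ∀ᵐ ω ∂P, g ω ≤ φ (ω 0)) {c : ℝ} (hc : ∫ ω, g ω ∂P < c) :
    ∀ᵐ ω ∂P, ∀ᶠ n : ℕ in atTop, ∑ i ∈ Finset.range n, g (pathShift^[i] ω) ≤ c * n := by
  have := hP.1
  set A := ∫ ω, g ω ∂P
  set m := ∫ ω, φ (ω 0) ∂P
  set ψ : (ℕ → G) → ℝ≥0∞ := fun ω => ENNReal.ofReal (φ (ω 0) - g ω)
  have hψm : Measurable ψ := (((measurable_of_countable φ).comp
    (measurable_pi_apply 0)).sub hgm).ennreal_ofReal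
  have hsub : ∀ᵐ ω ∂P, 0 ≤ φ (ω 0) - g ω := hle.mono fun _ => sub_nonneg.2
  have hψ : ∫⁻ ω, ψ ω ∂P = ENNReal.ofReal (m - A) :=
    (ofReal_integral_eq_lintegral_ofReal (hφ.sub hg) hsub).symm.trans
      (congrArg ENNReal.ofReal (integral_sub hφ hg))
  have hT := hP.measurePreserving_pathShift
  have hkingman := ae_eventually_ofReal_mul_le_sum_iterate hP.ergodic_pathShift hψm
    (hψ ▸ ENNReal.ofReal_ne_top) (c := m - A - (c - A) / 2) (by
      rw [hψ]
      exact (show _ < m - A by linarith).trans_le (Real.le_coe_toNNReal _))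
  filter_upwards [hkingman, hP.ae_tendsto_average φ hφ,
    ae_all_iff.2 fun i => (hT.iterate i).quasiMeasurePreserving.ae hsub] with ω hψω hφω hω
  filter_upwards [hψω, hφω.eventually (gt_mem_nhds (show m < m + (c - A) / 2 by linarith)),
    eventually_gt_atTop 0] with n hn hφn hn0
  have hφn := (div_lt_iff₀ (by positivity)).1 hφn
  rw [← ENNReal.ofReal_sum_of_nonneg fun i _ => hω i,
    ENNReal.ofReal_le_ofReal_iff (Finset.sum_nonneg fun i _ => hω i), Finset.sum_sub_distrib] at hn
  simp only [pathShift_iterate, zero_add] at hn hφn ⊢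
  linarith

lemma ae_piN_walk_ne_zero (hP : IsRWMeasure p P) (n : ℕ) : ∀ᵐ ω ∂P, piN p n (walk ω n) ≠ 0 := by
  have hx : ∀ x, ∀ᵐ ω ∂P, walk ω n = x → piN p n x ≠ 0 := by
    intro x
    rcases eq_or_ne (piN p n x) 0 with h0 | h0
    · filter_upwards [measure_eq_zero_iff_ae_notMem.1 ((hP.measure_walk_eq n x).trans h0)]
        with ω hω heq using absurd heq hω
    · exact Eventually.of_forall fun _ _ => h0
  filter_upwards [ae_all_iff.2 hx] with ω hω using hω _ rfl

end IsRWMeasure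

namespace IsBoundaryMap

lemma ae_eq_walk_smul (hb : IsBoundaryMap P b) (hP : IsRWMeasure p P) (n : ℕ) :
    ∀ᵐ ω ∂P, b ω = walk ω n • b (pathShift^[n] ω) := by
  induction n with
  | zero => simp [walk_zero]
  | succ n ih =>
    filter_upwards [hb.ae_eq_smul, hP.measurePreserving_pathShift.quasiMeasurePreserving.ae ih]
      with ω hω hshift
    rw [walk_succ', mul_smul, Function.iterate_succ_apply, ← hshift, ← hω]

lemma measurable_logStepDensity (hb : IsBoundaryMap P b) : Measurable (logStepDensity P b) := by
  have hpair : Measurable fun q : G × Y => Real.log (translateDensity (P.map b) q.1 q.2).toReal :=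
    measurable_from_prod_countable_right fun x =>
      Real.measurable_log.comp (measurable_translateDensity _ x).ennreal_toReal
  exact hpair.comp ((measurable_pi_apply 0).prodMk hb.measurable)

variable [MeasurableConstSMul G Y]

lemma measure_walk_inter (hb : IsBoundaryMap P b) (hP : IsRWMeasure p P) (n : ℕ) (x : G)
    {E : Set Y} (hE : MeasurableSet E) :
    P ((fun ω => walk ω n) ⁻¹' {x} ∩ b ⁻¹' E) = piN p n x * translate (P.map b) x E := by
  have hE' := measurable_const_smul x hE
  rw [translate, Measure.map_apply (measurable_const_smul x) hE,
    Measure.map_apply hb.measurable hE', ← hP.measure_walk_inter_pathShift_iterate n x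
      (hb.measurable hE')]
  refine measure_congr ?_
  filter_upwards [hb.ae_eq_walk_smul hP n] with ω hω
  refine propext (and_congr_right fun hx : walk ω n = x => ?_)
  change b ω ∈ E ↔ x • b (pathShift^[n] ω) ∈ E
  rw [hω, hx]

lemma map_restrict_walk (hb : IsBoundaryMap P b) (hP : IsRWMeasure p P) (n : ℕ) (x : G) :
    (P.restrict ((fun ω => walk ω n) ⁻¹' {x})).map b = piN p n x • translate (P.map b) x := by
  ext E hE
  rw [Measure.map_apply hb.measurable hE, Measure.restrict_apply (hb.measurable hE), inter_comm,
    hb.measure_walk_inter hP n x hE, Measure.smul_apply, smul_eq_mul]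

lemma smul_translate_le (hb : IsBoundaryMap P b) (hP : IsRWMeasure p P) (n : ℕ) (x : G) :
    piN p n x • translate (P.map b) x ≤ P.map b :=
  (hb.map_restrict_walk hP n x).symm.trans_le
    (Measure.map_mono Measure.restrict_le_self hb.measurable)

lemma ae_of_ae_translate (hb : IsBoundaryMap P b) (hP : IsRWMeasure p P) (n : ℕ)
    {Q : G → Y → Prop}
    (hQ : ∀ x, piN p n x ≠ 0 → ∀ᵐ y ∂translate (P.map b) x, Q x y) :
    ∀ᵐ ω ∂P, Q (walk ω n) (b ω) := by
  have hx : ∀ x, ∀ᵐ ω ∂P, walk ω n = x → Q x (b ω) := by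
    intro x
    refine (ae_restrict_iff' (measurable_walk n (measurableSet_singleton x))).1 ?_
    refine ae_of_ae_map hb.measurable.aemeasurable ?_
    rw [hb.map_restrict_walk hP]
    rcases eq_or_ne (piN p n x) 0 with h0 | h0
    · rw [h0, zero_smul, ae_zero]
      exact eventually_bot
    · exact Measure.ae_smul_measure (hQ x h0) _
  filter_upwards [ae_all_iff.2 hx] with ω hω using hω _ rfl

lemma ae_translateDensity_walk_succ (hb : IsBoundaryMap P b) (hP : IsRWMeasure p P) (n : ℕ) :
    ∀ᵐ ω ∂P, translateDensity (P.map b) (walk ω (n + 1)) (b ω) =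
      translateDensity (P.map b) (ω 0) (b ω) *
        translateDensity (P.map b) (walk (pathShift ω) n) (b (pathShift ω)) := by
  have := hP.1
  have := Measure.isProbabilityMeasure_map (μ := P) hb.measurable.aemeasurable
  have hac : ∀ {k x}, piN p k x ≠ 0 → translate (P.map b) x ≪ P.map b := fun hx =>
    absolutelyContinuous_of_smul_le (hb.smul_translate_le hP _ _) hx
  have hmul : ∀ᵐ ω ∂P, ∀ g x : G, piN p 1 g ≠ 0 → piN p n x ≠ 0 →
      translateDensity (P.map b) (g * x) (b ω) =
        translateDensity (P.map b) g (b ω) * translateDensity (P.map b) x (g⁻¹ • b ω) := by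
    simp only [ae_all_iff]
    exact fun g x hg hx =>
      ae_of_ae_map hb.measurable.aemeasurable (translateDensity_mul (hac hg) (hac hx))
  filter_upwards [hmul, hP.ae_piN_walk_ne_zero 1, hb.ae_eq_smul,
    hP.measurePreserving_pathShift.quasiMeasurePreserving.ae (hP.ae_piN_walk_ne_zero n)]
    with ω hω hhead hbω htail
  rw [walk_one] at hhead
  rw [walk_succ', hω _ _ hhead htail]
  congr 2
  rw [inv_smul_eq_iff, ← hbω]

lemma ae_translateDensity_walk_eq_prod (hb : IsBoundaryMap P b) (hP : IsRWMeasure p P) :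
    ∀ᵐ ω ∂P, ∀ n, translateDensity (P.map b) (walk ω n) (b ω) =
      ∏ i ∈ Finset.range n,
        translateDensity (P.map b) ((pathShift^[i] ω) 0) (b (pathShift^[i] ω)) := by
  have := hP.1
  refine ae_eq_prod_of_ae_succ_eq_mul hP.measurePreserving_pathShift.quasiMeasurePreserving
    (F := fun n ω => translateDensity (P.map b) (walk ω n) (b ω)) ?_
    (ae_all_iff.2 (hb.ae_translateDensity_walk_succ hP))
  filter_upwards [ae_of_ae_map hb.measurable.aemeasurable
    (translateDensity_one (G := G) (ν := P.map b))] with ω hω using hω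

lemma ae_logStepDensity_le (hb : IsBoundaryMap P b) (hP : IsRWMeasure p P) :
    ∀ᵐ ω ∂P, 0 < (translateDensity (P.map b) (ω 0) (b ω)).toReal ∧
      logStepDensity P b ω ≤ -Real.log (p (ω 0)).toReal := by
  have := hP.1
  have := Measure.isProbabilityMeasure_map (μ := P) hb.measurable.aemeasurable
  have hstep := hb.ae_of_ae_translate hP 1
    (Q := fun x y => 0 < (translateDensity (P.map b) x y).toReal ∧
      Real.log (translateDensity (P.map b) x y).toReal ≤ -Real.log (piN p 1 x).toReal)
    fun x hx => ae_log_rnDeriv_le (hb.smul_translate_le hP 1 x) hx ((hP.isProb_piN 1).ne_top x)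
  simpa only [walk_one, piN_one, ← logStepDensity.eq_1] using hstep

lemma map_restrict_head (hb : IsBoundaryMap P b) (hP : IsRWMeasure p P) (x : G) :
    (P.restrict ((fun ω => ω 0) ⁻¹' {x})).map b = p x • translate (P.map b) x := by
  simpa only [walk_one, piN_one] using hb.map_restrict_walk hP 1 x

lemma setLIntegral_enorm_logStepDensity (hb : IsBoundaryMap P b) (hP : IsRWMeasure p P) (x : G) :
    ∫⁻ ω in (fun ω => ω 0) ⁻¹' {x}, ‖logStepDensity P b ω‖ₑ ∂P =
      p x * ∫⁻ y, ‖Real.log (translateDensity (P.map b) x y).toReal‖ₑ ∂translate (P.map b) x := by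
  have hD : Measurable fun y => ‖Real.log (translateDensity (P.map b) x y).toReal‖ₑ :=
    (Real.measurable_log.comp (measurable_translateDensity _ x).ennreal_toReal).enorm
  rw [← smul_eq_mul, ← lintegral_smul_measure, ← hb.map_restrict_head hP,
    lintegral_map hD hb.measurable]
  refine setLIntegral_congr_fun (measurable_pi_apply 0 (measurableSet_singleton x))
    fun ω (hω : ω 0 = x) => ?_
  simp only [logStepDensity, hω]

lemma setIntegral_logStepDensity (hb : IsBoundaryMap P b) (hP : IsRWMeasure p P) (x : G) :
    ∫ ω in (fun ω => ω 0) ⁻¹' {x}, logStepDensity P b ω ∂P =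
      (p x).toReal * translateEntropy (P.map b) x := by
  have hD : Measurable fun y => Real.log (translateDensity (P.map b) x y).toReal :=
    Real.measurable_log.comp (measurable_translateDensity _ x).ennreal_toReal
  rw [translateEntropy, ← smul_eq_mul, ← integral_smul_measure, ← hb.map_restrict_head hP,
    integral_map hb.measurable.aemeasurable hD.aestronglyMeasurable]
  refine setIntegral_congr_fun (measurable_pi_apply 0 (measurableSet_singleton x))
    fun ω (hω : ω 0 = x) => ?_
  simp only [logStepDensity, hω]

lemma integrable_logStepDensity (hb : IsBoundaryMap P b) (hP : IsRWMeasure p P)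
    (hfin : ∑' x, ENNReal.ofReal (Real.negMulLog (p x).toReal) ≠ ∞) :
    Integrable (logStepDensity P b) P := by
  have := hP.1
  have := Measure.isProbabilityMeasure_map (μ := P) hb.measurable.aemeasurable
  have hx : ∀ x, ∫⁻ ω in (fun ω => ω 0) ⁻¹' {x}, ‖logStepDensity P b ω‖ₑ ∂P ≤
      ENNReal.ofReal (Real.negMulLog (p x).toReal) + p x := by
    intro x
    rw [hb.setLIntegral_enorm_logStepDensity hP]
    rcases eq_or_ne (p x) 0 with h0 | h0
    · simp [h0]
    have hle : p x • translate (P.map b) x ≤ P.map b := by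
      simpa only [piN_one] using hb.smul_translate_le hP 1 x
    calc _ ≤ p x * (ENNReal.ofReal (-Real.log (p x).toReal) + 1) := by
          gcongr
          exact lintegral_enorm_log_rnDeriv_le hle h0
      _ = _ := by rw [mul_add, mul_one, mul_ofReal_neg_log (hP.isProb.ne_top x)]
  refine ⟨hb.measurable_logStepDensity.aestronglyMeasurable, ?_⟩
  calc ∫⁻ ω, ‖logStepDensity P b ω‖ₑ ∂P
      = ∑' x, ∫⁻ ω in (fun ω => ω 0) ⁻¹' {x}, ‖logStepDensity P b ω‖ₑ ∂P := by
        rw [← lintegral_sum_measure, sum_restrict_head]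
    _ ≤ ∑' x, (ENNReal.ofReal (Real.negMulLog (p x).toReal) + p x) := ENNReal.tsum_le_tsum hx
    _ < ∞ := ?_
  rw [ENNReal.tsum_add, hP.isProb]
  exact ENNReal.add_lt_top.2 ⟨hfin.lt_top, ENNReal.one_lt_top⟩

lemma hasSum_translateEntropy (hb : IsBoundaryMap P b) (hP : IsRWMeasure p P)
    (h_integrable : Integrable (logStepDensity P b) P) :
    HasSum (fun x => (p x).toReal * translateEntropy (P.map b) x)
      (∫ ω, logStepDensity P b ω ∂P) := by
  have hsum := hasSum_integral_measure ((sum_restrict_head P).symm ▸ h_integrable)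
  simpa only [sum_restrict_head, hb.setIntegral_logStepDensity hP] using hsum

/- The product formula turns `log D_{w_n}(b(ω))` into a Birkhoff sum of `logStepDensity`. -/
lemma ae_eventually_translateDensity_walk_le (hb : IsBoundaryMap P b) (hP : IsRWMeasure p P)
    (hfin : ∑' x, ENNReal.ofReal (Real.negMulLog (p x).toReal) ≠ ∞) {c : ℝ}
    (hc : ∑' x, (p x).toReal * translateEntropy (P.map b) x < c) :
    ∀ᵐ ω ∂P, ∀ᶠ n : ℕ in atTop,
      translateDensity (P.map b) (walk ω n) (b ω) ≤ ENNReal.ofReal (Real.exp (c * n)) := by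
  have := hP.1
  have h_integrable := hb.integrable_logStepDensity hP hfin
  rw [(hb.hasSum_translateEntropy hP h_integrable).tsum_eq] at hc
  have hlog : ∀ x, 0 ≤ -Real.log (p x).toReal := fun x =>
    neg_nonneg.2 (Real.log_nonpos ENNReal.toReal_nonneg (toReal_le_one (hP.isProb.le_one x)))
  have hφ : Integrable (fun ω => -Real.log (p (ω 0)).toReal) P := by
    refine hP.integrable_head hlog ?_
    simpa only [FiniteFirstMoment, mul_ofReal_neg_log (hP.isProb.ne_top _)] using hfin
  have hstep := hb.ae_logStepDensity_le hP
  filter_upwards [hb.ae_translateDensity_walk_eq_prod hP,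
    hP.ae_eventually_sum_le_of_le_head (φ := fun x => -Real.log (p x).toReal)
      hb.measurable_logStepDensity h_integrable hφ
      (hstep.mono fun _ h => h.2) hc,
    ae_all_iff.2 fun n =>
      (hP.measurePreserving_pathShift.iterate n).quasiMeasurePreserving.ae hstep]
    with ω hprod hsum hpos
  filter_upwards [hsum] with n hn
  have hterm : ∀ i ∈ Finset.range n,
      translateDensity (P.map b) ((pathShift^[i] ω) 0) (b (pathShift^[i] ω)) =
        ENNReal.ofReal (Real.exp (logStepDensity P b (pathShift^[i] ω))) := fun i _ => by
    rw [logStepDensity, Real.exp_log (hpos i).1,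
      ENNReal.ofReal_toReal (ENNReal.toReal_pos_iff.1 (hpos i).1).2.ne]
  rw [hprod n, Finset.prod_congr rfl hterm,
    ← ENNReal.ofReal_prod_of_nonneg fun i _ => (Real.exp_pos _).le, ← Real.exp_sum]
  exact ENNReal.ofReal_le_ofReal (Real.exp_le_exp.2 hn)

lemma measure_inter_walk_inter_le (hb : IsBoundaryMap P b) (hP : IsRWMeasure p P) (n : ℕ) (x : G)
    {a k : ℝ≥0∞} {S : Set (ℕ → G)} (hpi : ∀ ω ∈ S, piN p n (walk ω n) ≤ a)
    (hdens : ∀ ω ∈ S, translateDensity (P.map b) (walk ω n) (b ω) ≤ k) {E : Set Y}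
    (hE : MeasurableSet E) :
    P (S ∩ (fun ω => walk ω n) ⁻¹' {x} ∩ b ⁻¹' E) ≤ a * k * P.map b E := by
  have := hP.1
  rcases (S ∩ (fun ω => walk ω n) ⁻¹' {x}).eq_empty_or_nonempty with h | ⟨ω, hω, rfl⟩
  · simp [h]
  set F := E ∩ translateDensity (P.map b) (walk ω n) ⁻¹' Iic k
  have hF : MeasurableSet F := hE.inter (measurable_translateDensity _ _ measurableSet_Iic)
  have hsub : P (S ∩ (fun ω' => walk ω' n) ⁻¹' {walk ω n} ∩ b ⁻¹' E) ≤
      piN p n (walk ω n) * translate (P.map b) (walk ω n) F := by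
    rw [← hb.measure_walk_inter hP n _ hF]
    refine measure_mono ?_
    rintro ω' ⟨⟨hω', hx⟩, hωE⟩
    exact ⟨hx, hωE, (hx : walk ω' n = walk ω n) ▸ hdens ω' hω'⟩
  refine hsub.trans ?_
  rcases eq_or_ne (piN p n (walk ω n)) 0 with h0 | h0
  · rw [h0, zero_mul]
    exact zero_le
  have hac := absolutelyContinuous_of_smul_le (hb.smul_translate_le hP n (walk ω n)) h0
  have := Measure.isProbabilityMeasure_map (μ := P) hb.measurable.aemeasurable
  rw [mul_assoc]
  refine mul_le_mul' (hpi ω hω) ?_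
  calc translate (P.map b) (walk ω n) F
      = ∫⁻ y in F, translateDensity (P.map b) (walk ω n) y ∂P.map b := by
        rw [translateDensity, Measure.setLIntegral_rnDeriv hac]
    _ ≤ ∫⁻ _ in F, k ∂P.map b := setLIntegral_mono measurable_const fun y hy => hy.2
    _ = k * P.map b F := setLIntegral_const _ _
    _ ≤ k * P.map b E := by gcongr; exact inter_subset_left

end IsBoundaryMap

end BoundaryMap

/-! ### Disintegrations -/

namespace IsDisintegration

variable {A B : Type*} [MeasurableSpace A] [MeasurableSpace B] {ν : Measure A}
  {f : A → B} {νB : Measure B} {cond : B → Measure A}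

lemma ae_ae_eq [MeasurableSingletonClass B] (hd : IsDisintegration ν f νB cond)
    (hf : Measurable f) :
    ∀ᵐ b ∂νB, ∀ᵐ a ∂cond b, f a = b := by
  filter_upwards [hd.2.1, hd.2.2.1] with b _ hb
  exact (prob_compl_eq_zero_iff (hf (measurableSet_singleton b))).2 hb

lemma measure_inter_preimage [MeasurableSingletonClass B] (hd : IsDisintegration ν f νB cond)
    (hf : Measurable f) {s : Set A} (hs : MeasurableSet s) {E : Set B} (hE : MeasurableSet E) :
    ν (s ∩ f ⁻¹' E) = ∫⁻ b in E, cond b s ∂νB := by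
  rw [hd.2.2.2 _ (hs.inter (hf hE)), ← lintegral_indicator hE]
  refine lintegral_congr_ae ?_
  filter_upwards [hd.ae_ae_eq hf] with b hb
  by_cases hbE : b ∈ E
  · rw [indicator_of_mem hbE]
    refine measure_congr ?_
    filter_upwards [hb] with a ha
    exact propext (and_iff_left (show f a ∈ E from ha ▸ hbE))
  · rw [indicator_of_notMem hbE]
    refine measure_mono_null ?_ (ae_iff.1 hb)
    exact fun a ha hab => hbE (hab ▸ ha.2)

variable [IsProbabilityMeasure ν]

lemma isProbabilityMeasure (hd : IsDisintegration ν f νB cond) (hf : Measurable f) :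
    IsProbabilityMeasure νB :=
  hd.1 ▸ Measure.isProbabilityMeasure_map hf.aemeasurable

/- Measurability is not part of the definition. It holds because the lower integrals of `cond b s`
and `cond b sᶜ` add up to `1`, the integral of their sum. -/
lemma aemeasurable_measure (hd : IsDisintegration ν f νB cond) (hf : Measurable f) {s : Set A}
    (hs : MeasurableSet s) : AEMeasurable (fun b => cond b s) νB := by
  have := hd.isProbabilityMeasure hf
  obtain ⟨φ, hφ, hφ_le, hφ_eq⟩ :=
    exists_measurable_le_lintegral_eq (μ := νB) fun b => cond b s
  obtain ⟨φ', hφ', hφ'_le, hφ'_eq⟩ :=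
    exists_measurable_le_lintegral_eq (μ := νB) fun b => cond b sᶜ
  rw [← hd.2.2.2 s hs] at hφ_eq
  rw [← hd.2.2.2 _ hs.compl] at hφ'_eq
  have htotal : ∀ᵐ b ∂νB, cond b s + cond b sᶜ = 1 := by
    filter_upwards [hd.2.1] with b hb
    rw [measure_add_measure_compl hs, measure_univ]
  have hsum_one : ∫⁻ b, (φ b + φ' b) ∂νB = 1 := by
    rw [lintegral_add_left hφ, ← hφ_eq, ← hφ'_eq, measure_add_measure_compl hs, measure_univ]
  have hsum : (fun b => φ b + φ' b) =ᵐ[νB] fun _ => 1 := by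
    refine ae_eq_of_ae_le_of_lintegral_le ?_ (by simp [hsum_one]) aemeasurable_const
      (by simp [hsum_one])
    filter_upwards [htotal] with b hb using (add_le_add (hφ_le b) (hφ'_le b)).trans_eq hb
  refine ⟨φ, hφ, ?_⟩
  filter_upwards [htotal, hsum] with b hb hφb
  have hfin : φ' b ≠ ∞ := fun h => by simp [h] at hφb
  refine le_antisymm ((ENNReal.add_le_add_iff_right hfin).1 ?_) (hφ_le b)
  exact (add_le_add_right (hφ'_le b) _).trans_eq (hb.trans hφb.symm)

lemma ae_ae_of_ae (hd : IsDisintegration ν f νB cond) (hf : Measurable f) {Q : A → Prop}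
    (hQ : ∀ᵐ a ∂ν, Q a) : ∀ᵐ b ∂νB, ∀ᵐ a ∂cond b, Q a := by
  obtain ⟨E, hQE, hE, hνE⟩ := exists_measurable_superset_of_null (ae_iff.1 hQ)
  rw [hd.2.2.2 E hE, lintegral_eq_zero_iff' (hd.aemeasurable_measure hf hE)] at hνE
  filter_upwards [hνE] with b hb using ae_iff.2 (measure_mono_null hQE hb)

lemma aemeasurable_lintegral (hd : IsDisintegration ν f νB cond) (hf : Measurable f)
    {ρ : A → ℝ≥0∞} (hρ : Measurable ρ) : AEMeasurable (fun b => ∫⁻ a, ρ a ∂cond b) νB := by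
  refine Measurable.ennreal_induction
    (motive := fun ρ => AEMeasurable (fun b => ∫⁻ a, ρ a ∂cond b) νB) ?_ ?_ ?_ hρ
  · intro c s hs
    simpa only [lintegral_indicator_const hs] using (hd.aemeasurable_measure hf hs).const_mul c
  · intro f₁ f₂ _ hf₁ _ ih₁ ih₂
    simp only [Pi.add_apply, lintegral_add_left hf₁]
    exact ih₁.add ih₂
  · intro F hF hmono ih
    simpa only [lintegral_iSup hF hmono] using AEMeasurable.iSup ih

variable [MeasurableSingletonClass B]

lemma setLIntegral_preimage (hd : IsDisintegration ν f νB cond) (hf : Measurable f)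
    {ρ : A → ℝ≥0∞} (hρ : Measurable ρ) {E : Set B} (hE : MeasurableSet E) :
    ∫⁻ a in f ⁻¹' E, ρ a ∂ν = ∫⁻ b in E, ∫⁻ a, ρ a ∂cond b ∂νB := by
  refine Measurable.ennreal_induction (motive := fun ρ =>
    ∫⁻ a in f ⁻¹' E, ρ a ∂ν = ∫⁻ b in E, ∫⁻ a, ρ a ∂cond b ∂νB) ?_ ?_ ?_ hρ
  · intro c s hs
    simp only [lintegral_indicator_const hs]
    rw [Measure.restrict_apply hs, hd.measure_inter_preimage hf hs hE,
      lintegral_const_mul'' _ (hd.aemeasurable_measure hf hs).restrict]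
  · intro f₁ f₂ _ hf₁ _ ih₁ ih₂
    simp only [Pi.add_apply, lintegral_add_left hf₁]
    rw [lintegral_add_left' (hd.aemeasurable_lintegral hf hf₁).restrict, ih₁, ih₂]
  · intro F hF hmono ih
    simp only [lintegral_iSup hF hmono]
    rw [lintegral_iSup' (fun n => (hd.aemeasurable_lintegral hf (hF n)).restrict)
      (ae_of_all _ fun b _ _ hnm => lintegral_mono (hmono hnm))]
    exact iSup_congr ih

lemma ae_lintegral_le (hd : IsDisintegration ν f νB cond) (hf : Measurable f) {ρ : A → ℝ≥0∞}
    (hρ : Measurable ρ) {K : ℝ≥0∞}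
    (hK : ∀ E, MeasurableSet E → ∫⁻ a in f ⁻¹' E, ρ a ∂ν ≤ K * νB E) :
    ∀ᵐ b ∂νB, ∫⁻ a, ρ a ∂cond b ≤ K := by
  have := hd.isProbabilityMeasure hf
  refine ae_le_of_forall_setLIntegral_le_of_sigmaFinite₀ (hd.aemeasurable_lintegral hf hρ) ?_
  intro E hE _
  rw [← hd.setLIntegral_preimage hf hρ hE, setLIntegral_const]
  exact hK E hE

end IsDisintegration

/-! ### Masses of balls in a system of shadows -/

section Shadows

variable {A I : Type*} [MeasurableSpace A]

lemma ae_eventually_notMem_of_measure_le_exp {μ : Measure A} {S : ℕ → Set A} {K ε : ℝ}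
    (hε : 0 < ε) (hS : ∀ᶠ n : ℕ in atTop, μ (S n) ≤ ENNReal.ofReal (K * Real.exp (-(ε * n)))) :
    ∀ᵐ a ∂μ, ∀ᶠ n in atTop, a ∉ S n := by
  obtain ⟨N, hN⟩ := eventually_atTop.1 hS
  have hsum : Summable fun n : ℕ => K * Real.exp (-(ε * n)) := by
    refine ((Real.summable_exp_nat_mul_iff.2 (neg_lt_zero.2 hε)).congr fun n => ?_).mul_left K
    ring_nf
  have hfin : ∑' n : ℕ, μ (S (n + N)) ≠ ∞ :=
    ne_top_of_le_ne_top ((summable_nat_add_iff N).2 hsum).tsum_ofReal_ne_top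
      (ENNReal.tsum_le_tsum fun n => hN (n + N) (Nat.le_add_left N n))
  filter_upwards [ae_eventually_notMem hfin] with a ha
  rw [← map_add_atTop_eq_nat N]
  exact eventually_map.2 ha

/- Vitali's covering lemma extracts from the exceptional set a disjoint family of sets `B ξ`, whose
enlargements still cover it. -/
lemma mul_measure_setOf_mul_measure_lt_le_one (μ : Measure A) [IsProbabilityMeasure μ]
    (μ' : Measure A) {B B' : A → Set A} (hB : ∀ ξ, MeasurableSet (B ξ)) (hself : ∀ ξ, ξ ∈ B ξ)
    (henl : ∀ ξ ζ, (B ξ ∩ B ζ).Nonempty → ξ ∈ B' ζ) (C : ℝ≥0∞) :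
    C * μ' {ξ | C * μ' (B' ξ) < μ (B ξ)} ≤ 1 := by
  set S := {ξ | C * μ' (B' ξ) < μ (B ξ)}
  obtain ⟨u, huS, hdisj, hcover⟩ := Vitali.exists_disjoint_subfamily_covering_enlargement B S
    (fun _ => 1) 2 one_lt_two (fun _ _ => zero_le_one) 1 (fun _ _ => le_rfl)
    (fun ξ _ => ⟨ξ, hself ξ⟩)
  have hpos : {i : u | 0 < μ (B i)} = univ :=
    eq_univ_of_forall fun i => (zero_le.trans_lt (huS i.2) : 0 < μ (B i))
  have hcount : u.Countable := by
    have := Measure.countable_meas_pos_of_disjoint_iUnion (μ := μ) (fun i : u => hB i)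
      (fun i j hij => hdisj i.2 j.2 (Subtype.coe_ne_coe.2 hij))
    rw [hpos, countable_univ_iff] at this
    exact countable_coe_iff.1 this
  have hsub : S ⊆ ⋃ ζ ∈ u, B' ζ := fun ξ hξ => by
    obtain ⟨ζ, hζ, hξζ, _⟩ := hcover ξ hξ
    exact mem_biUnion hζ (henl ξ ζ hξζ)
  calc C * μ' S ≤ C * ∑' ζ : u, μ' (B' ζ) := by
        gcongr
        exact (measure_mono hsub).trans (measure_biUnion_le _ hcount _)
    _ = ∑' ζ : u, C * μ' (B' ζ) := ENNReal.tsum_mul_left.symm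
    _ ≤ ∑' ζ : u, μ (B ζ) := ENNReal.tsum_le_tsum fun ζ => (huS ζ.2).le
    _ = μ (⋃ ζ ∈ u, B ζ) := (measure_biUnion hcount hdisj fun ζ _ => hB ζ).symm
    _ ≤ 1 := prob_le_one

lemma sum_measure_le_card_mul [Countable I] {m : I → Measure A} {F : Set A} {a : ℝ≥0∞}
    {t : Finset I} (hm : ∀ x, m x univ ≤ a) (ht : ∀ x ∉ t, m x F = 0) :
    Measure.sum m F ≤ t.card * a := by
  rw [Measure.sum_apply_of_countable, tsum_eq_sum ht, ← nsmul_eq_mul]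
  exact Finset.sum_le_card_nsmul _ _ _ fun x _ => (measure_mono (subset_univ F)).trans (hm x)

lemma measure_setOf_measure_lt_le_card_mul {μ μ' : Measure A} (hle : μ' ≤ μ) {B : A → Set A}
    {R : I → Set A} {a : ℝ≥0∞} {t : Finset I} (ht : ∀ᵐ ξ ∂μ', ∃ x ∈ t, ξ ∈ R x)
    (hRB : ∀ x, ∀ ξ ∈ R x, R x ⊆ B ξ) : μ' {ξ | μ (B ξ) < a} ≤ t.card * a := by
  set S := {ξ | μ (B ξ) < a}
  have hpiece (x : I) : μ' (S ∩ R x) ≤ a := by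
    obtain h | ⟨ξ, hξS, hξR⟩ := (S ∩ R x).eq_empty_or_nonempty
    · simp [h]
    · exact (hle _).trans ((measure_mono (inter_subset_right.trans (hRB x ξ hξR))).trans hξS.le)
  calc μ' S ≤ μ' (⋃ x ∈ t, S ∩ R x) := by
        refine measure_mono_ae ?_
        filter_upwards [ht] with ξ ⟨x, hxt, hξ⟩ hξS using mem_biUnion hxt ⟨hξS, hξ⟩
    _ ≤ ∑ x ∈ t, μ' (S ∩ R x) := measure_biUnion_finset_le _ _
    _ ≤ t.card * a := by
        rw [← nsmul_eq_mul]
        exact Finset.sum_le_card_nsmul _ _ _ fun x _ => hpiece x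

/-- The combinatorics used to estimate the masses of the sets `B n ξ`, thought of as the ball about
`ξ` at scale `n` with enlargement `B' n ξ`: the shadow `R n x` of `x` at scale `n` is contained in
the balls about its points, at most `K exp (τ n)` of the shadows meet an enlarged ball, and at most
`K exp (M n)` of them are nonempty. -/
structure IsShadowSystem (R : ℕ → I → Set A) (B B' : ℕ → A → Set A) (K τ M : ℝ) : Prop where
  measurableSet_ball (n : ℕ) (ξ : A) : MeasurableSet (B n ξ)
  mem_ball (n : ℕ) (ξ : A) : ξ ∈ B n ξ
  mem_enlargement (n : ℕ) (ξ ζ : A) : (B n ξ ∩ B n ζ).Nonempty → ξ ∈ B' n ζ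
  shadow_subset_ball : ∀ᶠ n : ℕ in atTop, ∀ x, ∀ ξ ∈ R n x, R n x ⊆ B n ξ
  card_meeting : ∀ᶠ n : ℕ in atTop, ∀ ξ, ∃ t : Finset I,
    (∀ x, (R n x ∩ B' n ξ).Nonempty → x ∈ t) ∧ (t.card : ℝ) ≤ K * Real.exp (τ * n)
  card_nonempty : ∀ᶠ n : ℕ in atTop, ∃ t : Finset I,
    (∀ x, (R n x).Nonempty → x ∈ t) ∧ (t.card : ℝ) ≤ K * Real.exp (M * n)

/-- The measure `μ'` is a sum, at all large scales `n`, of measures `m n x` supported by the shadows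
`R n x` and of mass at most `exp (-κ n)`. -/
structure IsShadowDecomposition (R : ℕ → I → Set A) (m : ℕ → I → Measure A) (μ' : Measure A)
    (κ : ℝ) : Prop where
  sum_eq : ∀ᶠ n : ℕ in atTop, Measure.sum (m n) = μ'
  mass_le : ∀ᶠ n : ℕ in atTop, ∀ x, m n x univ ≤ ENNReal.ofReal (Real.exp (-(κ * n)))
  compl_eq_zero : ∀ᶠ n : ℕ in atTop, ∀ x, m n x (R n x)ᶜ = 0

namespace IsShadowSystem

variable [Countable I] {R : ℕ → I → Set A} {B B' : ℕ → A → Set A} {K τ M κ ε : ℝ}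
  {m : ℕ → I → Measure A} {μ μ' : Measure A}

lemma eventually_measure_enlargement_le (hS : IsShadowSystem R B B' K τ M)
    (hm : IsShadowDecomposition R m μ' κ) :
    ∀ᶠ n : ℕ in atTop, ∀ ξ, μ' (B' n ξ) ≤ ENNReal.ofReal (K * Real.exp (-((κ - τ) * n))) := by
  filter_upwards [hS.card_meeting, hm.sum_eq, hm.mass_le, hm.compl_eq_zero] with n hcard hsum hmass
    hcompl ξ
  obtain ⟨t, ht, htcard⟩ := hcard ξ
  have hzero : ∀ x ∉ t, m n x (B' n ξ) = 0 := fun x hx =>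
    measure_mono_null (fun ζ hζ hζR => hx (ht x ⟨ζ, hζR, hζ⟩)) (hcompl x)
  calc μ' (B' n ξ) ≤ t.card * ENNReal.ofReal (Real.exp (-(κ * n))) :=
        hsum ▸ sum_measure_le_card_mul hmass hzero
    _ = ENNReal.ofReal (t.card * Real.exp (-(κ * n))) := by
        rw [ENNReal.ofReal_mul (Nat.cast_nonneg _), ENNReal.ofReal_natCast]
    _ ≤ ENNReal.ofReal (K * Real.exp (τ * n) * Real.exp (-(κ * n))) := by gcongr
    _ = ENNReal.ofReal (K * Real.exp (-((κ - τ) * n))) := by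
        rw [mul_assoc, ← Real.exp_add]; ring_nf

lemma ae_eventually_measure_ball_le (hS : IsShadowSystem R B B' K τ M) [IsProbabilityMeasure μ]
    (hm : IsShadowDecomposition R m μ' κ) (hε : 0 < ε) :
    ∀ᵐ ξ ∂μ', ∀ᶠ n : ℕ in atTop,
      μ (B n ξ) ≤ ENNReal.ofReal (K * Real.exp (-((κ - τ - ε) * n))) := by
  have hexc : ∀ᵐ ξ ∂μ', ∀ᶠ n : ℕ in atTop,
      ξ ∉ {ξ | ENNReal.ofReal (Real.exp (ε * n)) * μ' (B' n ξ) < μ (B n ξ)} := by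
    refine ae_eventually_notMem_of_measure_le_exp (K := 1) hε (Eventually.of_forall fun n => ?_)
    rw [one_mul, Real.exp_neg, ENNReal.ofReal_inv_of_pos (Real.exp_pos _),
      ENNReal.le_inv_iff_mul_le, mul_comm]
    exact mul_measure_setOf_mul_measure_lt_le_one μ μ' (hS.measurableSet_ball n) (hS.mem_ball n)
      (hS.mem_enlargement n) _
  filter_upwards [hexc] with ξ hξ
  filter_upwards [hξ, hS.eventually_measure_enlargement_le hm] with n hn henl
  calc μ (B n ξ) ≤ ENNReal.ofReal (Real.exp (ε * n)) * μ' (B' n ξ) := not_lt.1 hn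
    _ ≤ ENNReal.ofReal (Real.exp (ε * n)) *
          ENNReal.ofReal (K * Real.exp (-((κ - τ) * n))) := by gcongr; exact henl ξ
    _ = ENNReal.ofReal (K * Real.exp (-((κ - τ - ε) * n))) := by
        rw [← ENNReal.ofReal_mul (Real.exp_pos _).le, mul_left_comm, ← Real.exp_add]; ring_nf

lemma ae_eventually_le_measure_ball (hS : IsShadowSystem R B B' K τ M)
    (hm : IsShadowDecomposition R m μ' κ) (hle : μ' ≤ μ) (hε : 0 < ε) :
    ∀ᵐ ξ ∂μ', ∀ᶠ n : ℕ in atTop,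
      ENNReal.ofReal (Real.exp (-((M + ε) * n))) ≤ μ (B n ξ) := by
  have hexc : ∀ᵐ ξ ∂μ', ∀ᶠ n : ℕ in atTop,
      ξ ∉ {ξ | μ (B n ξ) < ENNReal.ofReal (Real.exp (-((M + ε) * n)))} := by
    refine ae_eventually_notMem_of_measure_le_exp (K := K) hε ?_
    filter_upwards [hS.card_nonempty, hS.shadow_subset_ball, hm.sum_eq, hm.compl_eq_zero]
      with n ⟨t, ht, htcard⟩ hRB hsum hcompl
    have hcover : ∀ᵐ ξ ∂μ', ∃ x ∈ t, ξ ∈ R n x := by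
      rw [← hsum, Measure.ae_sum_iff]
      intro x
      filter_upwards [compl_mem_ae_iff.2 (hcompl x)] with ξ hξ
      exact ⟨x, ht x ⟨ξ, not_not.1 hξ⟩, not_not.1 hξ⟩
    calc _ ≤ t.card * ENNReal.ofReal (Real.exp (-((M + ε) * n))) :=
          measure_setOf_measure_lt_le_card_mul hle hcover hRB
      _ = ENNReal.ofReal (t.card * Real.exp (-((M + ε) * n))) := by
          rw [ENNReal.ofReal_mul (Nat.cast_nonneg _), ENNReal.ofReal_natCast]
      _ ≤ ENNReal.ofReal (K * Real.exp (M * n) * Real.exp (-((M + ε) * n))) := by gcongr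
      _ = ENNReal.ofReal (K * Real.exp (-(ε * n))) := by
          rw [mul_assoc, ← Real.exp_add]; ring_nf
  filter_upwards [hexc] with ξ hξ
  filter_upwards [hξ] with n hn using not_lt.1 hn

end IsShadowSystem

end Shadows

/-! ### Masses of balls in almost every fibre -/

section Fibres

open ProbabilityTheory

variable {Ω A C I : Type*} [MeasurableSpace Ω] [StandardBorelSpace Ω] [Nonempty Ω]
  [MeasurableSpace A] [MeasurableSpace C] {P : Measure Ω} [IsProbabilityMeasure P] {b : Ω → A}

lemma ae_ae_condDistrib_id_of_ae (hb : Measurable b) {q : A → Ω → Prop}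
    (hq : MeasurableSet {z : A × Ω | q z.1 z.2}) (h : ∀ᵐ ω ∂P, q (b ω) ω) :
    ∀ᵐ ξ ∂P.map b, ∀ᵐ ω ∂condDistrib id b P ξ, q ξ ω := by
  refine Measure.ae_ae_of_ae_compProd (p := fun z => q z.1 z.2) ?_
  rw [compProd_map_condDistrib aemeasurable_id]
  exact (ae_map_iff (hb.prodMk measurable_id).aemeasurable hq).2 h

/-- The part of the measure `μ` on `A` due to the event `S`: its density at `ξ` is the probability
of `S` conditioned on `b = ξ`. -/
def eventPart (P : Measure Ω) [IsProbabilityMeasure P] (b : Ω → A) (μ : Measure A) (S : Set Ω) :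
    Measure A :=
  μ.withDensity fun ξ => condDistrib id b P ξ S

lemma eventPart_le (μ : Measure A) (S : Set Ω) : eventPart P b μ S ≤ μ := by
  refine (withDensity_mono (ae_of_all _ fun ξ => ?_)).trans_eq withDensity_one
  exact prob_le_one

lemma sum_eventPart_preimage [Countable I] [MeasurableSpace I] [MeasurableSingletonClass I]
    (μ : Measure A) {S : Set Ω} (hS : MeasurableSet S) {w : Ω → I} (hw : Measurable w) :
    Measure.sum (fun x => eventPart P b μ (S ∩ w ⁻¹' {x})) = eventPart P b μ S := by
  have hpiece (x : I) : MeasurableSet (S ∩ w ⁻¹' {x}) := hS.inter (hw (measurableSet_singleton x))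
  simp only [eventPart]
  rw [← withDensity_tsum fun x => Kernel.measurable_coe _ (hpiece x)]
  congr 1
  funext ξ
  rw [tsum_apply (Pi.summable.2 fun _ => ENNReal.summable), ← measure_iUnion _ hpiece,
    ← inter_iUnion, ← preimage_iUnion, iUnion_of_singleton, preimage_univ, inter_univ]
  exact fun x y hxy => ((disjoint_singleton.2 hxy).preimage w).mono inter_subset_right
    inter_subset_right

lemma eventPart_eq_zero (μ : Measure A) {S : Set Ω} (hS : MeasurableSet S) {F : Set A}
    (hF : ∀ᵐ ξ ∂μ, ξ ∈ F → condDistrib id b P ξ S = 0) : eventPart P b μ S F = 0 := by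
  have hρ : Measurable fun ξ => condDistrib id b P ξ S := Kernel.measurable_coe _ hS
  have h : ∀ᵐ ξ ∂eventPart P b μ S, ξ ∉ F := by
    rw [eventPart, ae_withDensity_iff hρ]
    filter_upwards [hF] with ξ hξ hne hmem using hne (hξ hmem)
  simpa [ae_iff] using h

variable [MeasurableSingletonClass C] {f : A → C} {νC : Measure C} {cond : C → Measure A}

lemma IsDisintegration.ae_eventPart_univ_le (hd : IsDisintegration (P.map b) f νC cond)
    (hb : Measurable b) (hf : Measurable f) {S : Set Ω} (hS : MeasurableSet S) {k : ℝ≥0∞}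
    (hk : ∀ E, MeasurableSet E → P (S ∩ b ⁻¹' (f ⁻¹' E)) ≤ k * νC E) :
    ∀ᵐ η ∂νC, eventPart P b (cond η) S univ ≤ k := by
  have := Measure.isProbabilityMeasure_map (μ := P) hb.aemeasurable
  have hle := hd.ae_lintegral_le hf (ρ := fun ξ => condDistrib id b P ξ S)
    (Kernel.measurable_coe _ hS) (K := k) fun E hE => by
      rw [setLIntegral_map (hf hE) (Kernel.measurable_coe _ hS) hb,
        setLIntegral_preimage_condDistrib hb aemeasurable_id hS (hf hE), inter_comm]
      exact hk E hE
  filter_upwards [hle] with η hη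
  rwa [eventPart, withDensity_apply _ MeasurableSet.univ, setLIntegral_univ]

variable [Countable I] [MeasurableSpace I] [MeasurableSingletonClass I] {good : ℕ → Set Ω}
  {w : ℕ → Ω → I} {Q : ℕ → I → Set A} {B B' : ℕ → A → Set A} {K τ M κ ε : ℝ}

lemma IsDisintegration.ae_isShadowDecomposition (hd : IsDisintegration (P.map b) f νC cond)
    (hb : Measurable b) (hf : Measurable f) (hgood : ∀ n, MeasurableSet (good n))
    (hw : ∀ n, Measurable (w n)) (hQ : ∀ n x, MeasurableSet (Q n x))
    (hmem : ∀ n, ∀ ω ∈ good n, b ω ∈ Q n (w n ω))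
    (hmass : ∀ n x E, MeasurableSet E → P (good n ∩ w n ⁻¹' {x} ∩ b ⁻¹' (f ⁻¹' E)) ≤
      ENNReal.ofReal (Real.exp (-(κ * n))) * νC E) (N : ℕ) :
    ∀ᵐ η ∂νC, IsShadowDecomposition (fun n x => Q n x ∩ f ⁻¹' {η})
      (fun n x => eventPart P b (cond η) ((⋂ n ≥ N, good n) ∩ w n ⁻¹' {x}))
      (eventPart P b (cond η) (⋂ n ≥ N, good n)) κ := by
  have := Measure.isProbabilityMeasure_map (μ := P) hb.aemeasurable
  have htail : MeasurableSet (⋂ n ≥ N, good n) :=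
    MeasurableSet.iInter fun n => MeasurableSet.iInter fun _ => hgood n
  have hpiece (n : ℕ) (x : I) : MeasurableSet ((⋂ n ≥ N, good n) ∩ w n ⁻¹' {x}) :=
    htail.inter (hw n (measurableSet_singleton x))
  have htail_sub (n : ℕ) (hn : N ≤ n) : ⋂ n ≥ N, good n ⊆ good n := biInter_subset_of_mem hn
  have hle : ∀ᵐ η ∂νC, ∀ n ≥ N, ∀ x, eventPart P b (cond η) ((⋂ n ≥ N, good n) ∩ w n ⁻¹' {x}) univ
      ≤ ENNReal.ofReal (Real.exp (-(κ * n))) := by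
    simp only [ae_all_iff]
    intro n hn x
    refine hd.ae_eventPart_univ_le hb hf (hpiece n x) fun E hE => (measure_mono ?_).trans
      (hmass n x E hE)
    gcongr
    exact htail_sub n hn
  have hsupp : ∀ᵐ η ∂νC, ∀ᵐ ξ ∂cond η, ∀ n ≥ N, ∀ x, ξ ∉ Q n x →
      condDistrib id b P ξ ((⋂ n ≥ N, good n) ∩ w n ⁻¹' {x}) = 0 := by
    refine hd.ae_ae_of_ae hf ?_
    simp only [ae_all_iff]
    intro n hn x
    have hbQ (ω : Ω) (hω : ω ∈ (⋂ n ≥ N, good n) ∩ w n ⁻¹' {x}) : b ω ∈ Q n x :=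
      hω.2 ▸ hmem n ω (htail_sub n hn hω.1)
    filter_upwards [ae_ae_condDistrib_id_of_ae hb
      (q := fun ξ ω => ω ∈ (⋂ n ≥ N, good n) ∩ w n ⁻¹' {x} → ξ ∈ Q n x)
      (.imp (measurable_snd (hpiece n x)) (measurable_fst (hQ n x))) (ae_of_all _ hbQ)]
      with ξ hξ hξQ
    exact measure_mono_null (fun ω hω (h : ω ∈ _ → ξ ∈ Q n x) => hξQ (h hω)) (ae_iff.1 hξ)
  filter_upwards [hle, hsupp, hd.ae_ae_eq hf] with η hle hsupp hfibre
  refine ⟨Eventually.of_forall fun n => sum_eventPart_preimage _ htail (hw n), ?_, ?_⟩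
  · filter_upwards [eventually_ge_atTop N] with n hn using hle n hn
  · filter_upwards [eventually_ge_atTop N] with n hn x
    refine eventPart_eq_zero _ (hpiece n x) ?_
    filter_upwards [hsupp, hfibre] with ξ hξ hfξ hξR
    exact hξ n hn x fun hξQ => hξR ⟨hξQ, hfξ⟩

lemma IsDisintegration.ae_ae_eventually_measure_ball
    (hd : IsDisintegration (P.map b) f νC cond)
    (hb : Measurable b) (hf : Measurable f) (hgood : ∀ n, MeasurableSet (good n))
    (hev : ∀ᵐ ω ∂P, ∀ᶠ n in atTop, ω ∈ good n)
    (hw : ∀ n, Measurable (w n)) (hQ : ∀ n x, MeasurableSet (Q n x))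
    (hmem : ∀ n, ∀ ω ∈ good n, b ω ∈ Q n (w n ω))
    (hmass : ∀ n x E, MeasurableSet E → P (good n ∩ w n ⁻¹' {x} ∩ b ⁻¹' (f ⁻¹' E)) ≤
      ENNReal.ofReal (Real.exp (-(κ * n))) * νC E)
    (hS : ∀ η, IsShadowSystem (fun n x => Q n x ∩ f ⁻¹' {η}) B B' K τ M) (hε : 0 < ε) :
    ∀ᵐ η ∂νC, ∀ᵐ ξ ∂cond η, ∀ᶠ n : ℕ in atTop,
      cond η (B n ξ) ≤ ENNReal.ofReal (K * Real.exp (-((κ - τ - ε) * n))) ∧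
      ENNReal.ofReal (Real.exp (-((M + ε) * n))) ≤ cond η (B n ξ) := by
  have := Measure.isProbabilityMeasure_map (μ := P) hb.aemeasurable
  have htail (N : ℕ) : MeasurableSet (⋂ n ≥ N, good n) :=
    MeasurableSet.iInter fun n => MeasurableSet.iInter fun _ => hgood n
  have hne : ∀ᵐ η ∂νC, ∀ᵐ ξ ∂cond η, ∃ N, condDistrib id b P ξ (⋂ n ≥ N, good n) ≠ 0 := by
    have hev' : ∀ᵐ ω ∂P, ω ∈ ⋃ N, ⋂ n ≥ N, good n := by
      filter_upwards [hev] with ω hω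
      simpa only [mem_iUnion, mem_iInter, eventually_atTop] using hω
    refine hd.ae_ae_of_ae hf ?_
    filter_upwards [ae_ae_condDistrib_id_of_ae hb (q := fun _ ω => ω ∈ ⋃ N, ⋂ n ≥ N, good n)
      (measurable_snd (MeasurableSet.iUnion htail)) hev'] with ξ hξ
    by_contra! hzero
    have : condDistrib id b P ξ univ = 0 := by
      rw [← measure_iUnion_null_iff.2 hzero]
      exact (measure_congr (eventuallyEq_univ.2 hξ)).symm
    simp at this
  filter_upwards [ae_all_iff.2 (hd.ae_isShadowDecomposition hb hf hgood hw hQ hmem hmass), hne,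
    hd.2.1] with η hdec hne hprob
  have hball (N : ℕ) := ((hS η).ae_eventually_measure_ball_le (μ := cond η) (hdec N) hε).and
    ((hS η).ae_eventually_le_measure_ball (hdec N) (eventPart_le _ _) hε)
  have hpart (N : ℕ) := (ae_withDensity_iff (Kernel.measurable_coe _ (htail N))).1 (hball N)
  filter_upwards [ae_all_iff.2 hpart, hne] with ξ hξ ⟨N, hN⟩
  exact (hξ N hN).1.and (hξ N hN).2

end Fibres

/-! ### Isometric actions -/

section IsometricAction

variable {X G : Type*} [MetricSpace X] [Group G] [MulAction G X] [IsIsometricSMul G X]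

lemma isLengthFunction_dist_smul (o : X) : IsLengthFunction fun g : G => dist o (g • o) where
  nonneg _ := dist_nonneg
  one := by rw [one_smul, dist_self]
  mul_le x y := by
    rw [mul_smul, ← dist_smul x o (y • o)]
    exact dist_triangle _ _ _

lemma dist_smul_inv_mul (o : X) (x y : G) : dist o ((x⁻¹ * y) • o) = dist (x • o) (y • o) := by
  rw [← dist_smul x, smul_smul, mul_inv_cancel_left]

instance (o : X) : MulAction G (Boundary X o) where
  smul g := bAct o (IsometryEquiv.constSMul g)
  one_smul ξ := by
    obtain ⟨u, rfl⟩ := exists_mkB o ξ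
    exact congrArg (mkB o) (Subtype.ext (funext fun n => one_smul G (u.1 n)))
  mul_smul g h ξ := by
    obtain ⟨u, rfl⟩ := exists_mkB o ξ
    exact congrArg (mkB o) (Subtype.ext (funext fun n => mul_smul g h (u.1 n)))

/-- The sequence `z` converges to the boundary point `ξ`. -/
def TendstoBoundary (o : X) (z : ℕ → X) (ξ : Boundary X o) : Prop :=
  ∃ h : IsDivergent o z, ξ = mkB o ⟨z, h⟩

lemma IsHyperbolicWith.eq_smul_of_tendstoBoundary {δ : ℝ} (hδ : IsHyperbolicWith X δ) {o : X}
    {z z' : ℕ → X} {ξ ξ' : Boundary X o} (hz : TendstoBoundary o z ξ)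
    (hz' : TendstoBoundary o z' ξ') {g : G} (h : ∀ n, z (n + 1) = g • z' n) : ξ = g • ξ' := by
  obtain ⟨hdiv, rfl⟩ := hz
  obtain ⟨_, rfl⟩ := hz'
  refine hδ.mkB_eq_iff.2 ?_
  have hshift : Tendsto (fun q : ℕ × ℕ => (q.1, q.2 + 1)) atTop atTop := by
    rw [← prod_atTop_atTop_eq]
    exact tendsto_fst.prodMk ((tendsto_add_atTop_nat 1).comp tendsto_snd)
  exact (Tendsto.comp hdiv hshift).congr fun q => congrArg (gp o (z q.1)) (h q.2)

lemma IsHyperbolicWith.isBoundaryMap_of_tendstoBoundary {δ : ℝ} (hδ : IsHyperbolicWith X δ)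
    {o : X} [MeasurableSpace G] [Countable G] [DiscreteMeasurableSpace G] {p : G → ℝ≥0∞}
    {P : Measure (ℕ → G)} (hP : IsRWMeasure p P) {b : (ℕ → G) → Boundary X o} (hb : Measurable b)
    (hlim : ∀ᵐ ω ∂P, TendstoBoundary o (fun n => walk ω n • o) (b ω)) : IsBoundaryMap P b where
  measurable := hb
  ae_eq_smul := by
    filter_upwards [hlim, hP.measurePreserving_pathShift.quasiMeasurePreserving.ae hlim]
      with ω hω hshift
    refine hδ.eq_smul_of_tendstoBoundary hω hshift fun n => ?_
    rw [walk_succ', mul_smul]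

end IsometricAction

lemma tsum_marginalStar_mul {G A : Type*} {p : G → ℝ≥0∞} (hp : ∀ x, p x ≠ ∞) (φ : G → A)
    {J : A → ℝ} (hJ : Summable fun x => (p x).toReal * J (φ x)) :
    ∑' a, (marginalStar p φ a).toReal * J a = ∑' x, (p x).toReal * J (φ x) := by
  let F (x : G) (a : A) : ℝ := if φ x = a then (p x).toReal * J a else 0
  have hF : Summable (Function.uncurry F) := by
    have hinj : Function.Injective fun x : G => (x, φ x) := fun x y h => (Prod.mk.inj h).1
    refine (hinj.summable_iff ?_).1 (hJ.congr fun x => (if_pos rfl).symm)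
    rintro ⟨x, a⟩ h
    exact if_neg fun hxa => h ⟨x, congrArg (x, ·) hxa⟩
  have hrow (x : G) : ∑' a, F x a = (p x).toReal * J (φ x) :=
    (tsum_eq_single (φ x) fun a ha => if_neg ha.symm).trans (if_pos rfl)
  have hcol (a : A) : ∑' x, F x a = (marginalStar p φ a).toReal * J a := by
    rw [marginalStar, ENNReal.tsum_toReal_eq fun x => by split_ifs <;> simp [hp], ← tsum_mul_right]
    refine tsum_congr fun x => ?_
    simp only [F]
    split_ifs <;> simp
  simpa only [hrow, hcol] using hF.tsum_comm

lemma IsBoundaryMap.diffEntropy_eq_tsum_translateEntropy {Xs G : Type*} [MetricSpace Xs] [Group G]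
    [Countable G] [MeasurableSpace G] [DiscreteMeasurableSpace G] [MulAction G Xs]
    [IsIsometricSMul G Xs] {os : Xs} [MeasurableConstSMul G (Boundary Xs os)] {p : G → ℝ≥0∞}
    {P : Measure (ℕ → G)} {b : (ℕ → G) → Boundary Xs os} (hb : IsBoundaryMap P b)
    (hP : IsRWMeasure p P) (hfin : ∑' x, ENNReal.ofReal (Real.negMulLog (p x).toReal) ≠ ∞) :
    diffEntropy os (marginalStar p fun g => IsometryEquiv.constSMul g) (P.map b) =
      ∑' x, (p x).toReal * translateEntropy (P.map b) x :=
  tsum_marginalStar_mul hP.isProb.ne_top (fun g => IsometryEquiv.constSMul g)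
    (hb.hasSum_translateEntropy hP (hb.integrable_logStepDensity hP hfin)).summable

/-! ### Shadows of the orbit -/

lemma FinExpGrowth.exists_finset {G : Type*} {f : G → ℝ} (hf : FinExpGrowth f)
    (hf0 : ∀ x, 0 ≤ f x) :
    ∃ c, 0 < c ∧ ∀ r, ∃ t : Finset G,
      (∀ x, f x < r → x ∈ t) ∧ (t.card : ℝ) ≤ c * Real.exp (c * r) := by
  obtain ⟨c, hc, hgrow⟩ := hf
  refine ⟨c, hc, fun r => ?_⟩
  rcases le_or_gt r 0 with hr | hr
  · refine ⟨∅, fun x hx => absurd hx (hr.trans (hf0 x)).not_gt, ?_⟩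
    rw [Finset.card_empty, Nat.cast_zero]
    positivity
  · obtain ⟨hfin, hcard⟩ := hgrow r hr
    refine ⟨hfin.toFinset, fun x hx => hfin.mem_toFinset.2 hx, ?_⟩
    rwa [← ncard_eq_toFinset_card _ hfin]

section Escape

variable {X : Type*} [MetricSpace X] {δ : ℝ} {o : X} {l ε t : ℝ} {n : ℕ}

/-- At time `n`, the sequence `z` is `ε`-close to escaping at speed `l` towards the boundary point
`ξ`: it is at distance at most `(l + ε) n` from `o`, and its Gromov products with later positions
are at least `(l - 3 ε) n`. -/
structure EscapesAt (o : X) (l ε : ℝ) (n : ℕ) (z : ℕ → X) (ξ : Boundary X o) : Prop where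
  dist_le : dist o (z n) ≤ (l + ε) * n
  le_gp : ∀ m, n ≤ m → (l - 3 * ε) * n ≤ gp o (z n) (z m)
  tendsto : TendstoBoundary o z ξ

lemma EscapesAt.qB_lt (hδ : IsHyperbolicWith X δ) {z z' : ℕ → X} {ξ ξ' : Boundary X o}
    (h : EscapesAt o l ε n z ξ) (h' : EscapesAt o l ε n z' ξ') (hz : z n = z' n) :
    qB o ξ ξ' < Real.exp (-((l - 3 * ε) * n - (3 * δ + 1))) := by
  obtain ⟨_, hgp, _, rfl⟩ := h
  obtain ⟨_, hgp', _, rfl⟩ := h'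
  rw [hz] at hgp
  exact hδ.qB_lt_of_mem_shadow (eventually_atTop.2 ⟨n, hgp⟩) (eventually_atTop.2 ⟨n, hgp'⟩)

lemma EscapesAt.dist_le_of_qB_lt (hδ : IsHyperbolicWith X δ) {z z' : ℕ → X} {ξ ξ' : Boundary X o}
    (h : EscapesAt o l ε n z ξ) (h' : EscapesAt o l ε n z' ξ') (ht : t ≤ (l - 3 * ε) * n)
    (hξ : qB o ξ ξ' < Real.exp (-t)) : dist (z n) (z' n) ≤ 2 * ((l + ε) * n) - 2 * t + 4 * δ := by
  obtain ⟨hdist, hgp, _, rfl⟩ := h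
  obtain ⟨hdist', hgp', _, rfl⟩ := h'
  have := hδ.le_gp_of_mem_shadow (eventually_atTop.2 ⟨n, fun m hm => ht.trans (hgp m hm)⟩)
    (eventually_atTop.2 ⟨n, fun m hm => ht.trans (hgp' m hm)⟩) hξ
  rw [dist_eq_add_sub_two_mul_gp o]
  linarith

/-- The shadow of `x` under the event `E`: the ball of radius `r` about the boundary point of some
path of `E` which visits `x`. It is empty if there is no such path. -/
def shadow {Ω G : Type*} (E : Set Ω) (w : Ω → G) (b : Ω → Boundary X o) (r : ℝ) (x : G) :
    Set (Boundary X o) :=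
  if h : (E ∩ w ⁻¹' {x}).Nonempty then qball (qB o) (b h.some) r else ∅

section Shadow

variable {Ω G : Type*} {E : Set Ω} {w : Ω → G} {b : Ω → Boundary X o} {r : ℝ}

lemma measurableSet_shadow (x : G) : MeasurableSet (shadow E w b r x) := by
  rw [shadow]
  split_ifs
  exacts [measurableSet_qball _ _, MeasurableSet.empty]

lemma exists_qB_lt_of_mem_shadow {x : G} {ζ : Boundary X o} (hζ : ζ ∈ shadow E w b r x) :
    ∃ ω ∈ E, w ω = x ∧ ∀ ζ' ∈ shadow E w b r x, qB o (b ω) ζ' < r := by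
  by_cases h : (E ∩ w ⁻¹' {x}).Nonempty
  · refine ⟨h.some, h.some_mem.1, h.some_mem.2, fun ζ' hζ' => ?_⟩
    rwa [shadow, dif_pos h] at hζ'
  · rw [shadow, dif_neg h] at hζ
    exact hζ.elim

lemma mem_shadow (hE : ∀ ω ∈ E, ∀ ω' ∈ E, w ω = w ω' → qB o (b ω) (b ω') < r) {ω : Ω}
    (hω : ω ∈ E) : b ω ∈ shadow E w b r (w ω) := by
  have h : (E ∩ w ⁻¹' {w ω}).Nonempty := ⟨ω, hω, rfl⟩
  rw [shadow, dif_pos h]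
  exact hE _ h.some_mem.1 ω hω h.some_mem.2

end Shadow

section Orbit

variable {G : Type*} [Group G] [MulAction G X]

/-- The sets `Q x` behave like the shadows, seen from `o`, of the orbit points `x • o` visited at
time `n` by a walk of drift `l`. -/
structure IsOrbitShadow (o : X) (δ l ε : ℝ) (n : ℕ) (Q : G → Set (Boundary X o)) : Prop where
  dist_le : ∀ x, ∀ ζ ∈ Q x, dist o (x • o) ≤ (l + ε) * n
  qB_lt : ∀ x, ∀ ζ ∈ Q x, ∀ ζ' ∈ Q x, qB o ζ ζ' < Real.exp (-((l - 3 * ε) * n - (8 * δ + 3)))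
  dist_le_of_qB_lt : ∀ x y, ∀ ζ ∈ Q x, ∀ ζ' ∈ Q y, ∀ ξ t, t ≤ (l - 3 * ε) * n - (3 * δ + 1) →
    qB o ξ ζ < Real.exp (-t) → qB o ξ ζ' < Real.exp (-t) →
    dist (x • o) (y • o) ≤ 2 * ((l + ε) * n) - 2 * t + (24 * δ + 8)

lemma isOrbitShadow_shadow (hδ : IsHyperbolicWith X δ) {E : Set (ℕ → G)}
    {b : (ℕ → G) → Boundary X o}
    (hE : ∀ ω ∈ E, EscapesAt o l ε n (fun m => walk ω m • o) (b ω)) :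
    IsOrbitShadow o δ l ε n
      (shadow E (fun ω => walk ω n) b (Real.exp (-((l - 3 * ε) * n - (3 * δ + 1))))) where
  dist_le x ζ hζ := by
    obtain ⟨ω, hω, rfl, -⟩ := exists_qB_lt_of_mem_shadow hζ
    exact (hE ω hω).dist_le
  qB_lt x ζ hζ ζ' hζ' := by
    obtain ⟨ω, -, -, hlt⟩ := exists_qB_lt_of_mem_shadow hζ
    convert hδ.qB_lt_of_left (hlt ζ hζ) (hlt ζ' hζ') using 3
    ring
  dist_le_of_qB_lt x y ζ hζ ζ' hζ' ξ t ht hξζ hξζ' := by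
    have hδ0 := hδ.nonneg o
    have near {x : G} {ζ : Boundary X o}
        (hζ : ζ ∈ shadow E (fun ω => walk ω n) b (Real.exp (-((l - 3 * ε) * n - (3 * δ + 1)))) x)
        (hξζ : qB o ξ ζ < Real.exp (-t)) :
        ∃ ω ∈ E, walk ω n = x ∧ qB o (b ω) ξ < Real.exp (-(t - (5 * δ + 2))) := by
      obtain ⟨ω, hω, hx, hlt⟩ := exists_qB_lt_of_mem_shadow hζ
      exact ⟨ω, hω, hx, hδ.qB_lt_of_right
        ((hlt ζ hζ).trans_le (Real.exp_le_exp.2 (neg_le_neg ht))) hξζ⟩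
    obtain ⟨ω, hω, rfl, hlt⟩ := near hζ hξζ
    obtain ⟨ω', hω', rfl, hlt'⟩ := near hζ' hξζ'
    have := (hE ω hω).dist_le_of_qB_lt hδ (hE ω' hω') (by linarith) (hδ.qB_lt_of_right hlt hlt')
    linarith

variable [IsIsometricSMul G X] [Countable G] [MeasurableSpace G] [DiscreteMeasurableSpace G]
  {p : G → ℝ≥0∞} {P : Measure (ℕ → G)} {b : (ℕ → G) → Boundary X o}

lemma ae_eventually_escapesAt (hδ : IsHyperbolicWith X δ) (hP : IsRWMeasure p P)
    (hmom : FiniteFirstMoment p fun g => dist o (g • o))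
    (hl : HasDrift p (fun g => dist o (g • o)) l)
    (hlim : ∀ᵐ ω ∂P, TendstoBoundary o (fun n => walk ω n • o) (b ω)) (hε : 0 < ε) :
    ∀ᵐ ω ∂P, ∀ᶠ n in atTop, EscapesAt o l ε n (fun m => walk ω m • o) (b ω) := by
  have hlen := isLengthFunction_dist_smul (G := G) o
  filter_upwards [hlim, hlen.ae_eventually_walk_le_mul hP hmom hl (lt_add_of_pos_right l hε),
    hlen.ae_eventually_mul_le_walk hP hmom hl (sub_lt_self l hε),
    hP.ae_eventually_increment_le hlen.nonneg hmom hε] with ω hω hupper hlower hincr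
  have hstep : ∀ᶠ n : ℕ in atTop, dist (walk ω n • o) (walk ω (n + 1) • o) ≤ ε * n :=
    hincr.mono fun n hn => by rwa [walk_succ, mul_smul, dist_smul]
  filter_upwards [hupper, eventually_le_gp_of_linear_escape hδ o _ hε hlower hstep]
    with n hdist hgp
  exact ⟨hdist, hgp, hω⟩

lemma exists_measurableSet_escapesAt (hδ : IsHyperbolicWith X δ) (hP : IsRWMeasure p P)
    (hmom : FiniteFirstMoment p fun g => dist o (g • o))
    (hl : HasDrift p (fun g => dist o (g • o)) l)
    (hlim : ∀ᵐ ω ∂P, TendstoBoundary o (fun n => walk ω n • o) (b ω)) (hε : 0 < ε) :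
    ∃ E : ℕ → Set (ℕ → G), (∀ n, MeasurableSet (E n)) ∧ (∀ᵐ ω ∂P, ∀ᶠ n in atTop, ω ∈ E n) ∧
      ∀ n, ∀ ω ∈ E n, EscapesAt o l ε n (fun m => walk ω m • o) (b ω) := by
  obtain ⟨T, hT, hTm, hTlim⟩ := hlim.exists_measurable_mem
  refine ⟨fun n => T ∩ (fun ω => walk ω n) ⁻¹' {x | dist o (x • o) ≤ (l + ε) * n} ∩
    ⋂ m ∈ Ici n, (fun ω => (walk ω n, walk ω m)) ⁻¹'
      {q : G × G | (l - 3 * ε) * n ≤ gp o (q.1 • o) (q.2 • o)}, fun n => ?_, ?_, ?_⟩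
  · exact (hTm.inter (measurable_walk n .of_discrete)).inter <|
      MeasurableSet.biInter (to_countable _) fun m _ =>
        ((measurable_walk n).prodMk (measurable_walk m)) .of_discrete
  · filter_upwards [hT, ae_eventually_escapesAt hδ hP hmom hl hlim hε] with ω hω hev
    filter_upwards [hev] with n hn
    exact ⟨⟨hω, hn.dist_le⟩, mem_iInter₂.2 hn.le_gp⟩
  · rintro n ω ⟨⟨hω, hdist⟩, hgp⟩
    exact ⟨hdist, mem_iInter₂.1 hgp, hTlim ω hω⟩

lemma exists_isOrbitShadow (hδ : IsHyperbolicWith X δ) (hP : IsRWMeasure p P)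
    (hmom : FiniteFirstMoment p fun g => dist o (g • o))
    (hl : HasDrift p (fun g => dist o (g • o)) l)
    (hlim : ∀ᵐ ω ∂P, TendstoBoundary o (fun n => walk ω n • o) (b ω)) (hε : 0 < ε) :
    ∃ (E : ℕ → Set (ℕ → G)) (Q : ℕ → G → Set (Boundary X o)), (∀ n, MeasurableSet (E n)) ∧
      (∀ᵐ ω ∂P, ∀ᶠ n in atTop, ω ∈ E n) ∧ (∀ n x, MeasurableSet (Q n x)) ∧
      (∀ n, ∀ ω ∈ E n, b ω ∈ Q n (walk ω n)) ∧ ∀ n, IsOrbitShadow o δ l ε n (Q n) := by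
  obtain ⟨E, hEm, hEev, hE⟩ := exists_measurableSet_escapesAt hδ hP hmom hl hlim hε
  refine ⟨E, fun n => shadow (E n) (fun ω => walk ω n) b _, hEm, hEev,
    fun n => measurableSet_shadow, fun n ω hω => ?_, fun n => isOrbitShadow_shadow hδ (hE n)⟩
  exact mem_shadow (fun ω hω ω' hω' h => (hE n ω hω).qB_lt hδ (hE n ω' hω') (congrArg (· • o) h)) hω

end Orbit

end Escape

/-! ### Balls in the fibres of the harmonic measure -/

section Balls

variable {X Xs G : Type*} [MetricSpace X] [MetricSpace Xs] {δ : ℝ} {o : X} {os : Xs}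

lemma mem_qball_qbb_of_inter_nonempty (hδ : IsHyperbolicWith X δ) (hδs : IsHyperbolicWith Xs δ)
    {ξ ζ : Boundary X o × Boundary Xs os} {t : ℝ}
    (h : (qball (qbb o os) ξ (Real.exp (-t)) ∩ qball (qbb o os) ζ (Real.exp (-t))).Nonempty) :
    ξ ∈ qball (qbb o os) ζ (Real.exp (-(t - (5 * δ + 2)))) := by
  obtain ⟨χ, hξ, hζ⟩ := h
  rw [qball_qbb] at hξ hζ ⊢
  exact ⟨hδ.qB_lt_of_right hζ.1 hξ.1, hδs.qB_lt_of_right hζ.2 hξ.2⟩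

variable [Group G] [MulAction G X] {l ls ε c : ℝ} {n : ℕ}
  {Q : G → Set (Boundary X o)} {Qs : G → Set (Boundary Xs os)}

lemma IsOrbitShadow.subset_qball_qbb (hQ : IsOrbitShadow o δ l ε n Q)
    (hn : 8 * δ + 3 ≤ 2 * ε * n) {x : G} {ξ : Boundary X o × Boundary Xs os} {η : Boundary Xs os}
    (hξ : ξ ∈ Q x ×ˢ Qs x ∩ Prod.snd ⁻¹' {η}) :
    Q x ×ˢ Qs x ∩ Prod.snd ⁻¹' {η} ⊆ qball (qbb o os) ξ (Real.exp (-((l - 5 * ε) * n))) := by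
  rintro ζ ⟨hζ, hζη⟩
  have hsnd : ζ.2 = ξ.2 := (hζη : ζ.2 = η).trans (hξ.2 : ξ.2 = η).symm
  rw [qball_qbb]
  constructor
  · exact (hQ.qB_lt x _ hξ.1.1 _ hζ.1).trans_le (Real.exp_le_exp.2 (by linarith))
  · rw [hsnd]
    exact (qB_self ξ.2).trans_lt (Real.exp_pos _)

variable [MulAction G Xs]

lemma IsOrbitShadow.dist_prod_le (hQ : IsOrbitShadow o δ l ε n Q)
    (hQs : IsOrbitShadow os δ ls ε n Qs) {x : G} (hx : (Q x ×ˢ Qs x).Nonempty) :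
    dist (o, os) (x • (o, os)) ≤ (max l ls + ε) * n := by
  obtain ⟨ζ, hζ, hζs⟩ := hx
  refine max_le ((hQ.dist_le x _ hζ).trans ?_) ((hQs.dist_le x _ hζs).trans ?_) <;> gcongr
  exacts [le_max_left _ _, le_max_right _ _]

/- In the fibre over `η` all the points have the same second coordinate. Hence the positions on
`Xs` are as close as if the ball had radius `exp (-ls n)`, whatever its actual radius is. -/
lemma IsOrbitShadow.dist_prod_le_of_fiber (hδ0 : 0 ≤ δ) (hε : 0 ≤ ε)
    (hQ : IsOrbitShadow o δ l ε n Q) (hQs : IsOrbitShadow os δ ls ε n Qs) {x y : G}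
    {ξ : Boundary X o × Boundary Xs os} {η : Boundary Xs os}
    (hx : (Q x ×ˢ Qs x ∩ Prod.snd ⁻¹' {η} ∩
      qball (qbb o os) ξ (Real.exp (-((l - 5 * ε) * n - (5 * δ + 2))))).Nonempty)
    (hy : (Q y ×ˢ Qs y ∩ Prod.snd ⁻¹' {η} ∩
      qball (qbb o os) ξ (Real.exp (-((l - 5 * ε) * n - (5 * δ + 2))))).Nonempty) :
    dist (x • (o, os)) (y • (o, os)) ≤ 12 * ε * n + 34 * δ + 12 := by
  obtain ⟨ζ, ⟨⟨hζ, hζs⟩, rfl⟩, hζB⟩ := hx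
  obtain ⟨ζ', ⟨⟨hζ', hζs'⟩, (hsnd : ζ'.2 = ζ.2)⟩, hζB'⟩ := hy
  rw [qball_qbb] at hζB hζB'
  rw [hsnd] at hζs'
  have hεn : 0 ≤ ε * n := by positivity
  have hself (t : ℝ) : qB os ζ.2 ζ.2 < Real.exp (-t) := (qB_self ζ.2).trans_lt (Real.exp_pos _)
  have hdist := hQ.dist_le_of_qB_lt x y _ hζ _ hζ' _ _ (by linarith) hζB.1 hζB'.1
  have hdists := hQs.dist_le_of_qB_lt x y _ hζs _ hζs' _ _ le_rfl (hself _) (hself _)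
  exact max_le (hdist.trans (by linarith)) (hdists.trans (by linarith))

variable [IsIsometricSMul G X] [IsIsometricSMul G Xs]

lemma IsOrbitShadow.exists_finset_meeting (hδ0 : 0 ≤ δ) (hε : 0 ≤ ε)
    (hQ : IsOrbitShadow o δ l ε n Q) (hQs : IsOrbitShadow os δ ls ε n Qs) (hc : 0 ≤ c)
    (hgrow : ∀ r, ∃ t : Finset G,
      (∀ x, dist (o, os) (x • (o, os)) < r → x ∈ t) ∧ (t.card : ℝ) ≤ c * Real.exp (c * r))
    (ξ : Boundary X o × Boundary Xs os) (η : Boundary Xs os) :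
    ∃ t : Finset G, (∀ x, (Q x ×ˢ Qs x ∩ Prod.snd ⁻¹' {η} ∩
        qball (qbb o os) ξ (Real.exp (-((l - 5 * ε) * n - (5 * δ + 2))))).Nonempty → x ∈ t) ∧
      (t.card : ℝ) ≤ c * Real.exp (c * (34 * δ + 13)) * Real.exp (12 * c * ε * n) := by
  by_cases hex : ∃ x, (Q x ×ˢ Qs x ∩ Prod.snd ⁻¹' {η} ∩
      qball (qbb o os) ξ (Real.exp (-((l - 5 * ε) * n - (5 * δ + 2))))).Nonempty
  swap
  · refine ⟨∅, fun x hx => (hex ⟨x, hx⟩).elim, ?_⟩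
    rw [Finset.card_empty, Nat.cast_zero]
    positivity
  obtain ⟨x₀, hx₀⟩ := hex
  obtain ⟨t, ht, hcard⟩ := hgrow (12 * ε * n + 34 * δ + 13)
  refine ⟨t.image (x₀ * ·), fun x hx => ?_, ?_⟩
  · refine Finset.mem_image.2 ⟨x₀⁻¹ * x, ht _ ?_, mul_inv_cancel_left x₀ x⟩
    have := dist_prod_le_of_fiber hδ0 hε hQ hQs hx₀ hx
    rw [dist_smul_inv_mul]
    linarith
  · calc ((t.image (x₀ * ·)).card : ℝ) ≤ t.card := mod_cast Finset.card_image_le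
      _ ≤ c * Real.exp (c * (12 * ε * n + 34 * δ + 13)) := hcard
      _ = c * Real.exp (c * (34 * δ + 13)) * Real.exp (12 * c * ε * n) := by
        rw [mul_assoc c, ← Real.exp_add]
        ring_nf

lemma isShadowSystem_fiber (hδ : IsHyperbolicWith X δ) (hδs : IsHyperbolicWith Xs δ)
    (hε : 0 < ε) {Q : ℕ → G → Set (Boundary X o)} {Qs : ℕ → G → Set (Boundary Xs os)}
    (hQ : ∀ n, IsOrbitShadow o δ l ε n (Q n)) (hQs : ∀ n, IsOrbitShadow os δ ls ε n (Qs n))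
    (hc : 0 ≤ c) (hgrow : ∀ r, ∃ t : Finset G,
      (∀ x, dist (o, os) (x • (o, os)) < r → x ∈ t) ∧ (t.card : ℝ) ≤ c * Real.exp (c * r))
    (η : Boundary Xs os) :
    IsShadowSystem (fun n x => Q n x ×ˢ Qs n x ∩ Prod.snd ⁻¹' {η})
      (fun n ξ => qball (qbb o os) ξ (Real.exp (-((l - 5 * ε) * n))))
      (fun n ξ => qball (qbb o os) ξ (Real.exp (-((l - 5 * ε) * n - (5 * δ + 2)))))
      (c * Real.exp (c * (34 * δ + 13))) (12 * c * ε) (c * (max l ls + ε)) where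
  measurableSet_ball n ξ := by
    rw [qball_qbb]
    exact (measurableSet_qball _ _).prod (measurableSet_qball _ _)
  mem_ball n ξ := by
    rw [qball_qbb]
    exact ⟨(qB_self ξ.1).trans_lt (Real.exp_pos _), (qB_self ξ.2).trans_lt (Real.exp_pos _)⟩
  mem_enlargement n ξ ζ h := mem_qball_qbb_of_inter_nonempty hδ hδs h
  shadow_subset_ball := by
    have hlarge := (tendsto_natCast_atTop_atTop.const_mul_atTop
      (mul_pos two_pos hε)).eventually_ge_atTop (8 * δ + 3)
    exact hlarge.mono fun n hn x ξ hξ => (hQ n).subset_qball_qbb hn hξ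
  card_meeting := Eventually.of_forall fun n ξ =>
    (hQ n).exists_finset_meeting (hδ.nonneg o) hε.le (hQs n) hc hgrow ξ η
  card_nonempty := Eventually.of_forall fun n => by
    have hδ0 := hδ.nonneg o
    obtain ⟨t, ht, hcard⟩ := hgrow ((max l ls + ε) * n + 1)
    refine ⟨t, fun x hx => ht x ?_, hcard.trans ?_⟩
    · exact ((hQ n).dist_prod_le (hQs n) (hx.mono inter_subset_left)).trans_lt (lt_add_one _)
    · rw [mul_assoc c, ← Real.exp_add]
      gcongr
      nlinarith

end Balls

/-! ### The local estimate for the harmonic measure -/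

section LocalEstimate

variable {G : Type*} [Group G] [Countable G] [MeasurableSpace G] [DiscreteMeasurableSpace G]
  {p : G → ℝ≥0∞} {P : Measure (ℕ → G)} {h ε : ℝ}

/- Among the paths which end up in `E`, those visiting `x` at time `n` have mass
`π_n(x) (x ν)(E)`, where `π_n(x) ≈ exp (-h n)` and `d(x ν)/dν ≈ exp (h' n)`. -/
lemma IsBoundaryMap.exists_measurableSet_mass_le {Y : Type*} [MeasurableSpace Y] [MulAction G Y]
    [MeasurableConstSMul G Y] {b : (ℕ → G) → Y} (hb : IsBoundaryMap P b) (hP : IsRWMeasure p P)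
    (hfin : ∑' x, ENNReal.ofReal (Real.negMulLog (p x).toReal) ≠ ∞) (hh : HasEntropy p h)
    (hε : 0 < ε) :
    ∃ S : ℕ → Set (ℕ → G), (∀ n, MeasurableSet (S n)) ∧ (∀ᵐ ω ∂P, ∀ᶠ n in atTop, ω ∈ S n) ∧
      ∀ n x E, MeasurableSet E → P (S n ∩ (fun ω => walk ω n) ⁻¹' {x} ∩ b ⁻¹' E) ≤
        ENNReal.ofReal (Real.exp (-((h - ∑' x, (p x).toReal * translateEntropy (P.map b) x -
          2 * ε) * n))) * P.map b E := by
  set h' := ∑' x, (p x).toReal * translateEntropy (P.map b) x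
  refine ⟨fun n => (fun ω => walk ω n) ⁻¹' {x | piN p n x ≤ ENNReal.ofReal (Real.exp
      (-((h - ε) * n)))} ∩ (fun ω => (walk ω n, b ω)) ⁻¹'
        {q | translateDensity (P.map b) q.1 q.2 ≤ ENNReal.ofReal (Real.exp ((h' + ε) * n))},
    fun n => ?_, ?_, fun n x E hE => ?_⟩
  · exact (measurable_walk n .of_discrete).inter <| ((measurable_walk n).prodMk hb.measurable) <|
      measurableSet_le (measurable_from_prod_countable_right (measurable_translateDensity _))
        measurable_const
  · filter_upwards [hP.ae_eventually_piN_walk_le_exp hfin hh (sub_lt_self h hε),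
      hb.ae_eventually_translateDensity_walk_le hP hfin (lt_add_of_pos_right h' hε)]
      with ω hpi hdens using hpi.and hdens
  · refine (hb.measure_inter_walk_inter_le hP n x (fun ω hω => hω.1) (fun ω hω => hω.2)
      hE).trans_eq ?_
    rw [← ENNReal.ofReal_mul (Real.exp_nonneg _), ← Real.exp_add]
    ring_nf

lemma FiniteFirstMoment.mono {G : Type*} {p : G → ℝ≥0∞} {f g : G → ℝ}
    (hg : FiniteFirstMoment p g) (h : ∀ x, f x ≤ g x) : FiniteFirstMoment p f :=
  ne_top_of_le_ne_top hg <| ENNReal.tsum_le_tsum fun x =>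
    mul_le_mul_right (ENNReal.ofReal_le_ofReal (h x)) (p x)

variable {X Xs : Type*} [MetricSpace X] [MetricSpace Xs] [MulAction G X] [MulAction G Xs]
  [IsIsometricSMul G X] [IsIsometricSMul G Xs] {δ c l : ℝ} {o : X} {os : Xs}
  [MeasurableConstSMul G (Boundary Xs os)] {b : (ℕ → G) → Boundary X o × Boundary Xs os}
  {cond : Boundary Xs os → Measure (Boundary X o × Boundary Xs os)}

lemma ae_ae_eventually_measure_qball (hδ : IsHyperbolicWith X δ) (hδs : IsHyperbolicWith Xs δ)
    (hP : IsRWMeasure p P) (hmom : FiniteFirstMoment p fun g => dist (o, os) (g • (o, os)))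
    (hfin : ∑' x, ENNReal.ofReal (Real.negMulLog (p x).toReal) ≠ ∞) (hc : 0 ≤ c)
    (hgrow : ∀ r, ∃ t : Finset G,
      (∀ x, dist (o, os) (x • (o, os)) < r → x ∈ t) ∧ (t.card : ℝ) ≤ c * Real.exp (c * r))
    (hl : HasDrift p (fun g => dist o (g • o)) l) (hh : HasEntropy p h) (hb : Measurable b)
    (hlim : ∀ᵐ ω ∂P, TendstoBoundary o (fun n => walk ω n • o) (b ω).1)
    (hlims : ∀ᵐ ω ∂P, TendstoBoundary os (fun n => walk ω n • os) (b ω).2)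
    (hd : IsDisintegration (P.map b) Prod.snd (P.map fun ω => (b ω).2) cond) (hε : 0 < ε) :
    ∃ K M, ∀ᵐ η ∂P.map fun ω => (b ω).2, ∀ᵐ ξ ∂cond η, ∀ᶠ n : ℕ in atTop,
      cond η (qball (qbb o os) ξ (Real.exp (-((l - 5 * ε) * n)))) ≤
        ENNReal.ofReal (K * Real.exp (-((h - ∑' x, (p x).toReal *
          translateEntropy (P.map fun ω => (b ω).2) x - (3 + 12 * c) * ε) * n))) ∧
      ENNReal.ofReal (Real.exp (-(M * n))) ≤
        cond η (qball (qbb o os) ξ (Real.exp (-((l - 5 * ε) * n)))) := by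
  have := hP.1
  have hmom₁ : FiniteFirstMoment p fun g => dist o (g • o) := hmom.mono fun g => le_max_left _ _
  have hmom₂ : FiniteFirstMoment p fun g => dist os (g • os) := hmom.mono fun g => le_max_right _ _
  obtain ⟨ls, -, hls⟩ := (isLengthFunction_dist_smul os).exists_hasDrift hP hmom₂
  obtain ⟨E, Q, hEm, hE, hQm, hEQ, hQ⟩ := exists_isOrbitShadow hδ hP hmom₁ hl hlim hε
  obtain ⟨Es, Qs, hEsm, hEs, hQsm, hEQs, hQs⟩ := exists_isOrbitShadow hδs hP hmom₂ hls hlims hε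
  obtain ⟨S, hSm, hS, hmass⟩ := (hδs.isBoundaryMap_of_tendstoBoundary hP
    (measurable_snd.comp hb) hlims).exists_measurableSet_mass_le hP hfin hh hε
  have hlocal := hd.ae_ae_eventually_measure_ball (good := fun n => E n ∩ Es n ∩ S n) hb
    measurable_snd (fun n => ((hEm n).inter (hEsm n)).inter (hSm n))
    (by filter_upwards [hE, hEs, hS] with ω h₁ h₂ h₃ using (h₁.and h₂).and h₃) measurable_walk
    (fun n x => (hQm n x).prod (hQsm n x)) (fun n ω hω => ⟨hEQ n ω hω.1.1, hEQs n ω hω.1.2⟩)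
    (fun n x F hF => (measure_mono (inter_subset_inter_left _
      (inter_subset_inter_left _ inter_subset_right))).trans (hmass n x F hF))
    (isShadowSystem_fiber hδ hδs hε hQ hQs hc hgrow) hε
  have hexponent (h' : ℝ) : h - h' - (3 + 12 * c) * ε = h - h' - 2 * ε - 12 * c * ε - ε := by ring
  simp only [hexponent]
  exact ⟨_, _, hlocal⟩

end LocalEstimate

/-! ### Lower pointwise dimension -/

section PointwiseDimension

lemma liminf_log_div_log_nonneg {m : ℝ → ℝ} (hm : ∀ r, m r ∈ Icc 0 1) :
    0 ≤ liminf (fun r => Real.log (m r) / Real.log r) (𝓝[>] 0) := by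
  have hev : ∀ᶠ r in 𝓝[>] 0, 0 ≤ Real.log (m r) / Real.log r := by
    filter_upwards [Ioo_mem_nhdsGT zero_lt_one] with r hr
    exact div_nonneg_of_nonpos (Real.log_nonpos (hm r).1 (hm r).2)
      (Real.log_nonpos hr.1.le hr.2.le)
  -- the real `liminf` is the junk value `0` when the function tends to infinity
  rw [liminf_eq]
  by_cases hbdd : BddAbove {a | ∀ᶠ r in 𝓝[>] 0, a ≤ Real.log (m r) / Real.log r}
  · exact le_csSup hbdd hev
  · exact (Real.sSup_of_not_bddAbove hbdd).ge

variable {m : ℝ → ℝ} {lam K D M : ℝ}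

lemma eventually_le_log_div_log (hmono : Monotone m) (hlam : 0 < lam)
    (hpos : ∀ᶠ n : ℕ in atTop, 0 < m (Real.exp (-(lam * n))))
    (hup : ∀ᶠ n : ℕ in atTop, m (Real.exp (-(lam * n))) ≤ K * Real.exp (-(D * n))) :
    ∀ᶠ r in 𝓝[>] 0, D / lam + (|D| + Real.log K) / Real.log r ≤ Real.log (m r) / Real.log r := by
  have hfloor : Tendsto (fun r => ⌊-Real.log r / lam⌋₊) (𝓝[>] 0) atTop :=
    tendsto_nat_floor_atTop.comp
      ((tendsto_neg_atBot_atTop.comp Real.tendsto_log_nhdsGT_zero).atTop_div_const hlam)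
  filter_upwards [Ioo_mem_nhdsGT zero_lt_one, hfloor.eventually hup, hfloor.eventually hpos,
    hfloor.eventually ((tendsto_add_atTop_nat 1).eventually hpos)] with r hr hupr hposn hposr
  have hlog : Real.log r < 0 := Real.log_neg hr.1 hr.2
  set n := ⌊-Real.log r / lam⌋₊
  have hn : n ≤ -Real.log r / lam := Nat.floor_le (div_nonneg (neg_nonneg.2 hlog.le) hlam.le)
  have hn' : -Real.log r / lam < n + 1 := Nat.lt_floor_add_one _
  have hK : 0 < K := pos_of_mul_pos_left (hposn.trans_le hupr) (Real.exp_pos _).le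
  have hmr : m r ≤ K * Real.exp (-(D * n)) := by
    refine (hmono ?_).trans hupr
    rw [← Real.log_le_iff_le_exp hr.1]
    linarith [(le_div_iff₀' hlam).1 hn]
  have hmr0 : 0 < m r := by
    refine hposr.trans_le (hmono ?_)
    rw [← Real.le_log_iff_exp_le hr.1, Nat.cast_succ]
    linarith [(div_lt_iff₀' hlam).1 hn']
  have hlogm : Real.log (m r) ≤ Real.log K - D * n := by
    have := Real.log_le_log hmr0 hmr
    rwa [Real.log_mul hK.ne' (Real.exp_ne_zero _), Real.log_exp] at this
  have hround : D * (-Real.log r / lam - n) ≤ |D| :=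
    (mul_le_mul_of_nonneg_right (le_abs_self D) (sub_nonneg.2 hn)).trans
      (mul_le_of_le_one_right (abs_nonneg D) (by linarith))
  rw [le_div_iff_of_neg hlog, add_mul, div_mul_cancel₀ _ hlog.ne]
  linear_combination hlogm + hround

lemma isCoboundedUnder_log_div_log (hlam : 0 < lam)
    (hlo : ∀ᶠ n : ℕ in atTop, Real.exp (-(M * n)) ≤ m (Real.exp (-(lam * n)))) :
    IsCoboundedUnder (· ≥ ·) (𝓝[>] 0) fun r => Real.log (m r) / Real.log r := by
  have hseq : Tendsto (fun n : ℕ => Real.exp (-(lam * n))) atTop (𝓝[>] 0) :=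
    tendsto_nhdsWithin_iff.2 ⟨Real.tendsto_exp_neg_atTop_nhds_zero.comp
      (tendsto_natCast_atTop_atTop.const_mul_atTop hlam), .of_forall fun n => Real.exp_pos _⟩
  refine .of_frequently_le (a := M / lam) (hseq.frequently (Eventually.frequently ?_))
  filter_upwards [hlo, eventually_gt_atTop 0] with n hn hn0
  have hn0' : (0 : ℝ) < n := Nat.cast_pos.2 hn0
  have hlog := Real.log_le_log (Real.exp_pos _) hn
  rw [Real.log_exp] at hlog ⊢
  rw [div_le_iff_of_neg (by simpa using mul_pos hlam hn0')]
  refine le_of_eq_of_le ?_ hlog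
  field_simp

lemma le_mul_liminf_log_div_log (hmono : Monotone m) (hlam : 0 < lam)
    (hup : ∀ᶠ n : ℕ in atTop, m (Real.exp (-(lam * n))) ≤ K * Real.exp (-(D * n)))
    (hlo : ∀ᶠ n : ℕ in atTop, Real.exp (-(M * n)) ≤ m (Real.exp (-(lam * n)))) :
    D ≤ lam * liminf (fun r => Real.log (m r) / Real.log r) (𝓝[>] 0) := by
  have hlim : Tendsto (fun r => D / lam + (|D| + Real.log K) / Real.log r) (𝓝[>] 0)
      (𝓝 (D / lam)) := by
    simpa only [add_zero] using
      (Real.tendsto_log_nhdsGT_zero.const_div_atBot (|D| + Real.log K)).const_add (D / lam)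
  rw [← div_le_iff₀' hlam, ← hlim.liminf_eq]
  exact liminf_le_liminf (eventually_le_log_div_log hmono hlam
    (hlo.mono fun n hn => (Real.exp_pos _).trans_le hn) hup) hlim.isBoundedUnder_ge
    (isCoboundedUnder_log_div_log hlam hlo)

lemma nonpos_of_eventually_le_exp (hmono : Monotone m) (hlam : lam ≤ 0)
    (hup : ∀ᶠ n : ℕ in atTop, m (Real.exp (-(lam * n))) ≤ K * Real.exp (-(D * n)))
    (hlo : ∀ᶠ n : ℕ in atTop, Real.exp (-(M * n)) ≤ m (Real.exp (-(lam * n)))) : D ≤ 0 := by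
  by_contra! hD
  obtain ⟨N, hN⟩ := hlo.exists
  have hlim : Tendsto (fun n : ℕ => K * Real.exp (-(D * n))) atTop (𝓝 0) := by
    simpa only [mul_zero, Function.comp_apply] using (Real.tendsto_exp_neg_atTop_nhds_zero.comp
      (tendsto_natCast_atTop_atTop.const_mul_atTop hD)).const_mul K
  refine (Real.exp_pos (-(M * N))).not_ge (ge_of_tendsto hlim ?_)
  filter_upwards [hup, eventually_ge_atTop N] with n hn hNn
  refine hN.trans ((hmono (Real.exp_le_exp.2 (neg_le_neg ?_))).trans hn)
  exact mul_le_mul_of_nonpos_left (Nat.cast_le.2 hNn) hlam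

lemma le_max_mul_liminf_log_measure {A : Type*} [MeasurableSpace A] {μ : Measure A}
    [IsProbabilityMeasure μ] {B : ℝ → Set A} (hB : Monotone B)
    (h : ∀ᶠ n : ℕ in atTop,
      μ (B (Real.exp (-(lam * n)))) ≤ ENNReal.ofReal (K * Real.exp (-(D * n))) ∧
        ENNReal.ofReal (Real.exp (-(M * n))) ≤ μ (B (Real.exp (-(lam * n))))) :
    D ≤ max lam 0 * liminf (fun r => Real.log (μ (B r)).toReal / Real.log r) (𝓝[>] 0) := by
  have hmono : Monotone fun r => (μ (B r)).toReal := fun r s hrs =>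
    ENNReal.toReal_mono (measure_ne_top μ _) (measure_mono (hB hrs))
  have hlo : ∀ᶠ n : ℕ in atTop, Real.exp (-(M * n)) ≤ (μ (B (Real.exp (-(lam * n))))).toReal :=
    h.mono fun n hn => (ENNReal.ofReal_le_iff_le_toReal (measure_ne_top μ _)).1 hn.2
  have hup : ∀ᶠ n : ℕ in atTop,
      (μ (B (Real.exp (-(lam * n))))).toReal ≤ K * Real.exp (-(D * n)) := by
    filter_upwards [h] with n hn
    have hpos := (ENNReal.ofReal_pos.2 (Real.exp_pos _)).trans_le (hn.2.trans hn.1)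
    exact ENNReal.toReal_le_of_le_ofReal (ENNReal.ofReal_pos.1 hpos).le hn.1
  rcases lt_or_ge 0 lam with hlam | hlam
  · rw [max_eq_left hlam.le]
    exact le_mul_liminf_log_div_log hmono hlam hup hlo
  · rw [max_eq_right hlam, zero_mul]
    exact nonpos_of_eventually_le_exp hmono hlam hup hlo

lemma div_le_liminf_log_measure {A : Type*} [MeasurableSpace A] {μ : Measure A}
    [IsProbabilityMeasure μ] {B : ℝ → Set A} {a l : ℝ} (hl : 0 ≤ l)
    (h : a ≤ l * liminf (fun r => Real.log (μ (B r)).toReal / Real.log r) (𝓝[>] 0)) :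
    a / l ≤ liminf (fun r => Real.log (μ (B r)).toReal / Real.log r) (𝓝[>] 0) :=
  div_le_of_le_mul₀ hl
    (liminf_log_div_log_nonneg fun _ => ⟨ENNReal.toReal_nonneg, measureReal_le_one⟩)
    (h.trans_eq (mul_comm _ _))

end PointwiseDimension

/-! ### The dimension of the conditional measures -/

lemma HasDrift.nonneg {G : Type*} [Group G] {p : G → ℝ≥0∞} {f : G → ℝ} {l : ℝ}
    (hl : HasDrift p f l) (hf : ∀ x, 0 ≤ f x) : 0 ≤ l :=
  ge_of_tendsto' hl fun n =>
    div_nonneg (tsum_nonneg fun x => mul_nonneg ENNReal.toReal_nonneg (hf x)) n.cast_nonneg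

section Dimension

variable {X Xs G : Type*} [MetricSpace X] [MetricSpace Xs] [Group G] [Countable G]
  [MeasurableSpace G] [DiscreteMeasurableSpace G] [MulAction G X] [MulAction G Xs]
  [IsIsometricSMul G X] [IsIsometricSMul G Xs] {o : X} {os : Xs}
  [MeasurableConstSMul G (Boundary Xs os)] {p : G → ℝ≥0∞} {P : Measure (ℕ → G)}
  {ν : Measure (Boundary X o × Boundary Xs os)} {νs : Measure (Boundary Xs os)}
  {cond : Boundary Xs os → Measure (Boundary X o × Boundary Xs os)} {l h : ℝ}

lemma exists_forall_ae_ae_le_max_mul_liminf (hX : IsHyperbolic X) (hXs : IsHyperbolic Xs)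
    (hmom : FiniteFirstMoment p fun g : G => dist (o, os) (g • (o, os))) (hP : IsRWMeasure p P)
    (hgrow : FinExpGrowth fun g : G => dist (o, os) (g • (o, os)))
    (hν : IsJointHarmonic o os P (fun ω n => walk ω n • o) (fun ω n => walk ω n • os) ν)
    (hd : IsDisintegration ν Prod.snd νs cond) (hh : HasEntropy p h)
    (hl : HasDrift p (fun g : G => dist o (g • o)) l) :
    ∃ C, ∀ ε > 0, ∀ᵐ η ∂νs, ∀ᵐ ξ ∂cond η,
      h - diffEntropy os (marginalStar p fun g : G => IsometryEquiv.constSMul g) νs - C * ε ≤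
        max (l - 5 * ε) 0 * liminf (fun r : ℝ =>
          Real.log (cond η (qball (qbb o os) ξ r)).toReal / Real.log r) (𝓝[>] 0) := by
  obtain ⟨δ, -, hδ⟩ := hX
  obtain ⟨δs, -, hδs⟩ := hXs
  obtain ⟨b, hb, rfl, hlim⟩ := hν
  have hlims : ∀ᵐ ω ∂P, TendstoBoundary os (fun n => walk ω n • os) (b ω).2 :=
    hlim.mono fun ω ⟨_, h₂, hω⟩ => ⟨h₂, congrArg Prod.snd hω⟩
  obtain rfl : νs = P.map fun ω => (b ω).2 := hd.1.trans (Measure.map_map measurable_snd hb)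
  have hfin := hP.isProb.tsum_negMulLog_ne_top (fun g => dist_nonneg) hgrow hmom
  obtain ⟨c, hc, hcard⟩ := hgrow.exists_finset fun g => dist_nonneg
  have hbs : IsBoundaryMap P fun ω => (b ω).2 :=
    hδs.isBoundaryMap_of_tendstoBoundary hP (measurable_snd.comp hb) hlims
  rw [hbs.diffEntropy_eq_tsum_translateEntropy hP hfin]
  refine ⟨3 + 12 * c, fun ε hε => ?_⟩
  obtain ⟨K, M, hball⟩ := ae_ae_eventually_measure_qball (hδ.mono (le_max_left δ δs))
    (hδs.mono (le_max_right δ δs)) hP hmom hfin hc.le hcard hl hh hb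
    (hlim.mono fun ω ⟨h₁, _, hω⟩ => ⟨h₁, congrArg Prod.fst hω⟩) hlims hd hε
  filter_upwards [hball, hd.2.1] with η hη _
  filter_upwards [hη] with ξ hξ
  exact le_max_mul_liminf_log_measure (fun r s hrs ζ hζ => lt_of_lt_of_le hζ hrs) hξ

theorem statement11_general (hX : IsHyperbolic X) (hXs : IsHyperbolic Xs)
    (hmom : FiniteFirstMoment p fun g : G => dist (o, os) (g • (o, os))) (hP : IsRWMeasure p P)
    (hgrow : FinExpGrowth fun g : G => dist (o, os) (g • (o, os)))
    (hν : IsJointHarmonic o os P (fun ω n => walk ω n • o) (fun ω n => walk ω n • os) ν)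
    (hd : IsDisintegration ν Prod.snd νs cond) (hh : HasEntropy p h)
    (hl : HasDrift p (fun g : G => dist o (g • o)) l) :
    ∀ᵐ η ∂νs, ∀ᵐ ξ ∂cond η,
      h - diffEntropy os (marginalStar p fun g : G => IsometryEquiv.constSMul g) νs ≤
        l * liminf (fun r : ℝ =>
          Real.log (cond η (qball (qbb o os) ξ r)).toReal / Real.log r) (𝓝[>] 0) := by
  obtain ⟨C, hC⟩ := exists_forall_ae_ae_le_max_mul_liminf hX hXs hmom hP hgrow hν hd hh hl
  filter_upwards [ae_all_iff.2 fun n : ℕ => hC _ (Nat.one_div_pos_of_nat (n := n))] with η hη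
  filter_upwards [ae_all_iff.2 hη] with ξ hξ
  have hε : Tendsto (fun n : ℕ => 1 / ((n : ℝ) + 1)) atTop (𝓝 0) :=
    tendsto_one_div_add_atTop_nhds_zero_nat
  have hl0 : max (l - 5 * 0) 0 = l := by
    rw [mul_zero, sub_zero, max_eq_left (hl.nonneg fun g => dist_nonneg)]
  refine le_of_tendsto_of_tendsto' ?_ (hl0 ▸
    (((hε.const_mul 5).const_sub l).max tendsto_const_nhds).mul_const _) hξ
  simpa only [mul_zero, sub_zero] using (hε.const_mul C).const_sub (h - diffEntropy os _ νs)

end Dimension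

section ProductIsometries

variable {X Xs : Type*} [MetricSpace X] [MetricSpace Xs] (Γb : Subgroup ((X ≃ᵢ X) × (Xs ≃ᵢ Xs)))

/-- The action of a group of isometries of `X × X*` on `X` through its first component. It is not
an instance, as it would conflict with `sndAction` when `X = X*`. -/
abbrev fstAction : MulAction Γb X where
  smul γ := proj1 γ
  one_smul _ := rfl
  mul_smul _ _ _ := rfl

/-- The action of a group of isometries of `X × X*` on `X*` through its second component. -/
abbrev sndAction : MulAction Γb Xs where
  smul γ := proj2 γ
  one_smul _ := rfl
  mul_smul _ _ _ := rfl

end ProductIsometries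

/-- Lemma 3.4: the a.e. lower bound
`liminf_{r→0} log ν_π^η(B̄(ξ̄,r))/log r ≥ (h(π) - h(∂X*,μ*))/l(X,μ)` for the
conditional measures, under finite exponential growth. -/
theorem statement11
    (X Xs : Type*) [MetricSpace X] [MetricSpace Xs] [ProperSpace X] [ProperSpace Xs]
    (hX : IsHyperbolic X) (hXs : IsHyperbolic Xs)
    (hXg : IsRoughGeodesicSpace X) (hXsg : IsRoughGeodesicSpace Xs)
    (o : X) (os : Xs)
    (Γb : Subgroup ((X ≃ᵢ X) × (Xs ≃ᵢ Xs))) [Countable Γb]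
    [MeasurableSpace Γb] [DiscreteMeasurableSpace Γb]
    (p : Γb → ℝ≥0∞) (hp : IsProb p)
    (hmom : FiniteFirstMoment p fun γ : Γb => disp o os γ)
    (hμne : IsNonElementarySubgroup
      (Subgroup.closure ((fun γ : Γb => proj1 γ) '' {γ : Γb | p γ ≠ 0})))
    (hμsne : IsNonElementarySubgroup
      (Subgroup.closure ((fun γ : Γb => proj2 γ) '' {γ : Γb | p γ ≠ 0})))
    (P : Measure (ℕ → Γb)) (hP : IsRWMeasure p P)
    (hXb : HasBoundedGrowthAtSomeScale X) (hXsb : HasBoundedGrowthAtSomeScale Xs)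
    (hgrow : FinExpGrowth fun γ : Γb => disp o os γ)
    (ν : Measure (Boundary X o × Boundary Xs os))
    (hν : IsJointHarmonic o os P (fun ω n => proj1 (walk ω n) o)
      (fun ω n => proj2 (walk ω n) os) ν)
    (νs : Measure (Boundary Xs os))
    (condν : Boundary Xs os → Measure (Boundary X o × Boundary Xs os))
    (hdis : IsDisintegration ν Prod.snd νs condν)
    (hπ l : ℝ) (hhπ : HasEntropy p hπ)
    (hl : HasDrift p (fun γ : Γb => dist o (proj1 γ o)) l)
    (hbm : ∀ g : Xs ≃ᵢ Xs, Measurable (bAct os g))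
    (hst : ℝ)
    (hhst : hst = diffEntropy os (marginalStar p fun γ : Γb => proj2 γ) νs)
 :
    ∀ᵐ η ∂νs, ∀ᵐ ξ ∂(condν η),
      (hπ - hst) / l ≤
        Filter.liminf (fun r : ℝ =>
            Real.log ((condν η) (qball (qbb o os) ξ r)).toReal / Real.log r)
          (nhdsWithin 0 (Set.Ioi 0)) := by
  let := fstAction Γb
  let := sndAction Γb
  have : IsIsometricSMul Γb X := ⟨fun γ => (proj1 γ).isometry⟩
  have : IsIsometricSMul Γb Xs := ⟨fun γ => (proj2 γ).isometry⟩
  have : MeasurableConstSMul Γb (Boundary Xs os) := ⟨fun γ => hbm (proj2 γ)⟩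
  subst hhst
  filter_upwards [statement11_general hX hXs hmom hP hgrow hν hdis hhπ hl, hdis.2.1] with η hη _
  filter_upwards [hη] with ξ hξ
  exact div_le_liminf_log_measure (hl.nonneg fun γ => dist_nonneg) hξ

end HMDim
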